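/- arXiv:1311.3725 — 7 statements merged into one kernel-verified Lean document; each statement's English description precedes it below -/
import Mathlib

section
/- Let S : ℝ² → ℝ be real analytic and set P := ∂_x∂_y(∂_x−∂_y)S. Assume P is not identically zero near the origin, and let n ∈ ℕ be the order of vanishing of P at the origin, i.e. all partial derivatives of P of total order < n vanish at (0,0) while some partial derivative of total order n does not vanish at (0,0). Let a : ℝ² → ℂ be smooth, compactly supported, with a(0,0) ≠ 0. Then there exist a constant C' > 0 and λ₀ ≥ 1 such that for every λ ≥ λ₀ there exist nonzero functions f₁, f₂, f₃ ∈ L²(ℝ) with |Λ_S(f₁,f₂,f₃)| ≥ C' λ^{−1/(2(n+3))} ‖f₁‖_{L²} ‖f₂‖_{L²} ‖f₃‖_{L²}. -/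
open MeasureTheory

noncomputable section

/-- Partial derivative in the first variable. -/
def pdx (f : ℝ × ℝ → ℝ) : ℝ × ℝ → ℝ := fun p => deriv (fun t => f (t, p.2)) p.1

/-- Partial derivative in the second variable. -/
def pdy (f : ℝ × ℝ → ℝ) : ℝ × ℝ → ℝ := fun p => deriv (fun t => f (p.1, t)) p.2

/-- The differential operator `DS = ∂ₓ∂_y(∂ₓ − ∂_y)S = S_xxy − S_xyy`. -/
def DOp (S : ℝ × ℝ → ℝ) : ℝ × ℝ → ℝ := pdx (pdy (fun p => pdx S p - pdy S p))

/-!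
The operator `∂ₓ∂_y(∂ₓ − ∂_y)` annihilates exactly the phases `g₁(x) + g₂(y) + g₃(x + y)`. Subtract
from `S` the one for which the remainder `R` vanishes on `x = 0` and `(∂ₓ − ∂_y)R` vanishes on both
coordinate axes. Since `DOp R = DOp S` is `O(|p|ⁿ)`, integrating along the directions `(1, 0)`,
`(0, 1)` and `(1, -1)` in turn, each time starting from a line on which the function vanishes, gives
`R = O(|p|ⁿ⁺³)`.

On the square `|x|, |y| ≤ δ` with `δ` a small multiple of `lam ^ (-1 / (n + 3))` the phase `lam R`
is therefore at most `1 / 4`. Testing the form on the indicators of `[-δ, δ]`, `[-δ, δ]` and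
`[-2δ, 2δ]`, modulated so as to cancel `g₁`, `g₂` and `g₃`, leaves an integral of size `δ²`, while
the product of the `L²` norms is of size `δ ^ (3 / 2)`; their quotient is `√δ`.
-/

open Filter Asymptotics Topology Metric
open scoped ContDiff

section LineIntegration

variable {E F : Type*} [NormedAddCommGroup E] [NormedSpace ℝ E]
  [NormedAddCommGroup F] [NormedSpace ℝ F]

lemma hasLineDerivAt_add_smul_iff {f : E → F} {f' : F} {p v : E} {t : ℝ} :
    HasLineDerivAt ℝ f f' (p + t • v) v ↔ HasDerivAt (fun s : ℝ => f (p + s • v)) f' t := by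
  have shift : (fun s : ℝ => f (p + t • v + s • v)) = fun s => f (p + (t + s) • v) := by
    simp only [add_smul, add_assoc]
  rw [HasLineDerivAt, shift]
  refine ⟨fun h => ?_, fun h => HasDerivAt.comp_const_add t 0 (by rwa [add_zero])⟩
  simpa using HasDerivAt.comp_sub_const t t (f := fun s => f (p + (t + s) • v)) (by rwa [sub_self])

lemma norm_add_smul_le_of_abs_le_clm (ℓ : E →L[ℝ] ℝ) {p v : E} {t : ℝ} (ht : |t| ≤ |ℓ p|) :
    ‖p + t • v‖ ≤ (1 + ‖ℓ‖ * ‖v‖) * ‖p‖ :=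
  calc ‖p + t • v‖ ≤ ‖p‖ + |t| * ‖v‖ := by
        simpa only [norm_smul, Real.norm_eq_abs] using norm_add_le p (t • v)
    _ ≤ ‖p‖ + ‖ℓ‖ * ‖p‖ * ‖v‖ := by
        gcongr
        exact ht.trans (ℓ.le_opNorm p)
    _ = (1 + ‖ℓ‖ * ‖v‖) * ‖p‖ := by ring

variable {f f' : E → F} {v : E} {n : ℕ}

lemma norm_sub_sub_smul_le (ℓ : E →L[ℝ] ℝ) {p : E} {K : ℝ}
    (hf : ∀ t : ℝ, |t| ≤ |ℓ p| → HasLineDerivAt ℝ f (f' (p + t • v)) (p + t • v) v)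
    (hf' : ∀ t : ℝ, |t| ≤ |ℓ p| → ‖f' (p + t • v)‖ ≤ K) :
    ‖f p - f (p - ℓ p • v)‖ ≤ K * |ℓ p| := by
  have hmem : ∀ {t : ℝ}, t ∈ closedBall (0 : ℝ) |ℓ p| ↔ |t| ≤ |ℓ p| := by
    simp
  have hmv := (convex_closedBall (0 : ℝ) |ℓ p|).norm_image_sub_le_of_norm_hasDerivWithin_le
    (fun t ht => (hasLineDerivAt_add_smul_iff.1 (hf t (hmem.1 ht))).hasDerivWithinAt)
    (fun t ht => hf' t (hmem.1 ht)) (x := -ℓ p) (y := 0)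
    (hmem.2 (abs_neg _).le) (mem_closedBall_self (abs_nonneg _))
  simpa [sub_eq_add_neg] using hmv

lemma isBigO_sub_sub_smul_of_hasLineDerivAt (ℓ : E →L[ℝ] ℝ)
    (hf : ∀ᶠ p in 𝓝 0, HasLineDerivAt ℝ f (f' p) p v)
    (hf' : f' =O[𝓝 0] fun p => ‖p‖ ^ n) :
    (fun p => f p - f (p - ℓ p • v)) =O[𝓝 0] fun p => ‖p‖ ^ (n + 1) := by
  obtain ⟨K, hK, hbound⟩ := hf'.exists_pos
  obtain ⟨ε, hε, hball⟩ := eventually_nhds_iff_ball.1 (hf.and hbound.bound)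
  obtain ⟨M, hM, hnear⟩ : ∃ M > 0, ∀ p : E, ∀ t : ℝ, |t| ≤ |ℓ p| → ‖p + t • v‖ ≤ M * ‖p‖ :=
    ⟨1 + ‖ℓ‖ * ‖v‖, by positivity, fun p t => norm_add_smul_le_of_abs_le_clm ℓ⟩
  refine IsBigO.of_bound (K * M ^ n * ‖ℓ‖) ?_
  filter_upwards [ball_mem_nhds 0 (div_pos hε hM)] with p hp
  have hMp : M * ‖p‖ < ε := by
    rwa [mem_ball_zero_iff, lt_div_iff₀' hM] at hp
  have hmem : ∀ t : ℝ, |t| ≤ |ℓ p| → p + t • v ∈ ball (0 : E) ε := fun t ht =>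
    mem_ball_zero_iff.2 ((hnear p t ht).trans_lt hMp)
  have hf'_le : ∀ t : ℝ, |t| ≤ |ℓ p| → ‖f' (p + t • v)‖ ≤ K * (M * ‖p‖) ^ n := fun t ht => by
    refine (hball _ (hmem t ht)).2.trans ?_
    rw [norm_pow, norm_norm]
    gcongr
    exact hnear p t ht
  calc ‖f p - f (p - ℓ p • v)‖ ≤ K * (M * ‖p‖) ^ n * |ℓ p| :=
        norm_sub_sub_smul_le ℓ (fun t ht => (hball _ (hmem t ht)).1) hf'_le
    _ ≤ K * (M * ‖p‖) ^ n * (‖ℓ‖ * ‖p‖) := by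
        gcongr
        exact ℓ.le_opNorm p
    _ = K * M ^ n * ‖ℓ‖ * ‖‖p‖ ^ (n + 1)‖ := by
        rw [norm_pow, norm_norm]
        ring

lemma isBigO_norm_pow_succ_of_hasLineDerivAt (ℓ : E →L[ℝ] ℝ)
    (hf : ∀ᶠ p in 𝓝 0, HasLineDerivAt ℝ f (f' p) p v)
    (hf' : f' =O[𝓝 0] fun p => ‖p‖ ^ n)
    (hbase : (fun p => f (p - ℓ p • v)) =O[𝓝 0] fun p => ‖p‖ ^ (n + 1)) :
    f =O[𝓝 0] fun p => ‖p‖ ^ (n + 1) := by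
  simpa only [sub_add_cancel] using (isBigO_sub_sub_smul_of_hasLineDerivAt ℓ hf hf').add hbase

lemma isBigO_norm_pow_succ_of_hasLineDerivAt_of_eq_zero (ℓ : E →L[ℝ] ℝ)
    (hf : ∀ᶠ p in 𝓝 0, HasLineDerivAt ℝ f (f' p) p v)
    (hf' : f' =O[𝓝 0] fun p => ‖p‖ ^ n) (hbase : ∀ p, f (p - ℓ p • v) = 0) :
    f =O[𝓝 0] fun p => ‖p‖ ^ (n + 1) :=
  isBigO_norm_pow_succ_of_hasLineDerivAt ℓ hf hf' <| by
    simpa only [hbase] using isBigO_zero _ _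

end LineIntegration

section PartialDerivatives

/-- The antidiagonal derivative `(∂ₓ − ∂_y)F`, so that `DOp F = ∂ₓ∂_y(pdxSubPdy F)`. -/
def pdxSubPdy (F : ℝ × ℝ → ℝ) : ℝ × ℝ → ℝ := fun p => pdx F p - pdy F p

variable {F : ℝ × ℝ → ℝ} {p : ℝ × ℝ} {k : ℕ∞ω}

lemma hasDerivAt_pdx (hF : DifferentiableAt ℝ F p) :
    HasDerivAt (fun t => F (t, p.2)) (pdx F p) p.1 :=
  DifferentiableAt.hasDerivAt (f := fun t => F (t, p.2)) (by fun_prop)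

lemma hasDerivAt_pdy (hF : DifferentiableAt ℝ F p) :
    HasDerivAt (fun t => F (p.1, t)) (pdy F p) p.2 :=
  DifferentiableAt.hasDerivAt (f := fun t => F (p.1, t)) (by fun_prop)

lemma pdx_eq_fderiv (hF : DifferentiableAt ℝ F p) : pdx F p = fderiv ℝ F p (1, 0) :=
  (hF.hasFDerivAt.comp_hasDerivAt p.1
    ((hasDerivAt_id p.1).prodMk (hasDerivAt_const p.1 p.2))).deriv

lemma pdy_eq_fderiv (hF : DifferentiableAt ℝ F p) : pdy F p = fderiv ℝ F p (0, 1) :=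
  (hF.hasFDerivAt.comp_hasDerivAt p.2
    ((hasDerivAt_const p.2 p.1).prodMk (hasDerivAt_id p.2))).deriv

lemma pdxSubPdy_eq_fderiv (hF : DifferentiableAt ℝ F p) :
    pdxSubPdy F p = fderiv ℝ F p (1, -1) := by
  rw [pdxSubPdy, pdx_eq_fderiv hF, pdy_eq_fderiv hF, ← map_sub]
  simp

lemma hasLineDerivAt_pdx (hF : DifferentiableAt ℝ F p) :
    HasLineDerivAt ℝ F (pdx F p) p (1, 0) :=
  pdx_eq_fderiv hF ▸ hF.hasFDerivAt.hasLineDerivAt (1, 0)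

lemma hasLineDerivAt_pdy (hF : DifferentiableAt ℝ F p) :
    HasLineDerivAt ℝ F (pdy F p) p (0, 1) :=
  pdy_eq_fderiv hF ▸ hF.hasFDerivAt.hasLineDerivAt (0, 1)

lemma hasLineDerivAt_pdxSubPdy (hF : DifferentiableAt ℝ F p) :
    HasLineDerivAt ℝ F (pdxSubPdy F p) p (1, -1) :=
  pdxSubPdy_eq_fderiv hF ▸ hF.hasFDerivAt.hasLineDerivAt (1, -1)

lemma contDiff_pdx (hF : ContDiff ℝ (k + 1) F) : ContDiff ℝ k (pdx F) := by
  rw [show pdx F = _ from funext fun p => pdx_eq_fderiv (hF.differentiable (by simp) p)]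
  exact (hF.fderiv_right le_rfl).clm_apply contDiff_const

lemma contDiff_pdy (hF : ContDiff ℝ (k + 1) F) : ContDiff ℝ k (pdy F) := by
  rw [show pdy F = _ from funext fun p => pdy_eq_fderiv (hF.differentiable (by simp) p)]
  exact (hF.fderiv_right le_rfl).clm_apply contDiff_const

lemma contDiff_pdxSubPdy (hF : ContDiff ℝ (k + 1) F) : ContDiff ℝ k (pdxSubPdy F) :=
  (contDiff_pdx hF).sub (contDiff_pdy hF)

lemma contDiff_DOp (hF : ContDiff ℝ (k + 3) F) : ContDiff ℝ k (DOp F) := by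
  have hF' : ContDiff ℝ (k + 1 + 1 + 1) F := by
    rwa [add_assoc, add_assoc, one_add_one_eq_two, add_comm 1 2, two_add_one_eq_three]
  exact contDiff_pdx (contDiff_pdy (contDiff_pdxSubPdy hF'))

end PartialDerivatives

section VanishingOrder

/-- `F` vanishes to order at least `n` at the origin: all its partial derivatives of total order
less than `n` are zero there. -/
def VanishesToOrder (n : ℕ) (F : ℝ × ℝ → ℝ) : Prop :=
  ∀ i j : ℕ, i + j < n → (pdx^[i] (pdy^[j] F)) (0, 0) = 0

lemma isBigO_norm_pow_of_iterate_pdx_eq_zero {n : ℕ} {F : ℝ × ℝ → ℝ} (hF : ContDiff ℝ n F)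
    (hvan : ∀ i < n, (pdx^[i] F) (0, 0) = 0) :
    (fun p : ℝ × ℝ => F (p.1, 0)) =O[𝓝 0] fun p => ‖p‖ ^ n := by
  have hrestr : ContDiff ℝ n fun p : ℝ × ℝ => F (p.1, 0) := by fun_prop
  induction n generalizing F with
  | zero => simpa using hrestr.continuous.continuousAt.isBigO_one ℝ
  | succ n ih =>
    have hF' : ContDiff ℝ n (pdx F) := contDiff_pdx (by exact_mod_cast hF)
    have hpdx : (fun p : ℝ × ℝ => pdx F (p.1, 0)) =O[𝓝 0] fun p => ‖p‖ ^ n :=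
      ih hF' (fun i hi => hvan (i + 1) (by omega)) (by fun_prop)
    have hF0 : F (0, 0) = 0 := hvan 0 n.succ_pos
    exact isBigO_norm_pow_succ_of_hasLineDerivAt_of_eq_zero (.fst ℝ ℝ ℝ)
      (.of_forall fun p => hasLineDerivAt_pdx (hrestr.differentiable (by simp) p)) hpdx
      (by simp [hF0])

lemma VanishesToOrder.pdy {n : ℕ} {F : ℝ × ℝ → ℝ} (hvan : VanishesToOrder (n + 1) F) :
    VanishesToOrder n (pdy F) :=
  fun i j hij => hvan i (j + 1) (by omega)

lemma VanishesToOrder.isBigO_norm_pow {n : ℕ} {F : ℝ × ℝ → ℝ} (hvan : VanishesToOrder n F)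
    (hF : ContDiff ℝ n F) : F =O[𝓝 0] fun p => ‖p‖ ^ n := by
  induction n generalizing F with
  | zero => simpa using hF.continuous.continuousAt.isBigO_one ℝ
  | succ n ih =>
    refine isBigO_norm_pow_succ_of_hasLineDerivAt (.snd ℝ ℝ ℝ)
      (.of_forall fun p => hasLineDerivAt_pdy (hF.differentiable (by simp) p))
      (ih hvan.pdy (contDiff_pdy (by exact_mod_cast hF))) ?_
    have hproj : ∀ p : ℝ × ℝ, p - p.2 • ((0 : ℝ), (1 : ℝ)) = (p.1, 0) := by simp [Prod.ext_iff]
    simpa only [ContinuousLinearMap.coe_snd', hproj] using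
      isBigO_norm_pow_of_iterate_pdx_eq_zero hF fun i hi => hvan i 0 (by omega)

lemma isBigO_norm_pow_add_three_of_DOp {n : ℕ} {R : ℝ × ℝ → ℝ} (hR : ContDiff ℝ 3 R)
    (hR_fst : ∀ y, R (0, y) = 0) (hG_fst : ∀ y, pdxSubPdy R (0, y) = 0)
    (hG_snd : ∀ x, pdxSubPdy R (x, 0) = 0) (hD : DOp R =O[𝓝 0] fun p => ‖p‖ ^ n) :
    R =O[𝓝 0] fun p => ‖p‖ ^ (n + 3) := by
  have hG : ContDiff ℝ 2 (pdxSubPdy R) := contDiff_pdxSubPdy hR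
  have hGy : ContDiff ℝ 1 (pdy (pdxSubPdy R)) := contDiff_pdy hG
  have hGy_fst : ∀ y, pdy (pdxSubPdy R) (0, y) = 0 := by simp [pdy, hG_fst]
  have hGy_isBigO : pdy (pdxSubPdy R) =O[𝓝 0] fun p => ‖p‖ ^ (n + 1) :=
    isBigO_norm_pow_succ_of_hasLineDerivAt_of_eq_zero (.fst ℝ ℝ ℝ)
      (.of_forall fun p => hasLineDerivAt_pdx (hGy.differentiable (by simp) p)) hD
      (by rintro ⟨x, y⟩; simp [hGy_fst])
  have hG_isBigO : pdxSubPdy R =O[𝓝 0] fun p => ‖p‖ ^ (n + 2) :=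
    isBigO_norm_pow_succ_of_hasLineDerivAt_of_eq_zero (.snd ℝ ℝ ℝ)
      (.of_forall fun p => hasLineDerivAt_pdy (hG.differentiable (by simp) p)) hGy_isBigO
      (by rintro ⟨x, y⟩; simp [hG_snd])
  exact isBigO_norm_pow_succ_of_hasLineDerivAt_of_eq_zero (.fst ℝ ℝ ℝ)
    (.of_forall fun p => hasLineDerivAt_pdxSubPdy (hR.differentiable (by simp) p)) hG_isBigO
    (by rintro ⟨x, y⟩; simp [hR_fst])

end VanishingOrder

section DegeneratePhases

/-- The phases `g₁(x) + g₂(y) + g₃(x + y)`, which the trilinear form does not see because they can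
be absorbed into the three functions it is evaluated on. -/
def degeneratePhase (g₁ g₂ g₃ : ℝ → ℝ) : ℝ × ℝ → ℝ :=
  fun p => g₁ p.1 + g₂ p.2 + g₃ (p.1 + p.2)

variable {S : ℝ × ℝ → ℝ} {g₁ g₂ g₃ : ℝ → ℝ} {k : ℕ∞ω}

lemma contDiff_degeneratePhase (h₁ : ContDiff ℝ k g₁) (h₂ : ContDiff ℝ k g₂)
    (h₃ : ContDiff ℝ k g₃) : ContDiff ℝ k (degeneratePhase g₁ g₂ g₃) := by
  unfold degeneratePhase
  fun_prop

lemma pdxSubPdy_sub_degeneratePhase (hS : Differentiable ℝ S) (h₁ : Differentiable ℝ g₁)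
    (h₂ : Differentiable ℝ g₂) (h₃ : Differentiable ℝ g₃) :
    pdxSubPdy (S - degeneratePhase g₁ g₂ g₃) =
      fun p => pdxSubPdy S p - deriv g₁ p.1 + deriv g₂ p.2 := by
  funext p
  have hx : pdx (S - degeneratePhase g₁ g₂ g₃) p =
      pdx S p - (deriv g₁ p.1 + deriv g₃ (p.1 + p.2)) :=
    ((hasDerivAt_pdx (hS p)).sub (((h₁ p.1).hasDerivAt.add_const (g₂ p.2)).add
      ((h₃ (p.1 + p.2)).hasDerivAt.comp_add_const p.1 p.2))).deriv
  have hy : pdy (S - degeneratePhase g₁ g₂ g₃) p =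
      pdy S p - (deriv g₂ p.2 + deriv g₃ (p.1 + p.2)) :=
    ((hasDerivAt_pdy (hS p)).sub (((h₂ p.2).hasDerivAt.const_add (g₁ p.1)).add
      ((h₃ (p.1 + p.2)).hasDerivAt.comp_const_add p.1 p.2))).deriv
  rw [pdxSubPdy, pdxSubPdy, hx, hy]
  ring

lemma DOp_sub_degeneratePhase (hS : ContDiff ℝ 2 S) (h₁ : Differentiable ℝ g₁)
    (h₂ : ContDiff ℝ 2 g₂) (h₃ : Differentiable ℝ g₃) :
    DOp (S - degeneratePhase g₁ g₂ g₃) = DOp S := by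
  have hG : Differentiable ℝ (pdxSubPdy S) :=
    (contDiff_pdxSubPdy (k := 1) hS).differentiable (by simp)
  have h₂' : Differentiable ℝ (deriv g₂) := (ContDiff.deriv' (n := 1) h₂).differentiable (by simp)
  have hGy : pdy (fun p => pdxSubPdy S p - deriv g₁ p.1 + deriv g₂ p.2) =
      fun p => pdy (pdxSubPdy S) p + deriv (deriv g₂) p.2 := by
    funext p
    exact (((hasDerivAt_pdy (hG p)).sub_const (deriv g₁ p.1)).add (h₂' p.2).hasDerivAt).deriv
  change pdx (pdy (pdxSubPdy _)) = pdx (pdy (pdxSubPdy S))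
  rw [pdxSubPdy_sub_degeneratePhase (hS.differentiable (by simp)) h₁
    (h₂.differentiable (by simp)) h₃, hGy]
  funext p
  exact deriv_add_const (deriv (deriv g₂) p.2)

lemma exists_contDiff_deriv_eq {h : ℝ → ℝ} (hh : ContDiff ℝ k h) (hk : k ≠ ω) :
    ∃ H : ℝ → ℝ, ContDiff ℝ (k + 1) H ∧ deriv H = h := by
  have hderiv : deriv (fun u => ∫ t in (0 : ℝ)..u, h t) = h :=
    funext fun u => hh.continuous.deriv_integral h 0 u
  refine ⟨_, contDiff_succ_iff_deriv.2 ⟨fun u => ?_, by simp [hk], hderiv.symm ▸ hh⟩, hderiv⟩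
  exact (hh.continuous.integral_hasStrictDerivAt 0 u).hasDerivAt.differentiableAt

lemma exists_degeneratePhase_vanishing (hS : ContDiff ℝ (k + 1) S) (hk : k ≠ ω) :
    ∃ g₁ g₂ g₃ : ℝ → ℝ, ContDiff ℝ (k + 1) g₁ ∧ ContDiff ℝ (k + 1) g₂ ∧ ContDiff ℝ (k + 1) g₃ ∧
      (∀ y, (S - degeneratePhase g₁ g₂ g₃) (0, y) = 0) ∧
      (∀ y, pdxSubPdy (S - degeneratePhase g₁ g₂ g₃) (0, y) = 0) ∧
      ∀ x, pdxSubPdy (S - degeneratePhase g₁ g₂ g₃) (x, 0) = 0 := by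
  have hG : ContDiff ℝ k (pdxSubPdy S) := contDiff_pdxSubPdy hS
  obtain ⟨g₁, h₁, hg₁⟩ := exists_contDiff_deriv_eq
    (h := fun x => pdxSubPdy S (x, 0) - pdxSubPdy S (0, 0)) (by fun_prop) hk
  obtain ⟨g₂, h₂, hg₂⟩ := exists_contDiff_deriv_eq
    (h := fun y => -pdxSubPdy S (0, y)) (by fun_prop) hk
  have h₃ : ContDiff ℝ (k + 1) fun y => S (0, y) - g₁ 0 - g₂ y := by fun_prop
  refine ⟨g₁, g₂, fun y => S (0, y) - g₁ 0 - g₂ y, h₁, h₂, h₃, fun y => ?_, ?_⟩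
  · simp [degeneratePhase]
  · rw [pdxSubPdy_sub_degeneratePhase (hS.differentiable (by simp)) (h₁.differentiable (by simp))
      (h₂.differentiable (by simp)) (h₃.differentiable (by simp)), hg₁, hg₂]
    exact ⟨fun y => by simp, fun x => by simp⟩

theorem exists_degeneratePhase_isBigO {n : ℕ} (hS : ContDiff ℝ (n + 3) S)
    (hvan : VanishesToOrder n (DOp S)) :
    ∃ g₁ g₂ g₃ : ℝ → ℝ, Continuous g₁ ∧ Continuous g₂ ∧ Continuous g₃ ∧
      (S - degeneratePhase g₁ g₂ g₃) =O[𝓝 0] fun p => ‖p‖ ^ (n + 3) := by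
  have hS3 : ContDiff ℝ 3 S := hS.of_le le_add_self
  obtain ⟨g₁, g₂, g₃, h₁, h₂, h₃, hR_fst, hG_fst, hG_snd⟩ :=
    exists_degeneratePhase_vanishing (k := 2) hS3 (by simp)
  refine ⟨g₁, g₂, g₃, h₁.continuous, h₂.continuous, h₃.continuous,
    isBigO_norm_pow_add_three_of_DOp (hS3.sub (contDiff_degeneratePhase h₁ h₂ h₃))
      hR_fst hG_fst hG_snd ?_⟩
  rw [DOp_sub_degeneratePhase (hS3.of_le (by norm_num)) (h₁.differentiable (by simp))
    (h₂.of_le (by simp)) (h₃.differentiable (by simp))]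
  exact hvan.isBigO_norm_pow (contDiff_DOp hS)

end DegeneratePhases

section TrilinearForm

/-- The trilinear oscillatory form `Λ_S(f₁, f₂, f₃)` with frequency `lam` and amplitude `a`. -/
def trilinearForm (lam : ℝ) (S : ℝ × ℝ → ℝ) (a : ℝ × ℝ → ℂ) (f₁ f₂ f₃ : ℝ → ℂ) : ℂ :=
  ∫ p : ℝ × ℝ, Complex.exp (Complex.I * lam * S p) * f₁ p.1 * f₂ p.2 * f₃ (p.1 + p.2) * a p

/-- The indicator function of `s` modulated by `e^{-i lam g}`; the sign is chosen so that it cancels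
a summand `g` of the phase. -/
def modulatedIndicator (lam : ℝ) (g : ℝ → ℝ) (s : Set ℝ) : ℝ → ℂ :=
  s.indicator fun x => Complex.exp (-(Complex.I * lam * g x))

variable {lam : ℝ} {S : ℝ × ℝ → ℝ} {a : ℝ × ℝ → ℂ} {g g₁ g₂ g₃ : ℝ → ℝ}

lemma trilinearForm_congr_ae {f₁ f₂ f₃ f₁' f₂' f₃' : ℝ → ℂ} (h₁ : f₁ =ᵐ[volume] f₁')
    (h₂ : f₂ =ᵐ[volume] f₂') (h₃ : f₃ =ᵐ[volume] f₃') :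
    trilinearForm lam S a f₁ f₂ f₃ = trilinearForm lam S a f₁' f₂' f₃' := by
  have hfst : Measure.QuasiMeasurePreserving (Prod.fst : ℝ × ℝ → ℝ) volume volume :=
    Measure.quasiMeasurePreserving_fst
  have hsnd : Measure.QuasiMeasurePreserving (Prod.snd : ℝ × ℝ → ℝ) volume volume :=
    Measure.quasiMeasurePreserving_snd
  have hadd : Measure.QuasiMeasurePreserving (fun p : ℝ × ℝ => p.1 + p.2) volume volume :=
    hsnd.comp (measurePreserving_prod_add (volume : Measure ℝ) volume).quasiMeasurePreserving
  refine integral_congr_ae ?_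
  filter_upwards [hfst.ae h₁, hsnd.ae h₂, hadd.ae h₃] with p hp₁ hp₂ hp₃
  rw [hp₁, hp₂, hp₃]

lemma trilinearForm_modulatedIndicator {s₁ s₂ s₃ : Set ℝ} (hs₁ : MeasurableSet s₁)
    (hs₂ : MeasurableSet s₂) (hs₃ : ∀ x ∈ s₁, ∀ y ∈ s₂, x + y ∈ s₃) :
    trilinearForm lam S a (modulatedIndicator lam g₁ s₁) (modulatedIndicator lam g₂ s₂)
        (modulatedIndicator lam g₃ s₃) =
      ∫ p in s₁ ×ˢ s₂,
        Complex.exp (Complex.I * (lam * (S - degeneratePhase g₁ g₂ g₃) p : ℝ)) * a p := by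
  rw [trilinearForm, ← integral_indicator (hs₁.prod hs₂)]
  congr 1 with ⟨x, y⟩
  by_cases hx : x ∈ s₁
  swap
  · simp [modulatedIndicator, hx]
  by_cases hy : y ∈ s₂
  swap
  · simp [modulatedIndicator, hy]
  have hxy : (x, y) ∈ s₁ ×ˢ s₂ := ⟨hx, hy⟩
  simp only [modulatedIndicator, Set.indicator_of_mem hx, Set.indicator_of_mem hy,
    Set.indicator_of_mem (hs₃ x hx y hy), Set.indicator_of_mem hxy, ← Complex.exp_add,
    degeneratePhase, Pi.sub_apply]
  congr 2
  push_cast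
  ring

lemma eLpNorm_indicator_of_norm_eq_one {α E : Type*} [MeasurableSpace α] {μ : Measure α}
    [NormedAddCommGroup E] {u : α → E} {s : Set α} {q : ENNReal} (hs : MeasurableSet s)
    (hu : ∀ x, ‖u x‖ = 1) (hq0 : q ≠ 0) (hq : q ≠ ⊤) :
    eLpNorm (s.indicator u) q μ = μ s ^ (1 / q.toReal) := by
  have hnorm : ∀ x, ‖s.indicator u x‖ = ‖s.indicator (fun _ => (1 : ℝ)) x‖ := fun x => by
    simp only [norm_indicator_eq_indicator_norm, hu, norm_one]
  rw [eLpNorm_congr_norm_ae (.of_forall hnorm), eLpNorm_indicator_const hs hq0 hq]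
  simp

lemma exists_Lp_eq_modulatedIndicator (lam : ℝ) (hg : Measurable g) {s : Set ℝ}
    (hs : MeasurableSet s) (hs_fin : volume s ≠ ⊤) :
    ∃ f : Lp ℂ 2 (volume : Measure ℝ),
      f =ᵐ[volume] modulatedIndicator lam g s ∧ ‖f‖ = √(volume.real s) := by
  have hunit : ∀ x, ‖Complex.exp (-(Complex.I * lam * g x))‖ = 1 := fun x => by
    simp [Complex.norm_exp]
  have hnorm : eLpNorm (modulatedIndicator lam g s) 2 volume = volume s ^ (1 / 2 : ℝ) := by
    simpa [modulatedIndicator] using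
      eLpNorm_indicator_of_norm_eq_one (q := 2) hs hunit two_ne_zero ENNReal.ofNat_ne_top
  have hmeas : Measurable (modulatedIndicator lam g s) :=
    Measurable.indicator (by fun_prop) hs
  have hmem : MemLp (modulatedIndicator lam g s) 2 volume :=
    ⟨hmeas.aestronglyMeasurable, hnorm ▸ ENNReal.rpow_lt_top_of_nonneg (by norm_num) hs_fin⟩
  refine ⟨hmem.toLp, hmem.coeFn_toLp, ?_⟩
  rw [Lp.norm_toLp, hnorm, ← ENNReal.toReal_rpow, Real.sqrt_eq_rpow, Measure.real]

end TrilinearForm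

section LowerBound

lemma sub_mul_measureReal_le_norm_setIntegral {α E : Type*} [MeasurableSpace α] {μ : Measure α}
    [NormedAddCommGroup E] [NormedSpace ℝ E] [CompleteSpace E] {G : α → E} {s : Set α} {w : E}
    {ε : ℝ} (hs : MeasurableSet s) (hs_fin : μ s ≠ ⊤) (hG : AEStronglyMeasurable G μ)
    (hGw : ∀ p ∈ s, ‖G p - w‖ ≤ ε) :
    (‖w‖ - ε) * μ.real s ≤ ‖∫ p in s, G p ∂μ‖ := by
  have hG_le : ∀ p ∈ s, ‖G p‖ ≤ ‖w‖ + ε := fun p hp =>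
    (norm_le_norm_add_norm_sub' (G p) w).trans (by gcongr; exact hGw p hp)
  have hG_int : IntegrableOn G s μ :=
    Measure.integrableOn_of_bounded hs_fin hG (ae_restrict_of_forall_mem hs hG_le)
  have hdiff : ‖(∫ p in s, G p ∂μ) - μ.real s • w‖ ≤ ε * μ.real s := by
    rw [← setIntegral_const, ← integral_sub hG_int (integrableOn_const hs_fin)]
    exact norm_setIntegral_le_of_norm_le_const hs_fin.lt_top hGw
  have hw : ‖μ.real s • w‖ = μ.real s * ‖w‖ := by
    rw [norm_smul, Real.norm_of_nonneg measureReal_nonneg]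
  linarith [norm_le_norm_add_norm_sub (∫ p in s, G p ∂μ) (μ.real s • w)]

lemma norm_exp_I_mul_mul_sub_le (θ : ℝ) (z w : ℂ) :
    ‖Complex.exp (Complex.I * θ) * z - w‖ ≤ |θ| * ‖w‖ + ‖z - w‖ := by
  have hunit : ‖Complex.exp (Complex.I * θ)‖ = 1 := by simp [Complex.norm_exp]
  calc ‖Complex.exp (Complex.I * θ) * z - w‖
      = ‖(Complex.exp (Complex.I * θ) - 1) * w + Complex.exp (Complex.I * θ) * (z - w)‖ := by
        congr 1
        ring
    _ ≤ ‖Complex.exp (Complex.I * θ) - 1‖ * ‖w‖ + ‖z - w‖ := by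
        simpa only [norm_mul, hunit, one_mul] using norm_add_le
          ((Complex.exp (Complex.I * θ) - 1) * w) (Complex.exp (Complex.I * θ) * (z - w))
    _ ≤ |θ| * ‖w‖ + ‖z - w‖ := by
        gcongr
        exact Real.norm_exp_I_mul_ofReal_sub_one_le

variable {lam : ℝ} {S : ℝ × ℝ → ℝ} {a : ℝ × ℝ → ℂ} {g₁ g₂ g₃ : ℝ → ℝ}

lemma le_norm_trilinearForm_modulatedIndicator (hS : Measurable S)
    (ha : AEStronglyMeasurable a volume) (h₁ : Measurable g₁) (h₂ : Measurable g₂)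
    (h₃ : Measurable g₃) {δ : ℝ} (hδ : 0 ≤ δ) {w : ℂ}
    (hphase : ∀ p ∈ closedBall 0 δ, |lam * (S - degeneratePhase g₁ g₂ g₃) p| ≤ 1 / 4)
    (hamp : ∀ p ∈ closedBall 0 δ, ‖a p - w‖ ≤ ‖w‖ / 4) :
    2 * δ ^ 2 * ‖w‖ ≤ ‖trilinearForm lam S a (modulatedIndicator lam g₁ (closedBall 0 δ))
      (modulatedIndicator lam g₂ (closedBall 0 δ))
      (modulatedIndicator lam g₃ (closedBall 0 (2 * δ)))‖ := by
  have hsum : ∀ x ∈ closedBall (0 : ℝ) δ, ∀ y ∈ closedBall (0 : ℝ) δ,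
      x + y ∈ closedBall (0 : ℝ) (2 * δ) := fun x hx y hy => by
    rw [mem_closedBall_zero_iff] at *
    linarith [norm_add_le x y]
  rw [trilinearForm_modulatedIndicator measurableSet_closedBall measurableSet_closedBall hsum,
    closedBall_prod_same]
  set G : ℝ × ℝ → ℂ := fun p =>
    Complex.exp (Complex.I * (lam * (S - degeneratePhase g₁ g₂ g₃) p : ℝ)) * a p
  have hG : AEStronglyMeasurable G volume := by
    have : Measurable (S - degeneratePhase g₁ g₂ g₃) := by
      unfold degeneratePhase
      fun_prop
    exact Measurable.aestronglyMeasurable (by fun_prop) |>.mul ha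
  have hGw : ∀ p ∈ closedBall (0, 0) δ, ‖G p - w‖ ≤ ‖w‖ / 2 := fun p hp =>
    calc ‖G p - w‖ ≤ |lam * (S - degeneratePhase g₁ g₂ g₃) p| * ‖w‖ + ‖a p - w‖ :=
        norm_exp_I_mul_mul_sub_le _ _ _
      _ ≤ 1 / 4 * ‖w‖ + ‖w‖ / 4 := by
        gcongr
        exacts [hphase p hp, hamp p hp]
      _ = ‖w‖ / 2 := by ring
  have hvol : volume.real (closedBall ((0 : ℝ), (0 : ℝ)) δ) = (2 * δ) ^ 2 := by
    rw [← closedBall_prod_same, Measure.volume_eq_prod, measureReal_prod_prod,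
      Real.volume_real_closedBall hδ, sq]
  calc 2 * δ ^ 2 * ‖w‖ = (‖w‖ - ‖w‖ / 2) * volume.real (closedBall ((0 : ℝ), (0 : ℝ)) δ) := by
        rw [hvol]
        ring
    _ ≤ ‖∫ p in closedBall (0, 0) δ, G p‖ := sub_mul_measureReal_le_norm_setIntegral
        measurableSet_closedBall measure_closedBall_lt_top.ne hG hGw

lemma exists_Lp_le_norm_trilinearForm (hS : Measurable S)
    (ha : AEStronglyMeasurable a volume) (h₁ : Measurable g₁) (h₂ : Measurable g₂)
    (h₃ : Measurable g₃) {δ : ℝ} (hδ : 0 < δ) {w : ℂ}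
    (hphase : ∀ p ∈ closedBall 0 δ, |lam * (S - degeneratePhase g₁ g₂ g₃) p| ≤ 1 / 4)
    (hamp : ∀ p ∈ closedBall 0 δ, ‖a p - w‖ ≤ ‖w‖ / 4) :
    ∃ f₁ f₂ f₃ : Lp ℂ 2 (volume : Measure ℝ), f₁ ≠ 0 ∧ f₂ ≠ 0 ∧ f₃ ≠ 0 ∧
      ‖w‖ / 2 * √δ * ‖f₁‖ * ‖f₂‖ * ‖f₃‖ ≤ ‖trilinearForm lam S a f₁ f₂ f₃‖ := by
  have exists_Lp {g : ℝ → ℝ} (hg : Measurable g) {r : ℝ} (hr : 0 < r) :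
      ∃ f : Lp ℂ 2 (volume : Measure ℝ), f ≠ 0 ∧
        f =ᵐ[volume] modulatedIndicator lam g (closedBall 0 r) ∧ ‖f‖ = √(2 * r) := by
    obtain ⟨f, hf_ae, hf_norm⟩ := exists_Lp_eq_modulatedIndicator lam hg
      (measurableSet_closedBall (x := 0) (ε := r)) measure_closedBall_lt_top.ne
    rw [Real.volume_real_closedBall hr.le] at hf_norm
    exact ⟨f, norm_pos_iff.1 (hf_norm ▸ by positivity), hf_ae, hf_norm⟩
  obtain ⟨f₁, hf₁, hf₁_ae, hf₁_norm⟩ := exists_Lp h₁ hδ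
  obtain ⟨f₂, hf₂, hf₂_ae, hf₂_norm⟩ := exists_Lp h₂ hδ
  obtain ⟨f₃, hf₃, hf₃_ae, hf₃_norm⟩ := exists_Lp h₃ (mul_pos two_pos hδ)
  refine ⟨f₁, f₂, f₃, hf₁, hf₂, hf₃, ?_⟩
  rw [trilinearForm_congr_ae hf₁_ae hf₂_ae hf₃_ae, hf₁_norm, hf₂_norm, hf₃_norm]
  have hsqrt₃ : √(2 * (2 * δ)) = 2 * √δ := by
    rw [← mul_assoc, Real.sqrt_mul (by norm_num), Real.sqrt_mul_self two_pos.le]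
  calc ‖w‖ / 2 * √δ * √(2 * δ) * √(2 * δ) * √(2 * (2 * δ))
      = ‖w‖ * √δ ^ 2 * √(2 * δ) ^ 2 := by
        rw [hsqrt₃]
        ring
    _ = 2 * δ ^ 2 * ‖w‖ := by
        rw [Real.sq_sqrt hδ.le, Real.sq_sqrt (by positivity)]
        ring
    _ ≤ _ := le_norm_trilinearForm_modulatedIndicator hS ha h₁ h₂ h₃ hδ.le hphase hamp

lemma exists_scale {θ K r : ℝ} {m : ℕ} (hθ : 0 < θ) (hK : 0 < K) (hr : 0 < r) (hm : m ≠ 0) :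
    ∃ c > 0, ∃ lam₀ : ℝ, 1 ≤ lam₀ ∧ ∀ lam, lam₀ ≤ lam →
      ∃ δ > 0, δ ≤ r ∧ lam * (K * δ ^ m) = θ ∧ c * lam ^ (-(1 / (2 * (m : ℝ)))) = √δ := by
  refine ⟨(θ / K) ^ (1 / (2 * (m : ℝ))), by positivity, max 1 (θ / (K * r ^ m)), le_max_left _ _,
    fun lam hlam => ?_⟩
  have hlam_pos : 0 < lam := zero_lt_one.trans_le ((le_max_left _ _).trans hlam)
  have hlam_ge : θ / (K * r ^ m) ≤ lam := (le_max_right _ _).trans hlam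
  have hδ_pow : ((θ / K / lam) ^ (m⁻¹ : ℝ)) ^ m = θ / K / lam :=
    Real.rpow_inv_natCast_pow (by positivity) hm
  refine ⟨(θ / K / lam) ^ (m⁻¹ : ℝ), by positivity, ?_, ?_, ?_⟩
  · rw [← pow_le_pow_iff_left₀ (by positivity) hr.le hm, hδ_pow]
    rw [div_le_iff₀ (by positivity)] at hlam_ge
    rw [div_div, div_le_iff₀ (by positivity)]
    linarith
  · rw [hδ_pow]
    field_simp
  · rw [Real.sqrt_eq_rpow, ← Real.rpow_mul (by positivity), Real.rpow_neg hlam_pos.le,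
      ← div_eq_mul_inv, ← Real.div_rpow (by positivity) hlam_pos.le]
    congr 1
    field_simp

lemma abs_mul_le_of_norm_le {E : Type*} [SeminormedAddCommGroup E] {p : E} {lam b K δ : ℝ} {m : ℕ}
    (hlam : 0 ≤ lam) (hK : 0 ≤ K) (hb : |b| ≤ K * ‖p‖ ^ m) (hp : ‖p‖ ≤ δ) :
    |lam * b| ≤ lam * (K * δ ^ m) := by
  rw [abs_mul, abs_of_nonneg hlam]
  gcongr
  exact hb.trans (by gcongr)

end LowerBound

theorem trilinear_sharp_lower_bound_general {S : ℝ × ℝ → ℝ} {n : ℕ} (hS : ContDiff ℝ (n + 3) S)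
    (hvan : VanishesToOrder n (DOp S)) {a : ℝ × ℝ → ℂ} (ha : AEStronglyMeasurable a volume)
    (ha_cont : ContinuousAt a (0, 0)) (ha0 : a (0, 0) ≠ 0) :
    ∃ C' > (0 : ℝ), ∃ lam₀ : ℝ, 1 ≤ lam₀ ∧
      ∀ lam : ℝ, lam₀ ≤ lam →
        ∃ f₁ f₂ f₃ : Lp ℂ 2 (volume : Measure ℝ),
          f₁ ≠ 0 ∧ f₂ ≠ 0 ∧ f₃ ≠ 0 ∧
          C' * lam ^ (-(1 / (2 * ((n : ℝ) + 3)))) * ‖f₁‖ * ‖f₂‖ * ‖f₃‖ ≤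
            ‖trilinearForm lam S a f₁ f₂ f₃‖ := by
  obtain ⟨g₁, g₂, g₃, h₁, h₂, h₃, hR⟩ := exists_degeneratePhase_isBigO hS hvan
  obtain ⟨K, hK, hR_le⟩ := hR.exists_pos
  have ha_near : ∀ᶠ p in 𝓝 (0, 0), ‖a p - a (0, 0)‖ ≤ ‖a (0, 0)‖ / 4 := by
    simpa only [dist_eq_norm] using
      ha_cont.eventually (closedBall_mem_nhds _ (by positivity : 0 < ‖a (0, 0)‖ / 4))
  obtain ⟨r, hr, hball⟩ := nhds_basis_closedBall.eventually_iff.1 (hR_le.bound.and ha_near)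
  obtain ⟨c, hc, lam₀, hlam₀, hscale⟩ :=
    exists_scale (θ := 1 / 4) (m := n + 3) (by norm_num) hK hr (by omega)
  refine ⟨‖a (0, 0)‖ / 2 * c, by positivity, lam₀, hlam₀, fun lam hlam => ?_⟩
  obtain ⟨δ, hδ, hδr, hδ_phase, hδ_sqrt⟩ := hscale lam hlam
  have hphase : ∀ p ∈ closedBall 0 δ, |lam * (S - degeneratePhase g₁ g₂ g₃) p| ≤ 1 / 4 :=
    fun p hp => hδ_phase ▸ abs_mul_le_of_norm_le (by linarith) hK.le
      (by simpa using (hball (closedBall_subset_closedBall hδr hp)).1)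
      (mem_closedBall_zero_iff.1 hp)
  obtain ⟨f₁, f₂, f₃, hf₁, hf₂, hf₃, hf⟩ := exists_Lp_le_norm_trilinearForm
    hS.continuous.measurable ha h₁.measurable h₂.measurable h₃.measurable hδ hphase
    fun p hp => (hball (closedBall_subset_closedBall hδr hp)).2
  refine ⟨f₁, f₂, f₃, hf₁, hf₂, hf₃, ?_⟩
  rwa [mul_assoc _ c, ← Nat.cast_ofNat (n := 3), ← Nat.cast_add, hδ_sqrt]


/-- Sharpness of the decay exponent `1/(2(n+3))` in the main
theorem: a matching lower bound for suitable test functions. -/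
theorem trilinear_sharp_lower_bound
    (S : ℝ × ℝ → ℝ) (hS : ∀ p : ℝ × ℝ, AnalyticAt ℝ S p)
    (hPnz : ∀ ε > (0 : ℝ), ∃ p : ℝ × ℝ, ‖p‖ < ε ∧ DOp S p ≠ 0)
    (n : ℕ)
    (hvan : ∀ i j : ℕ, i + j < n → (pdx^[i] (pdy^[j] (DOp S))) (0, 0) = 0)
    (hnonvan : ∃ i j : ℕ, i + j = n ∧ (pdx^[i] (pdy^[j] (DOp S))) (0, 0) ≠ 0)
    (a : ℝ × ℝ → ℂ) (ha : ContDiff ℝ (⊤ : ℕ∞) a) (hacs : HasCompactSupport a)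
    (ha0 : a (0, 0) ≠ 0) :
    ∃ C' > (0 : ℝ), ∃ lam₀ : ℝ, 1 ≤ lam₀ ∧
      ∀ lam : ℝ, lam₀ ≤ lam →
        ∃ f₁ f₂ f₃ : Lp ℂ 2 (volume : Measure ℝ),
          f₁ ≠ 0 ∧ f₂ ≠ 0 ∧ f₃ ≠ 0 ∧
          C' * lam ^ (-(1 / (2 * ((n : ℝ) + 3)))) * ‖f₁‖ * ‖f₂‖ * ‖f₃‖ ≤
            ‖∫ p : ℝ × ℝ, Complex.exp (Complex.I * lam * S p) *
              f₁ p.1 * f₂ p.2 * f₃ (p.1 + p.2) * a p‖ :=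
  trilinear_sharp_lower_bound_general (contDiff_iff_contDiffAt.2 fun p => (hS p).contDiffAt) hvan
    ha.continuous.aestronglyMeasurable ha.continuous.continuousAt ha0
end
end

section
/- Let δ₁, δ₂ > 0 and let a : ℝ² → ℂ be a measurable function with |a(x,y)| ≤ 1 for all (x,y), supported in I × J where I and J are intervals with |I| ≤ δ₁ and |J| ≤ δ₂. Then for all f₁, f₂, f₃ ∈ L²(ℝ): |∬_{ℝ²} f₁(x) f₂(y) f₃(x+y) a(x,y) dx dy| ≤ min{δ₁, δ₂}^{1/2} ‖f₁‖_{L²} ‖f₂‖_{L²} ‖f₃‖_{L²}. -/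
open MeasureTheory

noncomputable section

/-!
For fixed `x`, the Cauchy-Schwarz inequality in `y` bounds the inner integral of
`|f₂(y) f₃(x + y)|` by `‖f₂‖ ‖f₃‖`, uniformly in `x`, because translation preserves the `L²` norm.
What is left is the `L¹` norm of `f₁` over `I`, and a second application of Cauchy-Schwarz costs
`|I|^{1/2}`. Exchanging `x` and `y` gives the factor `|J|^{1/2}` instead.
-/

open scoped ENNReal

section LintegralEnorm

variable {α E F : Type*} [MeasurableSpace α] {μ : Measure α}
  [NormedAddCommGroup E] [NormedAddCommGroup F]

lemma lintegral_enorm_mul_enorm_le_eLpNorm_mul_eLpNorm {p q : ℝ≥0∞} [p.HolderConjugate q]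
    {f : α → E} {g : α → F} (hf : AEStronglyMeasurable f μ) (hg : AEStronglyMeasurable g μ) :
    ∫⁻ x, ‖f x‖ₑ * ‖g x‖ₑ ∂μ ≤ eLpNorm f p μ * eLpNorm g q μ := by
  simpa [eLpNorm_one_eq_lintegral_enorm] using
    eLpNorm_le_eLpNorm_mul_eLpNorm_of_nnnorm (p := p) (q := q) (r := 1) hf hg
      (fun u v ↦ ‖u‖ * ‖v‖) 1 (.of_forall fun x ↦ by simp)

lemma eLpNorm_one_restrict_le_measure_rpow_mul_eLpNorm {p : ℝ≥0∞} (hp : 1 ≤ p) {f : α → E}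
    (hf : AEStronglyMeasurable f μ) (s : Set α) :
    eLpNorm f 1 (μ.restrict s) ≤ μ s ^ (1 - 1 / p.toReal) * eLpNorm f p μ :=
  calc eLpNorm f 1 (μ.restrict s)
    _ ≤ eLpNorm f p (μ.restrict s) * μ s ^ (1 - 1 / p.toReal) := by
      simpa using eLpNorm_le_eLpNorm_mul_rpow_measure_univ hp (hf.restrict (s := s))
    _ ≤ μ s ^ (1 - 1 / p.toReal) * eLpNorm f p μ := by
      rw [mul_comm]
      gcongr
      exact Measure.restrict_le_self

lemma lintegral_enorm_mul_le_setLIntegral_enorm {R : Type*} [NormedDivisionRing R]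
    {k a : α → R} {s : Set α} (ha : ∀ x, ‖a x‖ ≤ 1) (hs : Function.support a ⊆ s) :
    ∫⁻ x, ‖k x * a x‖ₑ ∂μ ≤ ∫⁻ x in s, ‖k x‖ₑ ∂μ := by
  have support_subset : Function.support (fun x ↦ ‖k x * a x‖ₑ) ⊆ s :=
    fun x hx ↦ hs fun hax ↦ hx (by simp [hax])
  rw [← setLIntegral_eq_of_support_subset support_subset]
  refine lintegral_mono fun x ↦ ?_
  have enorm_a_le_one : ‖a x‖ₑ ≤ 1 := by
    simpa only [← ofReal_norm, ENNReal.ofReal_le_one] using ha x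
  simpa only [enorm_mul] using mul_le_of_le_one_right' enorm_a_le_one

end LintegralEnorm

section Trilinear

variable {G E₁ E₂ E₃ : Type*} [MeasurableSpace G] [NormedAddCommGroup E₁]
  [NormedAddCommGroup E₂] [NormedAddCommGroup E₃] {μ : Measure G}
  {f₁ : G → E₁} {f₂ : G → E₂} {f₃ : G → E₃}

lemma lintegral_prod_enorm_mul_enorm_mul_enorm_add_le [Add G] [MeasurableAdd G]
    [μ.IsAddLeftInvariant] {ν : Measure G} {p q : ℝ≥0∞} [p.HolderConjugate q]
    (hf₁ : AEStronglyMeasurable f₁ ν) (hf₂ : AEStronglyMeasurable f₂ μ)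
    (hf₃ : AEStronglyMeasurable f₃ μ) :
    ∫⁻ z : G × G, ‖f₁ z.1‖ₑ * ‖f₂ z.2‖ₑ * ‖f₃ (z.1 + z.2)‖ₑ ∂ν.prod μ ≤
      eLpNorm f₁ 1 ν * eLpNorm f₂ p μ * eLpNorm f₃ q μ := by
  have fiber_le (x : G) : ∫⁻ y, ‖f₁ x‖ₑ * ‖f₂ y‖ₑ * ‖f₃ (x + y)‖ₑ ∂μ ≤
      ‖f₁ x‖ₑ * (eLpNorm f₂ p μ * eLpNorm f₃ q μ) := by
    have translate : MeasurePreserving (x + ·) μ μ := measurePreserving_add_left μ x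
    simp_rw [mul_assoc]
    rw [lintegral_const_mul' _ _ enorm_ne_top, ← eLpNorm_comp_measurePreserving hf₃ translate]
    gcongr
    exact lintegral_enorm_mul_enorm_le_eLpNorm_mul_eLpNorm hf₂
      (hf₃.comp_measurePreserving translate)
  calc ∫⁻ z : G × G, ‖f₁ z.1‖ₑ * ‖f₂ z.2‖ₑ * ‖f₃ (z.1 + z.2)‖ₑ ∂ν.prod μ
    _ ≤ ∫⁻ x, ∫⁻ y, ‖f₁ x‖ₑ * ‖f₂ y‖ₑ * ‖f₃ (x + y)‖ₑ ∂μ ∂ν := lintegral_prod_le _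
    _ ≤ ∫⁻ x, ‖f₁ x‖ₑ * (eLpNorm f₂ p μ * eLpNorm f₃ q μ) ∂ν := lintegral_mono fiber_le
    _ = eLpNorm f₁ 1 ν * eLpNorm f₂ p μ * eLpNorm f₃ q μ := by
      rw [lintegral_mul_const'' _ hf₁.enorm, eLpNorm_one_eq_lintegral_enorm, mul_assoc]

lemma setLIntegral_prod_univ_enorm_mul_enorm_mul_enorm_add_le [Add G] [MeasurableAdd G]
    [SFinite μ] [μ.IsAddLeftInvariant] {p q r : ℝ≥0∞} [p.HolderConjugate q] (hr : 1 ≤ r)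
    (hf₁ : AEStronglyMeasurable f₁ μ) (hf₂ : AEStronglyMeasurable f₂ μ)
    (hf₃ : AEStronglyMeasurable f₃ μ) (s : Set G) :
    ∫⁻ z in s ×ˢ Set.univ, ‖f₁ z.1‖ₑ * ‖f₂ z.2‖ₑ * ‖f₃ (z.1 + z.2)‖ₑ ∂μ.prod μ ≤
      μ s ^ (1 - 1 / r.toReal) * eLpNorm f₁ r μ * eLpNorm f₂ p μ * eLpNorm f₃ q μ := by
  rw [← Measure.prod_restrict, Measure.restrict_univ]
  refine (lintegral_prod_enorm_mul_enorm_mul_enorm_add_le (p := p) (q := q)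
    hf₁.restrict hf₂ hf₃).trans ?_
  gcongr
  exact eLpNorm_one_restrict_le_measure_rpow_mul_eLpNorm hr hf₁ s

lemma setLIntegral_univ_prod_enorm_mul_enorm_mul_enorm_add_le [AddCommMagma G] [MeasurableAdd G]
    [SFinite μ] [μ.IsAddLeftInvariant] {p q r : ℝ≥0∞} [p.HolderConjugate q] (hr : 1 ≤ r)
    (hf₁ : AEStronglyMeasurable f₁ μ) (hf₂ : AEStronglyMeasurable f₂ μ)
    (hf₃ : AEStronglyMeasurable f₃ μ) (t : Set G) :
    ∫⁻ z in Set.univ ×ˢ t, ‖f₁ z.1‖ₑ * ‖f₂ z.2‖ₑ * ‖f₃ (z.1 + z.2)‖ₑ ∂μ.prod μ ≤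
      μ t ^ (1 - 1 / r.toReal) * eLpNorm f₁ p μ * eLpNorm f₂ r μ * eLpNorm f₃ q μ := by
  have swapped := setLIntegral_prod_univ_enorm_mul_enorm_mul_enorm_add_le (p := p) (q := q)
    hr hf₂ hf₁ hf₃ t
  rw [← Measure.prod_restrict, ← lintegral_prod_swap, Measure.prod_restrict]
  simpa only [Prod.fst_swap, Prod.snd_swap, add_comm, mul_comm, mul_left_comm] using swapped

lemma setLIntegral_prod_enorm_mul_enorm_mul_enorm_add_le [AddCommMagma G] [MeasurableAdd G]
    [SFinite μ] [μ.IsAddLeftInvariant] (hf₁ : AEStronglyMeasurable f₁ μ)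
    (hf₂ : AEStronglyMeasurable f₂ μ) (hf₃ : AEStronglyMeasurable f₃ μ) (s t : Set G) :
    ∫⁻ z in s ×ˢ t, ‖f₁ z.1‖ₑ * ‖f₂ z.2‖ₑ * ‖f₃ (z.1 + z.2)‖ₑ ∂μ.prod μ ≤
      min (μ s) (μ t) ^ (1 / 2 : ℝ) * eLpNorm f₁ 2 μ * eLpNorm f₂ 2 μ * eLpNorm f₃ 2 μ := by
  have one_sub_half : (1 - 1 / (2 : ℝ≥0∞).toReal : ℝ) = 1 / 2 := by norm_num
  rcases min_choice (μ s) (μ t) with hmin | hmin <;> rw [hmin, ← one_sub_half]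
  · exact (lintegral_mono_set (Set.prod_mono_right t.subset_univ)).trans <|
      setLIntegral_prod_univ_enorm_mul_enorm_mul_enorm_add_le one_le_two hf₁ hf₂ hf₃ s
  · exact (lintegral_mono_set (Set.prod_mono_left s.subset_univ)).trans <|
      setLIntegral_univ_prod_enorm_mul_enorm_mul_enorm_add_le one_le_two hf₁ hf₂ hf₃ t

lemma aestronglyMeasurable_mul_mul_add_mul [AddGroup G] [MeasurableAdd₂ G] [SFinite μ]
    [μ.IsAddLeftInvariant] {R : Type*} [NormedRing R] {f₁ f₂ f₃ : G → R} {a : G × G → R}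
    (hf₁ : AEStronglyMeasurable f₁ μ) (hf₂ : AEStronglyMeasurable f₂ μ)
    (hf₃ : AEStronglyMeasurable f₃ μ) (ha : AEStronglyMeasurable a (μ.prod μ)) :
    AEStronglyMeasurable (fun z : G × G ↦ f₁ z.1 * f₂ z.2 * f₃ (z.1 + z.2) * a z) (μ.prod μ) :=
  ((hf₁.comp_fst.mul hf₂.comp_snd).mul
    (hf₃.comp_quasiMeasurePreserving (quasiMeasurePreserving_add μ μ))).mul ha

lemma lintegral_enorm_mul_mul_add_mul_le_ofReal [AddCommMagma G] [MeasurableAdd G] [SFinite μ]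
    [μ.IsAddLeftInvariant] {R : Type*} [NormedDivisionRing R] {δ₁ δ₂ : ℝ} (hδ₁ : 0 ≤ δ₁)
    (hδ₂ : 0 ≤ δ₂) {a : G × G → R} (ha : ∀ z, ‖a z‖ ≤ 1) {s t : Set G}
    (hs : μ s ≤ ENNReal.ofReal δ₁) (ht : μ t ≤ ENNReal.ofReal δ₂)
    (hsupp : Function.support a ⊆ s ×ˢ t) (f₁ f₂ f₃ : Lp R 2 μ) :
    ∫⁻ z : G × G, ‖f₁ z.1 * f₂ z.2 * f₃ (z.1 + z.2) * a z‖ₑ ∂μ.prod μ ≤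
      ENNReal.ofReal (min δ₁ δ₂ ^ (1 / 2 : ℝ) * ‖f₁‖ * ‖f₂‖ * ‖f₃‖) :=
  calc ∫⁻ z : G × G, ‖f₁ z.1 * f₂ z.2 * f₃ (z.1 + z.2) * a z‖ₑ ∂μ.prod μ
    _ ≤ ∫⁻ z in s ×ˢ t, ‖f₁ z.1‖ₑ * ‖f₂ z.2‖ₑ * ‖f₃ (z.1 + z.2)‖ₑ ∂μ.prod μ := by
      simpa only [enorm_mul] using lintegral_enorm_mul_le_setLIntegral_enorm (μ := μ.prod μ)
        (k := fun z : G × G ↦ f₁ z.1 * f₂ z.2 * f₃ (z.1 + z.2)) ha hsupp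
    _ ≤ min (μ s) (μ t) ^ (1 / 2 : ℝ) * ‖f₁‖ₑ * ‖f₂‖ₑ * ‖f₃‖ₑ := by
      simpa only [Lp.enorm_def] using setLIntegral_prod_enorm_mul_enorm_mul_enorm_add_le
        (Lp.aestronglyMeasurable f₁) (Lp.aestronglyMeasurable f₂) (Lp.aestronglyMeasurable f₃) s t
    _ ≤ ENNReal.ofReal (min δ₁ δ₂) ^ (1 / 2 : ℝ) * ‖f₁‖ₑ * ‖f₂‖ₑ * ‖f₃‖ₑ := by
      rw [ENNReal.ofReal_min]
      gcongr
    _ = ENNReal.ofReal (min δ₁ δ₂ ^ (1 / 2 : ℝ) * ‖f₁‖ * ‖f₂‖ * ‖f₃‖) := by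
      rw [ENNReal.ofReal_rpow_of_nonneg (le_min hδ₁ hδ₂) (by norm_num),
        ENNReal.ofReal_mul (by positivity), ENNReal.ofReal_mul (by positivity),
        ENNReal.ofReal_mul (by positivity)]
      simp only [ofReal_norm]

end Trilinear

theorem trilinear_schur_bound_general {G 𝕜 : Type*} [MeasurableSpace G] [AddCommGroup G]
    [MeasurableAdd₂ G] [RCLike 𝕜] {μ : Measure G} [SFinite μ] [μ.IsAddLeftInvariant]
    {δ₁ δ₂ : ℝ} (hδ₁ : 0 ≤ δ₁) (hδ₂ : 0 ≤ δ₂)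
    {a : G × G → 𝕜} (ha : AEStronglyMeasurable a (μ.prod μ)) (hbd : ∀ z, ‖a z‖ ≤ 1)
    {s t : Set G} (hs : μ s ≤ ENNReal.ofReal δ₁) (ht : μ t ≤ ENNReal.ofReal δ₂)
    (hsupp : Function.support a ⊆ s ×ˢ t) (f₁ f₂ f₃ : Lp 𝕜 2 μ) :
    Integrable (fun z : G × G ↦ f₁ z.1 * f₂ z.2 * f₃ (z.1 + z.2) * a z) (μ.prod μ) ∧
      ‖∫ z : G × G, f₁ z.1 * f₂ z.2 * f₃ (z.1 + z.2) * a z ∂μ.prod μ‖ ≤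
        min δ₁ δ₂ ^ (1 / 2 : ℝ) * ‖f₁‖ * ‖f₂‖ * ‖f₃‖ := by
  have lintegral_le := lintegral_enorm_mul_mul_add_mul_le_ofReal hδ₁ hδ₂ hbd hs ht hsupp f₁ f₂ f₃
  refine ⟨⟨aestronglyMeasurable_mul_mul_add_mul (Lp.aestronglyMeasurable f₁)
    (Lp.aestronglyMeasurable f₂) (Lp.aestronglyMeasurable f₃) ha,
    lintegral_le.trans_lt ENNReal.ofReal_lt_top⟩, ?_⟩
  have bound_nonneg : 0 ≤ min δ₁ δ₂ ^ (1 / 2 : ℝ) * ‖f₁‖ * ‖f₂‖ * ‖f₃‖ := by positivity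
  rw [← toReal_enorm]
  exact ENNReal.toReal_le_of_le_ofReal bound_nonneg
    ((enorm_integral_le_lintegral_enorm _).trans lintegral_le)

/-- Schur-type bound for the trilinear form with the extra factor
`f₃(x+y)` (Lemma `schur` of the paper). -/
theorem trilinear_schur_bound
    (δ₁ δ₂ : ℝ) (hδ₁ : 0 < δ₁) (hδ₂ : 0 < δ₂)
    (a : ℝ × ℝ → ℂ) (ha : Measurable a) (hbd : ∀ p : ℝ × ℝ, ‖a p‖ ≤ 1)
    (I J : Set ℝ) (hI : I.OrdConnected) (hJ : J.OrdConnected)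
    (hIv : volume I ≤ ENNReal.ofReal δ₁) (hJv : volume J ≤ ENNReal.ofReal δ₂)
    (hsupp : Function.support a ⊆ I ×ˢ J)
    (f₁ f₂ f₃ : Lp ℂ 2 (volume : Measure ℝ)) :
    ‖∫ p : ℝ × ℝ, f₁ p.1 * f₂ p.2 * f₃ (p.1 + p.2) * a p‖ ≤
      (min δ₁ δ₂) ^ ((1 : ℝ) / 2) * ‖f₁‖ * ‖f₂‖ * ‖f₃‖ :=
  (trilinear_schur_bound_general hδ₁.le hδ₂.le ha.aestronglyMeasurable hbd hIv hJv hsupp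
    f₁ f₂ f₃).2
end
end

section
/- Let H, L ∈ ℕ with L ≥ 1, and let A ≥ 0. For each h ∈ {1, …, H} let T_h : L²(ℝ) × L²(ℝ) × L²(ℝ) → ℂ be a trilinear map, and let I_h, Y_h ⊆ ℝ be measurable sets, such that: (i) |T_h(g₁,g₂,g₃)| ≤ A ‖g₁‖_{L²} ‖g₂‖_{L²} ‖g₃‖_{L²} for all g₁, g₂, g₃ ∈ L²(ℝ); (ii) T_h(g₁,g₂,g₃) = T_h(g₁·𝟙_{I_h}, g₂·𝟙_{Y_h}, g₃) for all g₁, g₂, g₃ ∈ L²(ℝ); (iii) I_h ∩ I_{h'} = ∅ and Y_h ∩ Y_{h'} = ∅ whenever h ≡ h' (mod L) and h ≠ h'. Then for all f₁, f₂, f₃ ∈ L²(ℝ): |Σ_{h=1}^{H} T_h(f₁,f₂,f₃)| ≤ L · A · ‖f₁‖_{L²} ‖f₂‖_{L²} ‖f₃‖_{L²}. -/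
open MeasureTheory

noncomputable section

/-!
If the sets `I i` are pairwise disjoint, the pieces `‖𝟙_{I i} f‖_p` are `ℓᵖ`-summable in `i` with
total at most `‖f‖_p`; likewise for `Y i` with the conjugate exponent. By localization the `i`-th
form is controlled by the product of one piece of each kind, so within a class of indices with
disjoint sets the discrete Hölder inequality sums the forms at no loss. The only loss is the
triangle inequality over the classes.
-/

open scoped ENNReal

section Localization

variable {α β γ ι κ E₁ E₂ E₃ F : Type*}
  [MeasurableSpace α] [MeasurableSpace β] [MeasurableSpace γ]
  [NormedAddCommGroup E₁] [NormedAddCommGroup E₂] [NormedAddCommGroup E₃]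
  {μ : Measure α} {ν : Measure β} {ρ : Measure γ} {p q r : ℝ≥0∞}
  {s : Finset ι} {I : ι → Set α} {Y : ι → Set β}

theorem sum_eLpNorm_indicator_rpow_le (hp_zero : p ≠ 0) (hp_top : p ≠ ∞)
    (hI : ∀ i ∈ s, MeasurableSet (I i)) (hdisj : (s : Set ι).PairwiseDisjoint I) (f : α → E₁) :
    ∑ i ∈ s, eLpNorm ((I i).indicator f) p μ ^ p.toReal ≤ eLpNorm f p μ ^ p.toReal := by
  lift p to NNReal using hp_top
  have hp : p ≠ 0 := by exact_mod_cast hp_zero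
  calc ∑ i ∈ s, eLpNorm ((I i).indicator f) p μ ^ (p : ℝ)
      = ∑ i ∈ s, ∫⁻ x in I i, ‖f x‖ₑ ^ (p : ℝ) ∂μ :=
        Finset.sum_congr rfl fun i hi => by
          rw [eLpNorm_indicator_eq_eLpNorm_restrict (hI i hi), eLpNorm_nnreal_pow_eq_lintegral hp]
    _ = ∫⁻ x in ⋃ i ∈ s, I i, ‖f x‖ₑ ^ (p : ℝ) ∂μ := (lintegral_biUnion_finset hdisj hI _).symm
    _ ≤ ∫⁻ x, ‖f x‖ₑ ^ (p : ℝ) ∂μ := setLIntegral_le_lintegral _ _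
    _ = eLpNorm f p μ ^ (p : ℝ) := (eLpNorm_nnreal_pow_eq_lintegral hp).symm

theorem sum_eLpNorm_one_indicator_mul_eLpNorm_top_indicator_le
    (hI : ∀ i ∈ s, MeasurableSet (I i)) (hIdisj : (s : Set ι).PairwiseDisjoint I)
    (Y : ι → Set β) (f : α → E₁) (g : β → E₂) :
    ∑ i ∈ s, eLpNorm ((I i).indicator f) 1 μ * eLpNorm ((Y i).indicator g) ∞ ν ≤
      eLpNorm f 1 μ * eLpNorm g ∞ ν :=
  calc ∑ i ∈ s, eLpNorm ((I i).indicator f) 1 μ * eLpNorm ((Y i).indicator g) ∞ ν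
      ≤ ∑ i ∈ s, eLpNorm ((I i).indicator f) 1 μ * eLpNorm g ∞ ν := by
        gcongr
        exact eLpNorm_indicator_le g
    _ = (∑ i ∈ s, eLpNorm ((I i).indicator f) 1 μ) * eLpNorm g ∞ ν := (Finset.sum_mul ..).symm
    _ ≤ eLpNorm f 1 μ * eLpNorm g ∞ ν := by
        gcongr
        simpa using sum_eLpNorm_indicator_rpow_le one_ne_zero ENNReal.one_ne_top hI hIdisj f

theorem sum_eLpNorm_indicator_mul_eLpNorm_indicator_le [p.HolderConjugate q]
    (hI : ∀ i ∈ s, MeasurableSet (I i)) (hY : ∀ i ∈ s, MeasurableSet (Y i))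
    (hIdisj : (s : Set ι).PairwiseDisjoint I) (hYdisj : (s : Set ι).PairwiseDisjoint Y)
    (f : α → E₁) (g : β → E₂) :
    ∑ i ∈ s, eLpNorm ((I i).indicator f) p μ * eLpNorm ((Y i).indicator g) q ν ≤
      eLpNorm f p μ * eLpNorm g q ν := by
  rcases eq_or_ne p ∞ with rfl | hp_top
  · obtain rfl : q = 1 := (ENNReal.HolderConjugate.eq_top_iff_eq_one ∞ q).1 rfl
    simpa only [mul_comm] using
      sum_eLpNorm_one_indicator_mul_eLpNorm_top_indicator_le hY hYdisj I g f
  rcases eq_or_ne q ∞ with rfl | hq_top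
  · obtain rfl : p = 1 := (ENNReal.HolderConjugate.eq_top_iff_eq_one ∞ p).1 rfl
    exact sum_eLpNorm_one_indicator_mul_eLpNorm_top_indicator_le hI hIdisj Y f g
  have hpq_real := ENNReal.HolderConjugate.toReal_of_ne_top hp_top hq_top
  have hp_zero : p ≠ 0 := ENNReal.HolderConjugate.ne_zero p q
  have hq_zero : q ≠ 0 := ENNReal.HolderConjugate.ne_zero q p
  calc ∑ i ∈ s, eLpNorm ((I i).indicator f) p μ * eLpNorm ((Y i).indicator g) q ν
      ≤ (∑ i ∈ s, eLpNorm ((I i).indicator f) p μ ^ p.toReal) ^ (1 / p.toReal) *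
          (∑ i ∈ s, eLpNorm ((Y i).indicator g) q ν ^ q.toReal) ^ (1 / q.toReal) :=
        ENNReal.inner_le_Lp_mul_Lq s _ _ hpq_real
    _ ≤ (eLpNorm f p μ ^ p.toReal) ^ (1 / p.toReal) *
          (eLpNorm g q ν ^ q.toReal) ^ (1 / q.toReal) := by
        gcongr
        · exact sum_eLpNorm_indicator_rpow_le hp_zero hp_top hI hIdisj f
        · exact sum_eLpNorm_indicator_rpow_le hq_zero hq_top hY hYdisj g
    _ = eLpNorm f p μ * eLpNorm g q ν := by
        rw [one_div, one_div, ENNReal.rpow_rpow_inv hpq_real.ne_zero,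
          ENNReal.rpow_rpow_inv hpq_real.symm.ne_zero]

theorem sum_toReal_eLpNorm_indicator_mul_le [p.HolderConjugate q]
    (hI : ∀ i ∈ s, MeasurableSet (I i)) (hY : ∀ i ∈ s, MeasurableSet (Y i))
    (hIdisj : (s : Set ι).PairwiseDisjoint I) (hYdisj : (s : Set ι).PairwiseDisjoint Y)
    {f : α → E₁} {g : β → E₂} (hf : MemLp f p μ) (hg : MemLp g q ν) :
    ∑ i ∈ s, (eLpNorm ((I i).indicator f) p μ).toReal *
        (eLpNorm ((Y i).indicator g) q ν).toReal ≤
      (eLpNorm f p μ).toReal * (eLpNorm g q ν).toReal := by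
  simp only [← ENNReal.toReal_mul]
  rw [← ENNReal.toReal_sum fun i hi => ENNReal.mul_ne_top
    (hf.indicator (hI i hi)).eLpNorm_ne_top (hg.indicator (hY i hi)).eLpNorm_ne_top]
  exact ENNReal.toReal_mono (ENNReal.mul_ne_top hf.eLpNorm_ne_top hg.eLpNorm_ne_top)
    (sum_eLpNorm_indicator_mul_eLpNorm_indicator_le hI hY hIdisj hYdisj f g)

variable [SeminormedAddCommGroup F]

theorem norm_sum_le_of_norm_le_mul_eLpNorm_indicator [p.HolderConjugate q]
    (hI : ∀ i ∈ s, MeasurableSet (I i)) (hY : ∀ i ∈ s, MeasurableSet (Y i))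
    (hIdisj : (s : Set ι).PairwiseDisjoint I) (hYdisj : (s : Set ι).PairwiseDisjoint Y)
    {f : α → E₁} {g : β → E₂} (hf : MemLp f p μ) (hg : MemLp g q ν)
    {C : ℝ} (hC : 0 ≤ C) {z : ι → F}
    (hz : ∀ i ∈ s, ‖z i‖ ≤ C * ((eLpNorm ((I i).indicator f) p μ).toReal *
      (eLpNorm ((Y i).indicator g) q ν).toReal)) :
    ‖∑ i ∈ s, z i‖ ≤ C * ((eLpNorm f p μ).toReal * (eLpNorm g q ν).toReal) := by
  refine (norm_sum_le_of_le s hz).trans ?_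
  rw [← Finset.mul_sum]
  gcongr
  exact sum_toReal_eLpNorm_indicator_mul_le hI hY hIdisj hYdisj hf hg

theorem norm_sum_le_card_mul_of_forall_fiber [DecidableEq κ] {K : Finset κ} {c : ι → κ}
    (hc : ∀ i ∈ s, c i ∈ K) {z : ι → F} {B : ℝ}
    (hB : ∀ k ∈ K, ‖∑ i ∈ s with c i = k, z i‖ ≤ B) :
    ‖∑ i ∈ s, z i‖ ≤ K.card * B := by
  rw [← Finset.sum_fiberwise_of_maps_to hc, ← nsmul_eq_mul, ← Finset.sum_const]
  exact norm_sum_le_of_le K hB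

theorem almost_orthogonality_trilinear_general [p.HolderConjugate q]
    {K : Finset κ} {c : ι → κ} (hc : ∀ i ∈ s, c i ∈ K) {A : ℝ} (hA : 0 ≤ A)
    {T : ι → (α → E₁) → (β → E₂) → (γ → E₃) → F}
    (hI : ∀ i ∈ s, MeasurableSet (I i)) (hY : ∀ i ∈ s, MeasurableSet (Y i))
    (hbound : ∀ i ∈ s, ∀ g₁ g₂ g₃, MemLp g₁ p μ → MemLp g₂ q ν → MemLp g₃ r ρ →
      ‖T i g₁ g₂ g₃‖ ≤
        A * (eLpNorm g₁ p μ).toReal * (eLpNorm g₂ q ν).toReal * (eLpNorm g₃ r ρ).toReal)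
    (hloc : ∀ i ∈ s, ∀ g₁ g₂ g₃,
      T i g₁ g₂ g₃ = T i ((I i).indicator g₁) ((Y i).indicator g₂) g₃)
    (hdisj : ∀ i ∈ s, ∀ j ∈ s, i ≠ j → c i = c j → Disjoint (I i) (I j) ∧ Disjoint (Y i) (Y j))
    {f₁ : α → E₁} {f₂ : β → E₂} {f₃ : γ → E₃}
    (hf₁ : MemLp f₁ p μ) (hf₂ : MemLp f₂ q ν) (hf₃ : MemLp f₃ r ρ) :
    ‖∑ i ∈ s, T i f₁ f₂ f₃‖ ≤ K.card * A * (eLpNorm f₁ p μ).toReal *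
      (eLpNorm f₂ q ν).toReal * (eLpNorm f₃ r ρ).toReal := by
  classical
  have hlocalized : ∀ i ∈ s, ‖T i f₁ f₂ f₃‖ ≤ A * (eLpNorm f₃ r ρ).toReal *
      ((eLpNorm ((I i).indicator f₁) p μ).toReal *
        (eLpNorm ((Y i).indicator f₂) q ν).toReal) := fun i hi => by
    rw [hloc i hi]
    refine (hbound i hi _ _ _ (hf₁.indicator (hI i hi)) (hf₂.indicator (hY i hi)) hf₃).trans_eq ?_
    ring
  have hclass : ∀ k ∈ K, ‖∑ i ∈ s with c i = k, T i f₁ f₂ f₃‖ ≤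
      A * (eLpNorm f₃ r ρ).toReal * ((eLpNorm f₁ p μ).toReal * (eLpNorm f₂ q ν).toReal) := by
    intro k _
    have hsub : ∀ i ∈ s.filter (c · = k), i ∈ s := fun i hi => Finset.mem_of_mem_filter i hi
    have hdisj_class : ∀ i ∈ s.filter (c · = k), ∀ j ∈ s.filter (c · = k), i ≠ j →
        Disjoint (I i) (I j) ∧ Disjoint (Y i) (Y j) := fun i hi j hj hij =>
      hdisj i (hsub i hi) j (hsub j hj) hij
        ((Finset.mem_filter.1 hi).2.trans (Finset.mem_filter.1 hj).2.symm)
    exact norm_sum_le_of_norm_le_mul_eLpNorm_indicator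
      (fun i hi => hI i (hsub i hi)) (fun i hi => hY i (hsub i hi))
      (fun i hi j hj hij => (hdisj_class i hi j hj hij).1)
      (fun i hi j hj hij => (hdisj_class i hi j hj hij).2)
      hf₁ hf₂ (by positivity) fun i hi => hlocalized i (hsub i hi)
  refine (norm_sum_le_card_mul_of_forall_fiber hc hclass).trans_eq ?_
  ring

end Localization

/-- Almost-orthogonality principle for a family of trilinear
forms whose first and second arguments localize to sets that are pairwise
disjoint within each congruence class modulo `L`. -/
theorem almost_orthogonality_trilinear
    (H L : ℕ) (hL : 1 ≤ L) (A : ℝ) (hA : 0 ≤ A)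
    (T : ℕ → (ℝ → ℂ) → (ℝ → ℂ) → (ℝ → ℂ) → ℂ)
    (I Y : ℕ → Set ℝ)
    (hImeas : ∀ h, MeasurableSet (I h)) (hYmeas : ∀ h, MeasurableSet (Y h))
    -- `T h` is linear in each of its three arguments
    (hlin₁ : ∀ h ∈ Finset.Icc 1 H, ∀ (c : ℂ) (g₁ g₁' g₂ g₃ : ℝ → ℂ),
      T h (c • g₁ + g₁') g₂ g₃ = c * T h g₁ g₂ g₃ + T h g₁' g₂ g₃)
    (hlin₂ : ∀ h ∈ Finset.Icc 1 H, ∀ (c : ℂ) (g₁ g₂ g₂' g₃ : ℝ → ℂ),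
      T h g₁ (c • g₂ + g₂') g₃ = c * T h g₁ g₂ g₃ + T h g₁ g₂' g₃)
    (hlin₃ : ∀ h ∈ Finset.Icc 1 H, ∀ (c : ℂ) (g₁ g₂ g₃ g₃' : ℝ → ℂ),
      T h g₁ g₂ (c • g₃ + g₃') = c * T h g₁ g₂ g₃ + T h g₁ g₂ g₃')
    -- (i) uniform bound
    (hbound : ∀ h ∈ Finset.Icc 1 H, ∀ g₁ g₂ g₃ : ℝ → ℂ,
      MemLp g₁ 2 (volume : Measure ℝ) → MemLp g₂ 2 (volume : Measure ℝ) →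
      MemLp g₃ 2 (volume : Measure ℝ) →
      ‖T h g₁ g₂ g₃‖ ≤ A * (eLpNorm g₁ 2 (volume : Measure ℝ)).toReal *
        (eLpNorm g₂ 2 (volume : Measure ℝ)).toReal *
        (eLpNorm g₃ 2 (volume : Measure ℝ)).toReal)
    -- (ii) localization
    (hloc : ∀ h ∈ Finset.Icc 1 H, ∀ g₁ g₂ g₃ : ℝ → ℂ,
      T h g₁ g₂ g₃ = T h ((I h).indicator g₁) ((Y h).indicator g₂) g₃)
    -- (iii) disjointness within congruence classes mod `L`
    (hdisj : ∀ h ∈ Finset.Icc 1 H, ∀ h' ∈ Finset.Icc 1 H, h ≠ h' → h % L = h' % L →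
      I h ∩ I h' = ∅ ∧ Y h ∩ Y h' = ∅)
    (f₁ f₂ f₃ : ℝ → ℂ)
    (hf₁ : MemLp f₁ 2 (volume : Measure ℝ)) (hf₂ : MemLp f₂ 2 (volume : Measure ℝ))
    (hf₃ : MemLp f₃ 2 (volume : Measure ℝ)) :
    ‖∑ h ∈ Finset.Icc 1 H, T h f₁ f₂ f₃‖ ≤
      (L : ℝ) * A * (eLpNorm f₁ 2 (volume : Measure ℝ)).toReal *
        (eLpNorm f₂ 2 (volume : Measure ℝ)).toReal *
        (eLpNorm f₃ 2 (volume : Measure ℝ)).toReal := by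
  simp only [← Set.disjoint_iff_inter_eq_empty] at hdisj
  simpa only [Finset.card_range] using almost_orthogonality_trilinear_general
    (K := Finset.range L) (fun h _ => Finset.mem_range.2 (Nat.mod_lt h hL)) hA
    (fun h _ => hImeas h) (fun h _ => hYmeas h) hbound hloc hdisj hf₁ hf₂ hf₃
end
end

section
/- Let P : ℝ² → ℝ be real analytic in a neighborhood of the origin, not identically zero near the origin, and let c_{p,q} := ∂_x^p ∂_y^q P(0,0)/(p! q!) denote its Taylor coefficients. Let m be a positive rational number, set e := min{ p + m q : (p,q) ∈ ℕ², c_{p,q} ≠ 0 }, let E := { (p,q) ∈ ℕ² : c_{p,q} ≠ 0 and p + m q = e }, let (p_l, q_l) be the element of E with largest q, and define P_E(x,y) := Σ_{(p,q) ∈ E} c_{p,q} x^p y^q. Let 0 < b < B be such that Σ_{(p,q) ∈ E} c_{p,q} r^q ≠ 0 for every r ∈ [b, B]. Then for every N, L ∈ ℕ there exist ε > 0 and constants 0 < c ≤ C such that for all (x,y) with 0 < x < ε and b x^m ≤ y ≤ B x^m: (i) c x^{p_l} y^{q_l} ≤ |P_E(x,y)| ≤ C x^{p_l} y^{q_l};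 (ii) |P(x,y) − P_E(x,y)| ≤ 2^{−N} |P_E(x,y)|; (iii) |∂_x^α ∂_y^β P(x,y)| ≤ C · min{ 1, x^{p_l − α} y^{q_l − β} } for all integers 0 ≤ α, β ≤ L (here x^{p_l − α} and y^{q_l − β} are real powers of the positive numbers x, y, so negative exponents are allowed). -/
open MeasureTheory

noncomputable section

/-- Taylor coefficient `c_{p,q} = ∂ₓ^p ∂_y^q P(0,0) / (p! q!)`. -/
def taylorCoef (P : ℝ × ℝ → ℝ) (p q : ℕ) : ℝ :=
  (pdx^[p] (pdy^[q] P)) (0, 0) / ((Nat.factorial p : ℝ) * (Nat.factorial q : ℝ))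

/-!
In the cusp `b x ^ m ≤ y ≤ B x ^ m`, write `y = r x ^ m` with `r` in the compact interval `[b, B]`.
Every monomial `x ^ p y ^ q` is then comparable to `x ^ (p + m q)`, and a Taylor remainder of high
order is smaller than any prescribed power of `x`. Hence the size of a smooth function is governed
by the weights `p + m q` of its nonzero Taylor coefficients. The edge part equals
`x ^ e * ∑ c_{p,q} r ^ q`, whose second factor is bounded away from zero, so it is comparable to
`x ^ e`; all remaining coefficients have weight larger than `e`, so they contribute `o(x ^ e)`.
Applying `∂_x ^ α ∂_y ^ β` lowers every weight by `α + m β`.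
-/

open Filter Topology Asymptotics
open scoped ContDiff

section DirectionalDerivative

variable {V W : Type*} [NormedAddCommGroup V] [NormedSpace ℝ V] [NormedAddCommGroup W]
  [NormedSpace ℝ W] {f g : V → W} {a : V}

/-- The directional derivative along `v` as an operator on functions, so that it can be iterated.
The partial derivatives `pdx` and `pdy` are the cases `v = (1, 0)` and `v = (0, 1)`. -/
def dirDeriv (v : V) (f : V → W) : V → W := fun z => lineDeriv ℝ f z v

lemma dirDeriv_congr (h : f =ᶠ[𝓝 a] g) (v : V) : dirDeriv v f =ᶠ[𝓝 a] dirDeriv v g :=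
  h.eventuallyEq_nhds.mono fun _ hz => hz.lineDeriv_eq

lemma iterate_dirDeriv_congr (h : f =ᶠ[𝓝 a] g) (v : V) (n : ℕ) :
    (dirDeriv v)^[n] f =ᶠ[𝓝 a] (dirDeriv v)^[n] g := by
  induction n with
  | zero => exact h
  | succ n ih => simpa only [Function.iterate_succ_apply'] using dirDeriv_congr ih v

lemma eventually_differentiableAt (hf : ContDiffAt ℝ 1 f a) :
    ∀ᶠ z in 𝓝 a, DifferentiableAt ℝ f z :=
  (hf.eventually (by simp)).mono fun _ hz => hz.differentiableAt one_ne_zero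

lemma dirDeriv_eventuallyEq_fderiv (hf : ContDiffAt ℝ 1 f a) (v : V) :
    dirDeriv v f =ᶠ[𝓝 a] fun z => fderiv ℝ f z v :=
  (eventually_differentiableAt hf).mono fun _ hz => hz.lineDeriv_eq_fderiv

lemma contDiffAt_dirDeriv (hf : ContDiffAt ℝ ∞ f a) (v : V) : ContDiffAt ℝ ∞ (dirDeriv v f) a :=
  ((hf.fderiv_right (by simp)).clm_apply contDiffAt_const).congr_of_eventuallyEq
    (dirDeriv_eventuallyEq_fderiv (hf.of_le (by simp)) v)

lemma contDiffAt_iterate_dirDeriv (hf : ContDiffAt ℝ ∞ f a) (v : V) (n : ℕ) :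
    ContDiffAt ℝ ∞ ((dirDeriv v)^[n] f) a := by
  induction n with
  | zero => exact hf
  | succ n ih => simpa only [Function.iterate_succ_apply'] using contDiffAt_dirDeriv ih v

lemma dirDeriv_dirDeriv_apply (hf : ContDiffAt ℝ 2 f a) (v w : V) :
    dirDeriv v (dirDeriv w f) a = fderiv ℝ (fderiv ℝ f) a v w := by
  have hf' : DifferentiableAt ℝ (fderiv ℝ f) a :=
    (hf.fderiv_right (m := 1) (by norm_num)).differentiableAt one_ne_zero
  have hw : dirDeriv w f =ᶠ[𝓝 a] fun z => fderiv ℝ f z w :=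
    dirDeriv_eventuallyEq_fderiv (hf.of_le (by norm_num)) w
  rw [(dirDeriv_congr hw v).eq_of_nhds, dirDeriv,
    (hf'.clm_apply (differentiableAt_const w)).lineDeriv_eq_fderiv,
    fderiv_clm_apply hf' (differentiableAt_const w)]
  simp

lemma dirDeriv_comm (hf : ContDiffAt ℝ 2 f a) (v w : V) :
    dirDeriv v (dirDeriv w f) =ᶠ[𝓝 a] dirDeriv w (dirDeriv v f) := by
  filter_upwards [hf.eventually (by simp)] with z hz
  rw [dirDeriv_dirDeriv_apply hz, dirDeriv_dirDeriv_apply hz]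
  exact hz.isSymmSndFDerivAt (by simp) v w

lemma dirDeriv_iterate_dirDeriv_comm (hf : ContDiffAt ℝ ∞ f a) (v w : V) (n : ℕ) :
    dirDeriv v ((dirDeriv w)^[n] f) =ᶠ[𝓝 a] (dirDeriv w)^[n] (dirDeriv v f) := by
  induction n with
  | zero => rfl
  | succ n ih =>
    simp only [Function.iterate_succ_apply']
    exact (dirDeriv_comm ((contDiffAt_iterate_dirDeriv hf w n).of_le (by norm_cast))
      v w).trans (dirDeriv_congr ih w)

lemma iterate_dirDeriv_comm (hf : ContDiffAt ℝ ∞ f a) (v w : V) (n k : ℕ) :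
    (dirDeriv v)^[k] ((dirDeriv w)^[n] f) =ᶠ[𝓝 a] (dirDeriv w)^[n] ((dirDeriv v)^[k] f) := by
  induction k with
  | zero => rfl
  | succ k ih =>
    simp only [Function.iterate_succ_apply']
    exact (dirDeriv_congr ih v).trans
      (dirDeriv_iterate_dirDeriv_comm (contDiffAt_iterate_dirDeriv hf v k) v w n)

lemma dirDeriv_sub (hf : ContDiffAt ℝ 1 f a) (hg : ContDiffAt ℝ 1 g a) (v : V) :
    dirDeriv v (f - g) =ᶠ[𝓝 a] dirDeriv v f - dirDeriv v g := by
  filter_upwards [eventually_differentiableAt hf, eventually_differentiableAt hg] with z hfz hgz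
  simp only [Pi.sub_apply, dirDeriv, hfz.lineDeriv_eq_fderiv, hgz.lineDeriv_eq_fderiv,
    (hfz.sub hgz).lineDeriv_eq_fderiv, fderiv_sub hfz hgz, sub_apply]

lemma iterate_dirDeriv_sub (hf : ContDiffAt ℝ ∞ f a) (hg : ContDiffAt ℝ ∞ g a) (v : V) (n : ℕ) :
    (dirDeriv v)^[n] (f - g) =ᶠ[𝓝 a] (dirDeriv v)^[n] f - (dirDeriv v)^[n] g := by
  induction n with
  | zero => rfl
  | succ n ih =>
    simp only [Function.iterate_succ_apply']
    exact (dirDeriv_congr ih v).trans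
      (dirDeriv_sub ((contDiffAt_iterate_dirDeriv hf v n).of_le (by simp))
        ((contDiffAt_iterate_dirDeriv hg v n).of_le (by simp)) v)

end DirectionalDerivative

section TaylorCoefficients

variable {f g : ℝ × ℝ → ℝ}

lemma pdx_eq_dirDeriv : pdx = dirDeriv ((1, 0) : ℝ × ℝ) := by
  funext f z
  have hline (t : ℝ) : z + t • ((1, 0) : ℝ × ℝ) = (z.1 + t, z.2) := by ext <;> simp
  simp only [pdx, dirDeriv, lineDeriv, hline, deriv_comp_const_add (fun t => f (t, z.2)), add_zero]

lemma pdy_eq_dirDeriv : pdy = dirDeriv ((0, 1) : ℝ × ℝ) := by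
  funext f z
  have hline (t : ℝ) : z + t • ((0, 1) : ℝ × ℝ) = (z.1, z.2 + t) := by ext <;> simp
  simp only [pdy, dirDeriv, lineDeriv, hline, deriv_comp_const_add (fun t => f (z.1, t)), add_zero]

lemma contDiffAt_iterate_pdx_pdy {a : ℝ × ℝ} (hf : ContDiffAt ℝ ∞ f a) (p q : ℕ) :
    ContDiffAt ℝ ∞ (pdx^[p] (pdy^[q] f)) a := by
  rw [pdx_eq_dirDeriv, pdy_eq_dirDeriv]
  exact contDiffAt_iterate_dirDeriv (contDiffAt_iterate_dirDeriv hf _ q) _ p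

lemma iterate_pdx_pdy_mul (φ ψ : ℝ → ℝ) (p q : ℕ) :
    pdx^[p] (pdy^[q] fun z => φ z.1 * ψ z.2) =
      fun z => iteratedDeriv p φ z.1 * iteratedDeriv q ψ z.2 := by
  have hy : pdy^[q] (fun z => φ z.1 * ψ z.2) = fun z => φ z.1 * iteratedDeriv q ψ z.2 := by
    induction q with
    | zero => simp
    | succ q ih =>
      rw [Function.iterate_succ_apply', ih]
      funext z
      simp [pdy, iteratedDeriv_succ]
  rw [hy]
  induction p with
  | zero => simp
  | succ p ih =>
    rw [Function.iterate_succ_apply', ih]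
    funext z
    simp [pdx, iteratedDeriv_succ]

lemma taylorCoef_eq_zero_iff {p q : ℕ} :
    taylorCoef f p q = 0 ↔ (pdx^[p] (pdy^[q] f)) (0, 0) = 0 := by
  simp [taylorCoef, Nat.factorial_ne_zero]

lemma taylorCoef_iterate_pdx_pdy_eq_zero_iff (hf : ContDiffAt ℝ ∞ f 0) (i j p q : ℕ) :
    taylorCoef (pdx^[i] (pdy^[j] f)) p q = 0 ↔ taylorCoef f (p + i) (q + j) = 0 := by
  have hcomm : pdx^[p] (pdy^[q] (pdx^[i] (pdy^[j] f))) =ᶠ[𝓝 0] pdx^[p + i] (pdy^[q + j] f) := by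
    rw [Function.iterate_add_apply, Function.iterate_add_apply, pdx_eq_dirDeriv, pdy_eq_dirDeriv]
    exact iterate_dirDeriv_congr
      (iterate_dirDeriv_comm (contDiffAt_iterate_dirDeriv hf _ j) _ _ i q) _ p
  rw [taylorCoef_eq_zero_iff, taylorCoef_eq_zero_iff]
  exact hcomm.eq_of_nhds.congr_left

lemma taylorCoef_sub (hf : ContDiffAt ℝ ∞ f 0) (hg : ContDiffAt ℝ ∞ g 0) (p q : ℕ) :
    taylorCoef (f - g) p q = taylorCoef f p q - taylorCoef g p q := by
  have hsub : pdx^[p] (pdy^[q] (f - g)) =ᶠ[𝓝 0] pdx^[p] (pdy^[q] f) - pdx^[p] (pdy^[q] g) := by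
    rw [pdx_eq_dirDeriv, pdy_eq_dirDeriv]
    exact (iterate_dirDeriv_congr (iterate_dirDeriv_sub hf hg _ q) _ p).trans
      (iterate_dirDeriv_sub (contDiffAt_iterate_dirDeriv hf _ q)
        (contDiffAt_iterate_dirDeriv hg _ q) _ p)
  rw [taylorCoef, taylorCoef, taylorCoef, ← sub_div]
  exact congrArg (· / _) hsub.eq_of_nhds

lemma taylorCoef_monomial (c : ℝ) (i j p q : ℕ) :
    taylorCoef (fun z => c * z.1 ^ i * z.2 ^ j) p q = if (p, q) = (i, j) then c else 0 := by
  rw [taylorCoef, iterate_pdx_pdy_mul (fun x => c * x ^ i) (fun y => y ^ j)]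
  simp only [iteratedDeriv_const_mul_field, iteratedDeriv_fun_pow_zero, Prod.mk.injEq]
  by_cases hp : p = i <;> by_cases hq : q = j <;> simp [hp, hq]
  field_simp

/-- The part of the Taylor series of `f` at the origin supported on the finite set `S` of exponents.
The polynomial `P_E` attached to an edge `E` is `taylorSum P E`. -/
def taylorSum (f : ℝ × ℝ → ℝ) (S : Finset (ℕ × ℕ)) (z : ℝ × ℝ) : ℝ :=
  ∑ pq ∈ S, taylorCoef f pq.1 pq.2 * z.1 ^ pq.1 * z.2 ^ pq.2

lemma contDiff_taylorSum (f : ℝ × ℝ → ℝ) (S : Finset (ℕ × ℕ)) :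
    ContDiff ℝ ∞ (taylorSum f S) := by
  unfold taylorSum
  fun_prop

lemma taylorCoef_sub_taylorSum (hf : ContDiffAt ℝ ∞ f 0) (S : Finset (ℕ × ℕ)) (p q : ℕ) :
    taylorCoef (f - taylorSum f S) p q = if (p, q) ∈ S then 0 else taylorCoef f p q := by
  classical
  induction S using Finset.induction_on with
  | empty => simp [taylorSum, Pi.sub_def]
  | insert s S hs ih =>
    have hinsert : f - taylorSum f (insert s S) =
        (f - taylorSum f S) - fun z => taylorCoef f s.1 s.2 * z.1 ^ s.1 * z.2 ^ s.2 := by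
      funext z
      simp only [Pi.sub_apply, taylorSum, Finset.sum_insert hs]
      ring
    have hsub : ContDiffAt ℝ ∞ (f - taylorSum f S) 0 :=
      hf.sub (contDiff_taylorSum f S).contDiffAt
    have hmonomial : ContDiffAt ℝ ∞
        (fun z : ℝ × ℝ => taylorCoef f s.1 s.2 * z.1 ^ s.1 * z.2 ^ s.2) 0 := by fun_prop
    rw [hinsert, taylorCoef_sub hsub hmonomial, ih, taylorCoef_monomial]
    by_cases hpq : (p, q) = s
    · subst hpq; simp [hs]
    · simp [hpq]

lemma norm_le_norm_apply_add_norm_apply (T : ℝ × ℝ →L[ℝ] ℝ) : ‖T‖ ≤ ‖T (1, 0)‖ + ‖T (0, 1)‖ := by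
  refine T.opNorm_le_bound (by positivity) fun v => ?_
  have hv : T v = v.1 * T (1, 0) + v.2 * T (0, 1) := by
    rw [← smul_eq_mul, ← smul_eq_mul, ← map_smul, ← map_smul, ← map_add]
    simp
  calc ‖T v‖ ≤ ‖v.1‖ * ‖T (1, 0)‖ + ‖v.2‖ * ‖T (0, 1)‖ := by
        rw [hv, ← norm_mul, ← norm_mul]; exact norm_add_le _ _
    _ ≤ ‖v‖ * ‖T (1, 0)‖ + ‖v‖ * ‖T (0, 1)‖ := by
        gcongr
        exacts [norm_fst_le v, norm_snd_le v]
    _ = (‖T (1, 0)‖ + ‖T (0, 1)‖) * ‖v‖ := by ring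

lemma fderiv_isBigO_of_pdx_of_pdy {a : ℝ × ℝ} {h : ℝ × ℝ → ℝ} (hf : ContDiffAt ℝ 1 f a)
    (hx : pdx f =O[𝓝 a] h) (hy : pdy f =O[𝓝 a] h) : fderiv ℝ f =O[𝓝 a] h := by
  rw [pdx_eq_dirDeriv] at hx
  rw [pdy_eq_dirDeriv] at hy
  have hx' := hx.congr' (dirDeriv_eventuallyEq_fderiv hf _) .rfl
  have hy' := hy.congr' (dirDeriv_eventuallyEq_fderiv hf _) .rfl
  refine (IsBigO.of_norm_le fun z => ?_).trans (hx'.norm_left.add hy'.norm_left)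
  exact norm_le_norm_apply_add_norm_apply (fderiv ℝ f z)

lemma isBigO_norm_pow_of_taylorCoef_eq_zero {n : ℕ} (hf : ContDiffAt ℝ ∞ f 0)
    (hzero : ∀ p q, p + q < n → taylorCoef f p q = 0) : f =O[𝓝 0] fun z => ‖z‖ ^ n := by
  induction n generalizing f with
  | zero => simpa using hf.continuousAt.tendsto.isBigO_one ℝ
  | succ n ih =>
    have hf₁ : ContDiffAt ℝ 1 f 0 := hf.of_le (by simp)
    have hx : pdx f =O[𝓝 0] fun z => ‖z‖ ^ n := ih (contDiffAt_iterate_pdx_pdy hf 1 0) fun p q h =>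
      (taylorCoef_iterate_pdx_pdy_eq_zero_iff hf 1 0 p q).2 (hzero _ _ (by omega))
    have hy : pdy f =O[𝓝 0] fun z => ‖z‖ ^ n := ih (contDiffAt_iterate_pdx_pdy hf 0 1) fun p q h =>
      (taylorCoef_iterate_pdx_pdy_eq_zero_iff hf 0 1 p q).2 (hzero _ _ (by omega))
    have hf₀ : f 0 = 0 := taylorCoef_eq_zero_iff.1 (hzero 0 0 (by omega))
    have hfderiv := fderiv_isBigO_of_pdx_of_pdy hf₁ hx hy
    simpa only [sub_zero, ← Nat.cast_succ, Real.rpow_natCast] using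
      isBigO_norm_rpow_add_one_of_fderiv_of_apply_eq_zero n.cast_nonneg
        (eventually_differentiableAt hf₁) (by simpa using hfderiv) hf₀

lemma sub_taylorSum_isBigO_norm_pow (hf : ContDiffAt ℝ ∞ f 0) {n : ℕ} {S : Finset (ℕ × ℕ)}
    (hS : ∀ p q, p + q < n → (p, q) ∈ S) : (f - taylorSum f S) =O[𝓝 0] fun z => ‖z‖ ^ n :=
  isBigO_norm_pow_of_taylorCoef_eq_zero (hf.sub (contDiff_taylorSum f S).contDiffAt) fun p q h => by
    rw [taylorCoef_sub_taylorSum hf, if_pos (hS p q h)]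

end TaylorCoefficients

lemma rpow_isLittleO_rpow_nhdsGT_zero {s t : ℝ} (h : s < t) :
    (fun x : ℝ => x ^ t) =o[𝓝[>] 0] fun x => x ^ s := by
  have hsmall : (fun x : ℝ => x ^ (t - s)) =o[𝓝[>] 0] fun _ => (1 : ℝ) :=
    (isLittleO_one_iff ℝ).2 <| by
      simpa [Real.zero_rpow (sub_pos.2 h).ne'] using
        ((Real.continuousAt_rpow_const 0 _ (.inr (sub_pos.2 h).le)).tendsto).mono_left
          (nhdsWithin_le_nhds (s := Set.Ioi 0))
  refine (hsmall.mul_isBigO (isBigO_refl (fun x : ℝ => x ^ s) _)).congr' ?_ (by simp)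
  filter_upwards [self_mem_nhdsWithin] with x (hx : 0 < x)
  rw [← Real.rpow_add hx, sub_add_cancel]

lemma rpow_isBigO_rpow_nhdsGT_zero {s t : ℝ} (h : s ≤ t) :
    (fun x : ℝ => x ^ t) =O[𝓝[>] 0] fun x => x ^ s :=
  h.eq_or_lt.elim (fun heq => heq ▸ isBigO_refl _ _)
    fun hlt => (rpow_isLittleO_rpow_nhdsGT_zero hlt).isBigO

lemma isBigO_min {α : Type*} {l : Filter α} {f g h : α → ℝ} (hg : f =O[l] g) (hh : f =O[l] h) :
    f =O[l] fun x => min (g x) (h x) := by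
  obtain ⟨C, hgC, hhC⟩ :=
    ((isBigO_iff_eventually.1 hg).and (isBigO_iff_eventually.1 hh)).exists
  refine .of_bound C ?_
  filter_upwards [hgC, hhC] with x hgx hhx
  rcases min_choice (g x) (h x) with hmin | hmin <;> rwa [hmin]

section CuspFilter

/-- The filter of points `(x, y)` with `x → 0⁺` inside the region `b x ^ m ≤ y ≤ B x ^ m`. -/
def cuspFilter (m b B : ℝ) : Filter (ℝ × ℝ) :=
  comap Prod.fst (𝓝[>] 0) ⊓ 𝓟 {z | b * z.1 ^ m ≤ z.2 ∧ z.2 ≤ B * z.1 ^ m}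

variable {m b B : ℝ}

lemma eventually_cuspFilter_iff {R : ℝ × ℝ → Prop} :
    (∀ᶠ z in cuspFilter m b B, R z) ↔ ∃ ε > (0 : ℝ), ∀ x y : ℝ, 0 < x → x < ε →
      b * x ^ m ≤ y → y ≤ B * x ^ m → R (x, y) := by
  rw [cuspFilter, (((nhdsGT_basis (0 : ℝ)).comap Prod.fst).inf_principal _).eventually_iff]
  simp only [Set.mem_inter_iff, Set.mem_preimage, Set.mem_Ioo, Set.mem_ofPred_eq, Prod.forall,
    and_imp, gt_iff_lt]

lemma tendsto_fst_cuspFilter : Tendsto Prod.fst (cuspFilter m b B) (𝓝[>] 0) :=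
  tendsto_comap.mono_left inf_le_left

lemma eventually_fst_pos_cuspFilter : ∀ᶠ z in cuspFilter m b B, 0 < z.1 :=
  tendsto_fst_cuspFilter.eventually self_mem_nhdsWithin

lemma eventually_snd_pos_cuspFilter (hb : 0 < b) : ∀ᶠ z in cuspFilter m b B, 0 < z.2 :=
  eventually_cuspFilter_iff.2
    ⟨1, one_pos, fun _ _ hx _ hy _ => (mul_pos hb (Real.rpow_pos_of_pos hx m)).trans_le hy⟩

lemma tendsto_snd_div_rpow_cuspFilter :
    Tendsto (fun z : ℝ × ℝ => z.2 / z.1 ^ m) (cuspFilter m b B) (𝓟 (Set.Icc b B)) :=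
  tendsto_principal.2 <| eventually_cuspFilter_iff.2 ⟨1, one_pos, fun x _ hx _ hby hyB =>
    have hxm : 0 < x ^ m := Real.rpow_pos_of_pos hx m
    ⟨(le_div_iff₀ hxm).2 hby, (div_le_iff₀ hxm).2 hyB⟩⟩

lemma fst_rpow_isBigO_cuspFilter {s t : ℝ} (h : s ≤ t) :
    (fun z : ℝ × ℝ => z.1 ^ t) =O[cuspFilter m b B] fun z => z.1 ^ s :=
  (rpow_isBigO_rpow_nhdsGT_zero h).comp_tendsto tendsto_fst_cuspFilter

lemma fst_rpow_isLittleO_cuspFilter {s t : ℝ} (h : s < t) :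
    (fun z : ℝ × ℝ => z.1 ^ t) =o[cuspFilter m b B] fun z => z.1 ^ s :=
  (rpow_isLittleO_rpow_nhdsGT_zero h).comp_tendsto tendsto_fst_cuspFilter

lemma mul_fst_rpow_isTheta_cuspFilter {φ : ℝ → ℝ} (hφ : ContinuousOn φ (Set.Icc b B))
    (hφ₀ : ∀ r ∈ Set.Icc b B, φ r ≠ 0) (s : ℝ) :
    (fun z : ℝ × ℝ => φ (z.2 / z.1 ^ m) * z.1 ^ s) =Θ[cuspFilter m b B] fun z => z.1 ^ s := by
  have hφ_one : φ =Θ[𝓟 (Set.Icc b B)] fun _ => (1 : ℝ) :=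
    hφ.isTheta_principal isCompact_Icc (by simp) hφ₀
  have hcomp : (fun z : ℝ × ℝ => φ (z.2 / z.1 ^ m)) =Θ[cuspFilter m b B] fun _ => (1 : ℝ) :=
    ⟨hφ_one.1.comp_tendsto tendsto_snd_div_rpow_cuspFilter,
      hφ_one.2.comp_tendsto tendsto_snd_div_rpow_cuspFilter⟩
  simpa using hcomp.mul (isTheta_refl (fun z : ℝ × ℝ => z.1 ^ s) _)

lemma snd_isTheta_cuspFilter (hb : 0 < b) :
    Prod.snd =Θ[cuspFilter m b B] fun z : ℝ × ℝ => z.1 ^ m := by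
  refine EventuallyEq.trans_isTheta ?_ (mul_fst_rpow_isTheta_cuspFilter continuousOn_id
    (fun r hr => (hb.trans_le hr.1).ne') m)
  filter_upwards [eventually_fst_pos_cuspFilter] with z hz
  exact (div_mul_cancel₀ _ (Real.rpow_pos_of_pos hz m).ne').symm

lemma rpow_mul_rpow_isTheta_cuspFilter (hb : 0 < b) (s t : ℝ) :
    (fun z : ℝ × ℝ => z.1 ^ s * z.2 ^ t) =Θ[cuspFilter m b B] fun z => z.1 ^ (s + m * t) := by
  have hx : ∀ᶠ z in cuspFilter m b B, 0 < z.1 := eventually_fst_pos_cuspFilter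
  have hy : (fun z : ℝ × ℝ => z.2 ^ t) =Θ[cuspFilter m b B] fun z => (z.1 ^ m) ^ t :=
    (snd_isTheta_cuspFilter hb).rpow ((eventually_snd_pos_cuspFilter hb).mono fun _ h => h.le)
      (hx.mono fun _ h => (Real.rpow_pos_of_pos h m).le)
  refine ((isTheta_refl (fun z : ℝ × ℝ => z.1 ^ s) _).mul hy).trans_eventuallyEq ?_
  filter_upwards [hx] with z hz
  rw [← Real.rpow_mul hz.le, ← Real.rpow_add hz]

lemma pow_mul_pow_isTheta_cuspFilter (hb : 0 < b) (p q : ℕ) :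
    (fun z : ℝ × ℝ => z.1 ^ p * z.2 ^ q) =Θ[cuspFilter m b B]
      fun z => z.1 ^ ((p : ℝ) + m * q) := by
  simpa only [Real.rpow_natCast] using rpow_mul_rpow_isTheta_cuspFilter hb (p : ℝ) (q : ℝ)

lemma norm_isBigO_cuspFilter (hb : 0 < b) :
    (fun z : ℝ × ℝ => ‖z‖) =O[cuspFilter m b B] fun z => z.1 ^ min 1 m := by
  have hx : (fun z : ℝ × ℝ => z.1) =O[cuspFilter m b B] fun z => z.1 ^ min 1 m := by
    simpa using fst_rpow_isBigO_cuspFilter (m := m) (b := b) (B := B) (min_le_left 1 m)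
  have hy : (fun z : ℝ × ℝ => z.2) =O[cuspFilter m b B] fun z => z.1 ^ min 1 m :=
    (snd_isTheta_cuspFilter hb).1.trans (fst_rpow_isBigO_cuspFilter (min_le_right 1 m))
  exact (hx.prod_left hy).norm_left

lemma norm_pow_isBigO_cuspFilter (hb : 0 < b) (n : ℕ) :
    (fun z : ℝ × ℝ => ‖z‖ ^ n) =O[cuspFilter m b B] fun z => z.1 ^ (min 1 m * n) := by
  refine ((norm_isBigO_cuspFilter hb).pow n).congr' .rfl ?_
  filter_upwards [eventually_fst_pos_cuspFilter] with z hz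
  rw [Real.rpow_mul hz.le, Real.rpow_natCast]

lemma cuspFilter_le_nhds_zero (hm : 0 < m) (hb : 0 < b) : cuspFilter m b B ≤ 𝓝 0 := by
  have hpow : Tendsto (fun z : ℝ × ℝ => z.1 ^ min 1 m) (cuspFilter m b B) (𝓝 0) := by
    simpa using fst_rpow_isLittleO_cuspFilter (lt_min one_pos hm)
  exact tendsto_zero_iff_norm_tendsto_zero.2 ((norm_isBigO_cuspFilter hb).trans_tendsto hpow)

end CuspFilter

section WeightedTaylor

variable {f : ℝ × ℝ → ℝ} {m b B d : ℝ} {S : Finset (ℕ × ℕ)}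

lemma exists_superset_sub_taylorSum_isBigO (hf : ContDiffAt ℝ ∞ f 0) (hm : 0 < m) (hb : 0 < b)
    (S : Finset (ℕ × ℕ)) (d : ℝ) :
    ∃ T, S ⊆ T ∧ (f - taylorSum f T) =O[cuspFilter m b B] fun z => z.1 ^ d := by
  classical
  have hmin : 0 < min 1 m := lt_min one_pos hm
  obtain ⟨n, hn⟩ := exists_nat_ge (d / min 1 m)
  have hS : ∀ p q, p + q < n → (p, q) ∈ S ∪ Finset.range n ×ˢ Finset.range n := fun p q h =>
    Finset.mem_union_right _ <| Finset.mem_product.2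
      ⟨Finset.mem_range.2 (by omega), Finset.mem_range.2 (by omega)⟩
  exact ⟨_, Finset.subset_union_left,
    ((sub_taylorSum_isBigO_norm_pow hf hS).mono (cuspFilter_le_nhds_zero hm hb)).trans <|
      (norm_pow_isBigO_cuspFilter hb n).trans <|
        fst_rpow_isBigO_cuspFilter ((div_le_iff₀' hmin).1 hn)⟩

lemma monomial_isTheta_cuspFilter (hb : 0 < b) {c : ℝ} (hc : c ≠ 0) (p q : ℕ) :
    (fun z : ℝ × ℝ => c * z.1 ^ p * z.2 ^ q) =Θ[cuspFilter m b B]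
      fun z => z.1 ^ ((p : ℝ) + m * q) := by
  simp only [mul_assoc]
  exact (isTheta_const_mul_left hc).2 (pow_mul_pow_isTheta_cuspFilter hb p q)

lemma isBigO_of_le_weight (hf : ContDiffAt ℝ ∞ f 0) (hm : 0 < m) (hb : 0 < b)
    (hd : ∀ p q : ℕ, taylorCoef f p q ≠ 0 → d ≤ p + m * q) :
    f =O[cuspFilter m b B] fun z => z.1 ^ d := by
  obtain ⟨T, -, hT⟩ := exists_superset_sub_taylorSum_isBigO (B := B) hf hm hb ∅ d
  have hsum : taylorSum f T =O[cuspFilter m b B] fun z => z.1 ^ d := by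
    refine IsBigO.fun_sum fun pq _ => ?_
    by_cases hc : taylorCoef f pq.1 pq.2 = 0
    · simpa [hc] using isBigO_zero _ _
    · exact (monomial_isTheta_cuspFilter hb hc _ _).1.trans (fst_rpow_isBigO_cuspFilter (hd _ _ hc))
  simpa using hT.add hsum

lemma sub_taylorSum_isLittleO_of_lt_weight (hf : ContDiffAt ℝ ∞ f 0) (hm : 0 < m) (hb : 0 < b)
    (hd : ∀ pq : ℕ × ℕ, pq ∉ S → taylorCoef f pq.1 pq.2 ≠ 0 → d < pq.1 + m * pq.2) :
    (f - taylorSum f S) =o[cuspFilter m b B] fun z => z.1 ^ d := by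
  classical
  obtain ⟨T, hST, hT⟩ := exists_superset_sub_taylorSum_isBigO (B := B) hf hm hb S (d + 1)
  have hsum : taylorSum f (T \ S) =o[cuspFilter m b B] fun z => z.1 ^ d := by
    refine IsLittleO.fun_sum fun pq hpq => ?_
    by_cases hc : taylorCoef f pq.1 pq.2 = 0
    · simp [hc]
    · exact (monomial_isTheta_cuspFilter hb hc _ _).1.trans_isLittleO
        (fst_rpow_isLittleO_cuspFilter (hd _ (Finset.mem_sdiff.1 hpq).2 hc))
  refine ((hT.trans_isLittleO (fst_rpow_isLittleO_cuspFilter (lt_add_one d))).add hsum).congr_left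
    fun z => ?_
  simp only [Pi.sub_apply, taylorSum, ← Finset.sum_sdiff hST]
  ring

lemma iterate_pdx_pdy_isBigO (hf : ContDiffAt ℝ ∞ f 0) (hm : 0 < m) (hb : 0 < b)
    (hd : ∀ p q : ℕ, taylorCoef f p q ≠ 0 → d ≤ p + m * q) (α β : ℕ) :
    pdx^[α] (pdy^[β] f) =O[cuspFilter m b B] fun z => z.1 ^ (d - (α + m * β)) := by
  refine isBigO_of_le_weight (contDiffAt_iterate_pdx_pdy hf α β) hm hb fun p q hpq => ?_
  have hweight := hd (p + α) (q + β) <|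
    (taylorCoef_iterate_pdx_pdy_eq_zero_iff hf α β p q).not.1 hpq
  push_cast at hweight
  linarith

lemma iterate_pdx_pdy_isBigO_min (hf : ContDiffAt ℝ ∞ f 0) (hm : 0 < m) (hb : 0 < b)
    (hd : ∀ p q : ℕ, taylorCoef f p q ≠ 0 → d ≤ p + m * q) {s t : ℝ} (hst : s + m * t = d)
    (α β : ℕ) :
    pdx^[α] (pdy^[β] f) =O[cuspFilter m b B]
      fun z => min 1 (z.1 ^ (s - α) * z.2 ^ (t - β)) := by
  have hone : pdx^[α] (pdy^[β] f) =O[cuspFilter m b B] fun _ => (1 : ℝ) :=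
    ((contDiffAt_iterate_pdx_pdy hf α β).continuousAt.tendsto.isBigO_one ℝ).mono
      (cuspFilter_le_nhds_zero hm hb)
  have hexp : s - α + m * (t - β) = d - (α + m * β) := by rw [← hst]; ring
  refine isBigO_min hone ((iterate_pdx_pdy_isBigO hf hm hb hd α β).trans ?_)
  rw [← hexp]
  exact (rpow_mul_rpow_isTheta_cuspFilter hb _ _).2

lemma taylorSum_eq_of_weight_eq (hS : ∀ pq ∈ S, (pq.1 : ℝ) + m * pq.2 = d) {z : ℝ × ℝ}
    (hz : 0 < z.1) :
    taylorSum f S z =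
      (∑ pq ∈ S, taylorCoef f pq.1 pq.2 * (z.2 / z.1 ^ m) ^ pq.2) * z.1 ^ d := by
  rw [taylorSum, Finset.sum_mul]
  refine Finset.sum_congr rfl fun pq hpq => ?_
  rw [← hS pq hpq, Real.rpow_add hz, Real.rpow_mul hz.le, Real.rpow_natCast, Real.rpow_natCast,
    div_pow]
  field_simp

lemma taylorSum_isTheta_of_weight_eq (hS : ∀ pq ∈ S, (pq.1 : ℝ) + m * pq.2 = d)
    (hroot : ∀ r ∈ Set.Icc b B, ∑ pq ∈ S, taylorCoef f pq.1 pq.2 * r ^ pq.2 ≠ 0) :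
    taylorSum f S =Θ[cuspFilter m b B] fun z => z.1 ^ d :=
  EventuallyEq.trans_isTheta
    (eventually_fst_pos_cuspFilter.mono fun _ hz => taylorSum_eq_of_weight_eq hS hz)
    (mul_fst_rpow_isTheta_cuspFilter (by fun_prop) hroot d)

end WeightedTaylor

theorem edge_dominance_general
    (P : ℝ × ℝ → ℝ) (hP : ContDiffAt ℝ ∞ P (0, 0)) (m : ℝ) (hm : 0 < m) (e : ℝ)
    (he : ∀ p q : ℕ, taylorCoef P p q ≠ 0 → e ≤ (p : ℝ) + m * q)
    (E : Finset (ℕ × ℕ))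
    (hE : ∀ pq : ℕ × ℕ, pq ∈ E ↔ taylorCoef P pq.1 pq.2 ≠ 0 ∧ (pq.1 : ℝ) + m * pq.2 = e)
    (p₀ q₀ : ℕ) (h₀ : (p₀, q₀) ∈ E) (b B : ℝ) (hb : 0 < b)
    (hroot : ∀ r ∈ Set.Icc b B, ∑ pq ∈ E, taylorCoef P pq.1 pq.2 * r ^ pq.2 ≠ 0)
    (N L : ℕ) :
    ∃ ε > (0 : ℝ), ∃ c C : ℝ, 0 < c ∧ c ≤ C ∧
      ∀ x y : ℝ, 0 < x → x < ε → b * x ^ m ≤ y → y ≤ B * x ^ m →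
        (c * x ^ p₀ * y ^ q₀ ≤ |taylorSum P E (x, y)| ∧
          |taylorSum P E (x, y)| ≤ C * x ^ p₀ * y ^ q₀) ∧
        |P (x, y) - taylorSum P E (x, y)| ≤ (1 / 2 : ℝ) ^ N * |taylorSum P E (x, y)| ∧
        (∀ α β : ℕ, α ≤ L → β ≤ L →
          |(pdx^[α] (pdy^[β] P)) (x, y)| ≤
            C * min 1 (x ^ ((p₀ : ℝ) - α) * y ^ ((q₀ : ℝ) - β))) := by
  have h₀e : (p₀ : ℝ) + m * q₀ = e := ((hE _).1 h₀).2
  have hedge : taylorSum P E =Θ[cuspFilter m b B] fun z => z.1 ^ e :=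
    taylorSum_isTheta_of_weight_eq (fun pq h => ((hE pq).1 h).2) hroot
  have hmonomial : taylorSum P E =Θ[cuspFilter m b B] fun z => z.1 ^ p₀ * z.2 ^ q₀ :=
    hedge.trans (h₀e ▸ pow_mul_pow_isTheta_cuspFilter hb p₀ q₀).symm
  have hremainder : (P - taylorSum P E) =o[cuspFilter m b B] taylorSum P E :=
    (sub_taylorSum_isLittleO_of_lt_weight hP hm hb fun pq hpq hc =>
      (he _ _ hc).lt_of_ne fun h => hpq ((hE pq).2 ⟨hc, h.symm⟩)).trans_isTheta hedge.symm
  obtain ⟨c, hc, hlower⟩ := isBigO_iff''.1 hmonomial.2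
  obtain ⟨C, hcC, hupper, hderiv⟩ := ((eventually_ge_atTop c).and
    ((isBigO_iff_eventually.1 hmonomial.1).and
      ((Set.finite_Iic (L, L)).eventually_all.2 fun αβ _ => isBigO_iff_eventually.1
        (iterate_pdx_pdy_isBigO_min hP hm hb he h₀e αβ.1 αβ.2)))).exists
  obtain ⟨ε, hε, hall⟩ := eventually_cuspFilter_iff.1 <| hlower.and <| hupper.and <|
    (hremainder.bound (by positivity : (0 : ℝ) < (1 / 2) ^ N)).and <|
      (Set.finite_Iic (L, L)).eventually_all.2 hderiv
  refine ⟨ε, hε, c, C, hc, hcC, fun x y hx hxε hby hyB => ?_⟩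
  obtain ⟨hlow, hup, hrem, hder⟩ := hall x y hx hxε hby hyB
  have hy : 0 < y := (by positivity : 0 < b * x ^ m).trans_le hby
  have hxy : ‖x ^ p₀ * y ^ q₀‖ = x ^ p₀ * y ^ q₀ := Real.norm_of_nonneg (by positivity)
  rw [hxy, ← mul_assoc] at hlow hup
  refine ⟨⟨hlow, hup⟩, hrem, fun α β hα hβ => ?_⟩
  simpa only [Real.norm_eq_abs, abs_of_nonneg (by positivity :
    0 ≤ min 1 (x ^ ((p₀ : ℝ) - α) * y ^ ((q₀ : ℝ) - β)))] using hder (α, β) ⟨hα, hβ⟩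

/-- On a 'good' region associated to a compact edge of the
Newton polyhedron avoiding the roots of the edge polynomial, `P` is dominated
by the edge part `P_E`, which behaves like the monomial `x^{p_l} y^{q_l}`. -/
theorem edge_dominance
    (P : ℝ × ℝ → ℝ) (hP : AnalyticAt ℝ P (0, 0))
    (hPnz : ∀ ε > (0 : ℝ), ∃ p : ℝ × ℝ, ‖p‖ < ε ∧ P p ≠ 0)
    (m : ℚ) (hm : 0 < m) (e : ℝ)
    (he₁ : ∃ p q : ℕ, taylorCoef P p q ≠ 0 ∧ (p : ℝ) + (m : ℝ) * q = e)
    (he₂ : ∀ p q : ℕ, taylorCoef P p q ≠ 0 → e ≤ (p : ℝ) + (m : ℝ) * q)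
    (E : Finset (ℕ × ℕ))
    (hE : ∀ pq : ℕ × ℕ, pq ∈ E ↔
      taylorCoef P pq.1 pq.2 ≠ 0 ∧ (pq.1 : ℝ) + (m : ℝ) * pq.2 = e)
    (pl ql : ℕ) (hpl : (pl, ql) ∈ E) (hql : ∀ pq ∈ E, pq.2 ≤ ql)
    (b B : ℝ) (hb : 0 < b) (hbB : b < B)
    (hroot : ∀ r ∈ Set.Icc b B, ∑ pq ∈ E, taylorCoef P pq.1 pq.2 * r ^ pq.2 ≠ 0)
    (N L : ℕ) :
    ∃ ε > (0 : ℝ), ∃ c C : ℝ, 0 < c ∧ c ≤ C ∧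
      ∀ x y : ℝ, 0 < x → x < ε → b * x ^ ((m : ℝ)) ≤ y → y ≤ B * x ^ ((m : ℝ)) →
        (c * x ^ pl * y ^ ql ≤
            |∑ pq ∈ E, taylorCoef P pq.1 pq.2 * x ^ pq.1 * y ^ pq.2| ∧
          |∑ pq ∈ E, taylorCoef P pq.1 pq.2 * x ^ pq.1 * y ^ pq.2| ≤
            C * x ^ pl * y ^ ql) ∧
        |P (x, y) - ∑ pq ∈ E, taylorCoef P pq.1 pq.2 * x ^ pq.1 * y ^ pq.2| ≤
          (1 / 2 : ℝ) ^ N *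
            |∑ pq ∈ E, taylorCoef P pq.1 pq.2 * x ^ pq.1 * y ^ pq.2| ∧
        (∀ α β : ℕ, α ≤ L → β ≤ L →
          |(pdx^[α] (pdy^[β] P)) (x, y)| ≤
            C * min 1 (x ^ ((pl : ℝ) - α) * y ^ ((ql : ℝ) - β))) := by
  exact edge_dominance_general P hP.contDiffAt m (by exact_mod_cast hm) e he₂ E hE pl ql hpl b B hb
    hroot N L
end
end

section
/- Let P : ℝ² → ℝ be real analytic in a neighborhood of the origin, with Taylor coefficients c_{p,q} := ∂_x^p ∂_y^q P(0,0)/(p! q!). Let (p_v, q_v) ∈ ℕ² with c_{p_v,q_v} ≠ 0, and let 0 ≤ m_l < m_r ≤ ∞ be such that for every (p,q) ∈ ℕ² with (p,q) ≠ (p_v,q_v) and c_{p,q} ≠ 0, and every real m with m_l < m < m_r, one has p + m q > p_v + m q_v. Then for every N, L ∈ ℕ there exist constants c_l > 0 and C_r > 0 and ε > 0 and C > 0 such that for all (x,y) with 0 < x < ε satisfying C_r x^{m_r} < y < c_l x^{m_l} (where the lower constraint is replaced by 0 < y in case m_r = ∞, and the upper constraint is replaced by y < ε in case m_l = 0): (i)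 |P(x,y) − c_{p_v,q_v} x^{p_v} y^{q_v}| ≤ 2^{−N} |c_{p_v,q_v} x^{p_v} y^{q_v}|; (ii) |∂_x^α ∂_y^β P(x,y)| ≤ C · min{ 1, x^{p_v − α} y^{q_v − β} } for all integers 0 ≤ α, β ≤ L (real powers of the positive numbers x, y, so negative exponents are allowed). -/
open MeasureTheory

noncomputable section

/-!
Near the origin `P` is the sum of its absolutely convergent double Taylor series, which may be
differentiated term by term. In the region `x ^ mr / δ < y < δ * x ^ ml`, `0 < x < δ`, the quotient
of any other monomial of `P` by the vertex monomial is at most `δ`, because the difference of the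
exponents is an integer point at which all the weights `(1, m)`, `ml < m < mr`, are positive.
Comparing the monomials at `(x / ρ, y / ρ)` with `ρ` inside the radius of convergence, rather than
at `(x, y)`, leaves a factor `ρ ^ (p + q)`, so these bounds can be summed over all `(p, q)`.
-/

section ChangeOrigin

variable {𝕜 E F : Type*} [NontriviallyNormedField 𝕜] [NormedAddCommGroup E] [NormedSpace 𝕜 E]
  [NormedAddCommGroup F] [NormedSpace 𝕜 F] (p : FormalMultilinearSeries 𝕜 E F)

lemma norm_changeOriginSeries_apply_apply_le (k l : ℕ) (x y : E) :
    ‖p.changeOriginSeries k l (fun _ => x) (fun _ => y)‖ ≤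
      ‖p.changeOriginSeries k l‖ * ‖x‖ ^ l * ‖y‖ ^ k := by
  rw [← Fin.prod_const, ← Fin.prod_const]
  exact ContinuousMultilinearMap.le_of_opNorm_le (ContinuousMultilinearMap.le_opNorm _ _) _

lemma changeOriginSeries_apply_smul (k l : ℕ) (s t : 𝕜) (x y : E) :
    p.changeOriginSeries k l (fun _ => s • x) (fun _ => t • y) =
      (s ^ l * t ^ k) • p.changeOriginSeries k l (fun _ => x) (fun _ => y) := by
  rw [ContinuousMultilinearMap.map_smul_univ, ContinuousMultilinearMap.map_smul_univ,
    smul_apply, smul_smul, Fin.prod_const, Fin.prod_const, mul_comm]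

lemma summable_nnnorm_changeOriginSeries {r r' : NNReal} (hr : (r + r' : ENNReal) < p.radius) :
    Summable fun z : ℕ × ℕ => ‖p.changeOriginSeries z.1 z.2‖₊ * r ^ z.2 * r' ^ z.1 := by
  have hsigma := (Equiv.sigmaAssoc fun k l : ℕ =>
    { s : Finset (Fin (k + l)) // s.card = l }).summable_iff.2
      (p.changeOriginSeries_summable_aux₁ hr)
  have hprod := (Equiv.sigmaEquivProd ℕ ℕ).symm.summable_iff.2 (NNReal.summable_sigma.1 hsigma).2
  refine NNReal.summable_of_le (fun z => ?_) hprod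
  calc ‖p.changeOriginSeries z.1 z.2‖₊ * r ^ z.2 * r' ^ z.1
      ≤ (∑' _ : { s : Finset (Fin (z.1 + z.2)) // s.card = z.2 }, ‖p (z.1 + z.2)‖₊) *
          r ^ z.2 * r' ^ z.1 := by
        gcongr
        exact p.nnnorm_changeOriginSeries_le_tsum z.1 z.2
    _ = _ := by rw [← NNReal.tsum_mul_right, ← NNReal.tsum_mul_right]; rfl

lemma hasSum_changeOriginSeries [CompleteSpace F] {x y : E}
    (h : (‖x‖₊ + ‖y‖₊ : ENNReal) < p.radius) :
    HasSum (fun z : ℕ × ℕ => p.changeOriginSeries z.1 z.2 (fun _ => x) (fun _ => y))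
      (p.sum (x + y)) := by
  have hx : x ∈ Metric.eball (0 : E) p.radius :=
    mem_eball_zero_iff.2 (le_self_add.trans_lt h)
  have hy : y ∈ Metric.eball (0 : E) (p.changeOrigin x).radius :=
    mem_eball_zero_iff.2 (lt_of_lt_of_le (by rwa [lt_tsub_iff_right, add_comm])
      p.changeOrigin_radius)
  have hsummable : Summable fun z : ℕ × ℕ =>
      p.changeOriginSeries z.1 z.2 (fun _ => x) (fun _ => y) :=
    .of_nnnorm_bounded (summable_nnnorm_changeOriginSeries p h) fun z =>
      norm_changeOriginSeries_apply_apply_le p z.1 z.2 x y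
  have hinner (k : ℕ) : HasSum (fun l => p.changeOriginSeries k l (fun _ => x) (fun _ => y))
      (p.changeOrigin x k fun _ => y) :=
    ContinuousMultilinearMap.hasSum_eval
      (by simpa using (p.hasFPowerSeriesOnBall_changeOrigin k h.pos).hasSum hx) _
  have houter := hsummable.hasSum.prod_fiberwise hinner
  rw [← p.changeOrigin_eval h, ← houter.unique ((p.changeOrigin x).hasSum hy)]
  exact hsummable.hasSum

end ChangeOrigin

/-- `HasDoublePowerSeries f a R`: on the square `|x|, |y| < R` the function `f` is the sum of the
absolutely convergent double power series `∑ a (p, q) x ^ p y ^ q`. -/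
structure HasDoublePowerSeries (f : ℝ × ℝ → ℝ) (a : ℕ × ℕ → ℝ) (R : ℝ) : Prop where
  radius_pos : 0 < R
  summable {r : ℝ} (hr₀ : 0 ≤ r) (hr : r < R) : Summable fun z => |a z| * r ^ (z.1 + z.2)
  hasSum {x y : ℝ} (hx : |x| < R) (hy : |y| < R) :
    HasSum (fun z => a z * (x ^ z.1 * y ^ z.2)) (f (x, y))

lemma exists_hasDoublePowerSeries_of_analyticAt {f : ℝ × ℝ → ℝ} (hf : AnalyticAt ℝ f (0, 0)) :
    ∃ a R, HasDoublePowerSeries f a R := by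
  obtain ⟨p, r, hp⟩ := hf
  obtain ⟨R, hR₀, hR⟩ := ENNReal.lt_iff_exists_nnreal_btwn.1 (ENNReal.half_pos hp.r_pos.ne')
  have add_lt_r {s t : NNReal} (hs : s < R) (ht : t < R) : (s + t : ENNReal) < r :=
    (ENNReal.add_lt_add ((ENNReal.coe_lt_coe.2 hs).trans hR)
      ((ENNReal.coe_lt_coe.2 ht).trans hR)).trans_eq (ENNReal.add_halves r)
  let a (z : ℕ × ℕ) : ℝ := p.changeOriginSeries z.1 z.2 (fun _ => (0, 1)) (fun _ => (1, 0))
  refine ⟨a, R, by exact_mod_cast hR₀, fun {s} hs₀ hs => ?_, fun {x y} hx hy => ?_⟩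
  · lift s to NNReal using hs₀
    have hs' : s < R := by exact_mod_cast hs
    have hsum := summable_nnnorm_changeOriginSeries p ((add_lt_r hs' hs').trans_le hp.r_le)
    refine .of_nonneg_of_le (fun z => by positivity) (fun z => ?_) (NNReal.summable_coe.2 hsum)
    have ha_le : |a z| ≤ ‖p.changeOriginSeries z.1 z.2‖ := by
      simpa using norm_changeOriginSeries_apply_apply_le p z.1 z.2 (0, 1) (1, 0)
    push_cast
    rw [mul_assoc, ← pow_add, add_comm z.2]
    gcongr
  · have hxy : (‖((0 : ℝ), y)‖₊ + ‖(x, (0 : ℝ))‖₊ : ENNReal) < r :=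
      add_lt_r (by simpa [← NNReal.coe_lt_coe] using hy) (by simpa [← NNReal.coe_lt_coe] using hx)
    have hmem : (0, y) + (x, 0) ∈ Metric.eball (0 : ℝ × ℝ) r :=
      mem_eball_zero_iff.2 ((enorm_add_le _ _).trans_lt hxy)
    have hf : f (x, y) = p.sum ((0, y) + (x, 0)) := by simpa using hp.sum hmem
    have hsmul : ((0 : ℝ), y) = y • (0, 1) ∧ (x, (0 : ℝ)) = x • (1, 0) := by simp
    rw [hf]
    refine (hasSum_changeOriginSeries p (hxy.trans_le hp.r_le)).congr_fun fun z => ?_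
    rw [hsmul.1, hsmul.2, changeOriginSeries_apply_smul, smul_eq_mul]
    ring

lemma natCast_mul_pow_pred_mul_sub_le_pow {r s : ℝ} (hr : 0 ≤ r) (hrs : r ≤ s) (n : ℕ) :
    n * r ^ (n - 1) * (s - r) ≤ s ^ n := by
  induction n with
  | zero => simp
  | succ n ih =>
    have hpow : n * r ^ n = r * (n * r ^ (n - 1)) := by
      cases n with
      | zero => simp
      | succ n => simp only [Nat.add_sub_cancel]; ring
    have : 0 ≤ s - r := sub_nonneg.2 hrs
    calc ((n + 1 : ℕ) : ℝ) * r ^ (n + 1 - 1) * (s - r)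
        = (n * r ^ n) * (s - r) + r ^ n * (s - r) := by
          simp only [Nat.add_sub_cancel]
          push_cast
          ring
      _ = r * (n * r ^ (n - 1) * (s - r)) + r ^ n * (s - r) := by rw [hpow]; ring
      _ ≤ r * s ^ n + s ^ n * (s - r) := by gcongr
      _ = s ^ (n + 1) := by ring

lemma abs_mul_deriv_monomial_le {x y r : ℝ} (c : ℝ) (hx : |x| ≤ r) (hy : |y| ≤ r) (z : ℕ × ℕ) :
    |c * (z.1 * x ^ (z.1 - 1) * y ^ z.2)| ≤ |c| * (z.1 * r ^ (z.1 - 1) * r ^ z.2) := by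
  have hr : 0 ≤ r := (abs_nonneg x).trans hx
  simp only [abs_mul, abs_pow, Nat.abs_cast]
  gcongr

namespace HasDoublePowerSeries

variable {f : ℝ × ℝ → ℝ} {a : ℕ × ℕ → ℝ} {R : ℝ}

lemma apply_zero (h : HasDoublePowerSeries f a R) : f (0, 0) = a (0, 0) := by
  have hzero : |(0 : ℝ)| < R := by simpa using h.radius_pos
  refine (h.hasSum hzero hzero).unique ?_
  convert hasSum_single (0, 0) fun z hz => ?_
  · simp
  · rw [Ne, Prod.mk.injEq, not_and_or] at hz
    rcases hz with hz | hz <;> simp [hz]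

lemma comp_swap (h : HasDoublePowerSeries f a R) :
    HasDoublePowerSeries (f ∘ Prod.swap) (a ∘ Prod.swap) R where
  radius_pos := h.radius_pos
  summable hr₀ hr := by
    simpa [Function.comp_def, add_comm] using (h.summable hr₀ hr).prod_symm
  hasSum {x y} hx hy := by
    simpa [Function.comp_def, mul_comm] using (Equiv.prodComm ℕ ℕ).hasSum_iff.2 (h.hasSum hy hx)

lemma summable_deriv (h : HasDoublePowerSeries f a R) {r : ℝ} (hr₀ : 0 ≤ r) (hr : r < R) :
    Summable fun z : ℕ × ℕ => |a z| * (z.1 * r ^ (z.1 - 1) * r ^ z.2) := by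
  obtain ⟨s, hrs, hsR⟩ := exists_between hr
  have hs₀ : 0 ≤ s := hr₀.trans hrs.le
  refine .of_nonneg_of_le (fun z => by positivity) (fun z => ?_)
    ((h.summable hs₀ hsR).mul_right (s - r)⁻¹)
  have hfst : z.1 * r ^ (z.1 - 1) ≤ s ^ z.1 * (s - r)⁻¹ :=
    (le_mul_inv_iff₀ (sub_pos.2 hrs)).2 (natCast_mul_pow_pred_mul_sub_le_pow hr₀ hrs.le z.1)
  have : 0 ≤ (s - r)⁻¹ := inv_nonneg.2 (sub_nonneg.2 hrs.le)
  calc |a z| * (z.1 * r ^ (z.1 - 1) * r ^ z.2)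
      ≤ |a z| * (s ^ z.1 * (s - r)⁻¹ * s ^ z.2) := by gcongr
    _ = |a z| * s ^ (z.1 + z.2) * (s - r)⁻¹ := by ring

lemma hasDerivAt_fst (h : HasDoublePowerSeries f a R) {x y : ℝ} (hx : |x| < R) (hy : |y| < R) :
    HasDerivAt (fun t => f (t, y)) (∑' z, a z * (z.1 * x ^ (z.1 - 1) * y ^ z.2)) x := by
  obtain ⟨r, hr, hrR⟩ := exists_between (max_lt hx hy)
  obtain ⟨hxr, hyr⟩ := max_lt_iff.1 hr
  have hr₀ : 0 < r := (abs_nonneg x).trans_lt hxr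
  have hmem {t : ℝ} : t ∈ Metric.ball (0 : ℝ) r ↔ |t| < r := by simp
  have hterm (z : ℕ × ℕ) (t : ℝ) : HasDerivAt (fun t => a z * (t ^ z.1 * y ^ z.2))
      (a z * (z.1 * t ^ (z.1 - 1) * y ^ z.2)) t :=
    ((hasDerivAt_pow z.1 t).mul_const _).const_mul _
  have hbound (z : ℕ × ℕ) (t : ℝ) (ht : t ∈ Metric.ball (0 : ℝ) r) :
      ‖a z * (z.1 * t ^ (z.1 - 1) * y ^ z.2)‖ ≤ |a z| * (z.1 * r ^ (z.1 - 1) * r ^ z.2) :=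
    abs_mul_deriv_monomial_le _ (hmem.1 ht).le hyr.le z
  refine (hasDerivAt_tsum_of_isPreconnected (h.summable_deriv hr₀.le hrR) Metric.isOpen_ball
    (convex_ball 0 r).isPreconnected (fun z t _ => hterm z t) hbound
    (Metric.mem_ball_self hr₀) (h.hasSum (by simpa using h.radius_pos) hy).summable
    (hmem.2 hxr)).congr_of_eventuallyEq ?_
  filter_upwards [Metric.isOpen_ball.mem_nhds (hmem.2 hxr)] with t ht
  exact (h.hasSum ((hmem.1 ht).trans hrR) hy).tsum_eq.symm

lemma hasSum_pdx (h : HasDoublePowerSeries f a R) {x y : ℝ} (hx : |x| < R) (hy : |y| < R) :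
    HasSum (fun z => a z * (z.1 * x ^ (z.1 - 1) * y ^ z.2)) (pdx f (x, y)) := by
  have hsummable : Summable fun z => a z * (z.1 * x ^ (z.1 - 1) * y ^ z.2) :=
    .of_norm_bounded (h.summable_deriv (le_max_of_le_left (abs_nonneg x)) (max_lt hx hy))
      fun z => abs_mul_deriv_monomial_le _ (le_max_left _ _) (le_max_right _ _) z
  rw [pdx, (h.hasDerivAt_fst hx hy).deriv]
  exact hsummable.hasSum

protected lemma pdx (h : HasDoublePowerSeries f a R) :
    HasDoublePowerSeries (pdx f) (fun z => (z.1 + 1) * a (z.1 + 1, z.2)) R := by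
  have hinj : Function.Injective fun z : ℕ × ℕ => (z.1 + 1, z.2) :=
    (add_left_injective 1).prodMap Function.injective_id
  refine ⟨h.radius_pos, fun {r} hr₀ hr => ?_, fun {x y} hx hy => ?_⟩
  · refine ((h.summable_deriv hr₀ hr).comp_injective hinj).congr fun z => ?_
    simp only [Function.comp_apply, Nat.add_sub_cancel, abs_mul, Nat.cast_add_one, pow_add,
      abs_of_pos (Nat.cast_add_one_pos z.1 : (0 : ℝ) < z.1 + 1)]
    ring
  · have hzero : ∀ z ∉ Set.range fun z : ℕ × ℕ => (z.1 + 1, z.2),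
        a z * (z.1 * x ^ (z.1 - 1) * y ^ z.2) = 0 := by
      rintro ⟨_ | p, q⟩ hz
      · simp
      · exact (hz ⟨(p, q), rfl⟩).elim
    refine ((hinj.hasSum_iff hzero).2 (h.hasSum_pdx hx hy)).congr_fun fun z => ?_
    simp only [Function.comp_apply, Nat.add_sub_cancel, Nat.cast_add_one]
    ring

lemma pdx_iterate (h : HasDoublePowerSeries f a R) (n : ℕ) :
    HasDoublePowerSeries (pdx^[n] f)
      (fun z => (z.1 + 1).ascFactorial n * a (z.1 + n, z.2)) R := by
  induction n with
  | zero => simpa using h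
  | succ n ih =>
    rw [Function.iterate_succ_apply']
    convert ih.pdx using 2 with z
    rw [← mul_assoc, add_right_comm z.1 1 n, Nat.ascFactorial_succ, ← Nat.succ_ascFactorial]
    push_cast
    rfl

lemma pdy_iterate (h : HasDoublePowerSeries f a R) (n : ℕ) :
    HasDoublePowerSeries (pdy^[n] f)
      (fun z => (z.2 + 1).ascFactorial n * a (z.1, z.2 + n)) R := by
  have hconj : Function.Semiconj (· ∘ Prod.swap) pdx pdy := fun _ => rfl
  have hpdy : (pdx^[n] (f ∘ Prod.swap)) ∘ Prod.swap = pdy^[n] f :=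
    hconj.iterate_right n (f ∘ Prod.swap)
  exact hpdy ▸ (h.comp_swap.pdx_iterate n).comp_swap

lemma pdx_iterate_pdy_iterate (h : HasDoublePowerSeries f a R) (α β : ℕ) :
    HasDoublePowerSeries (pdx^[α] (pdy^[β] f)) (fun z =>
      (z.1 + 1).ascFactorial α * ((z.2 + 1).ascFactorial β * a (z.1 + α, z.2 + β))) R :=
  (h.pdy_iterate β).pdx_iterate α

lemma taylorCoef_eq (h : HasDoublePowerSeries f a R) (p q : ℕ) : taylorCoef f p q = a (p, q) := by
  rw [taylorCoef, (h.pdx_iterate_pdy_iterate p q).apply_zero]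
  simp only [zero_add, Nat.one_ascFactorial]
  field_simp

lemma sub_monomial (h : HasDoublePowerSeries f a R) (v : ℕ × ℕ) :
    HasDoublePowerSeries (fun w => f w - a v * (w.1 ^ v.1 * w.2 ^ v.2))
      (Function.update a v 0) R where
  radius_pos := h.radius_pos
  summable hr₀ hr := by
    refine (h.summable hr₀ hr).of_nonneg_of_le (fun z => by positivity) fun z => ?_
    have hupdate : |Function.update a v 0 z| ≤ |a z| := by
      rcases eq_or_ne z v with rfl | hz <;> simp [*]
    gcongr
  hasSum {x y} hx hy := by
    have hsum := (h.hasSum hx hy).update v 0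
    rw [zero_sub, neg_add_eq_sub] at hsum
    refine hsum.congr_fun fun z => ?_
    rcases eq_or_ne z v with rfl | hz <;> simp [*]

lemma abs_le_mul_tsum (h : HasDoublePowerSeries f a R) {ρ x y B : ℝ} (hρ₀ : 0 ≤ ρ) (hρ : ρ < R)
    (hx : |x| < R) (hy : |y| < R)
    (hB : ∀ z, a z ≠ 0 → |x ^ z.1 * y ^ z.2| ≤ B * ρ ^ (z.1 + z.2)) :
    |f (x, y)| ≤ B * ∑' z, |a z| * ρ ^ (z.1 + z.2) := by
  refine (h.hasSum hx hy).norm_le_of_bounded ((h.summable hρ₀ hρ).hasSum.mul_left B) fun z => ?_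
  by_cases hz : a z = 0
  · simp [hz]
  · calc ‖a z * (x ^ z.1 * y ^ z.2)‖ = |a z| * |x ^ z.1 * y ^ z.2| := abs_mul _ _
      _ ≤ |a z| * (B * ρ ^ (z.1 + z.2)) := by gcongr; exact hB z hz
      _ = B * (|a z| * ρ ^ (z.1 + z.2)) := by ring

end HasDoublePowerSeries

lemma rpow_mul_rpow_le_of_le_mul_rpow {x y δ m a b : ℝ} (hx₀ : 0 < x) (hx₁ : x ≤ 1)
    (hy₀ : 0 ≤ y) (hδ₀ : 0 < δ) (hδ₁ : δ ≤ 1) (hy : y ≤ δ * x ^ m) (hb : 1 ≤ b)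
    (hab : 0 ≤ a + m * b) : x ^ a * y ^ b ≤ δ :=
  calc x ^ a * y ^ b ≤ x ^ a * (δ * x ^ m) ^ b := by gcongr
    _ = x ^ (a + m * b) * δ ^ b := by
      rw [Real.mul_rpow hδ₀.le (by positivity), ← Real.rpow_mul hx₀.le, Real.rpow_add hx₀]
      ring
    _ ≤ 1 * δ ^ (1 : ℝ) := by
      gcongr ?_ * ?_
      · exact Real.rpow_le_one hx₀.le hx₁ hab
      · exact Real.rpow_le_rpow_of_exponent_ge hδ₀ hδ₁ hb
    _ = δ := by simp

lemma rpow_mul_rpow_le_of_rpow_le_mul {x y δ m a b : ℝ} (hx₀ : 0 < x) (hx₁ : x ≤ 1)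
    (hy₀ : 0 < y) (hδ₀ : 0 < δ) (hδ₁ : δ ≤ 1) (hy : x ^ m ≤ δ * y) (hb : b ≤ -1)
    (hab : 0 ≤ a + m * b) : x ^ a * y ^ b ≤ δ := by
  have hy_inv : y⁻¹ ≤ δ * x ^ (-m) := by
    rw [Real.rpow_neg hx₀.le, ← div_eq_mul_inv, inv_le_comm₀ hy₀ (by positivity), inv_div]
    exact (div_le_iff₀' hδ₀).2 hy
  simpa [Real.inv_rpow hy₀.le, Real.rpow_neg hy₀.le] using
    rpow_mul_rpow_le_of_le_mul_rpow hx₀ hx₁ (inv_nonneg.2 hy₀.le) hδ₀ hδ₁ hy_inv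
      (le_neg_of_le_neg hb) (by linarith : 0 ≤ a + -m * -b)

/-- The cone of vectors on which every weight `(1, m)` with `ml < m < mr` is positive; the exponents
of the series other than the vertex lie in the translate of this cone by the vertex. -/
def weightCone (ml : ℝ) (mr : WithTop ℝ) : Set (ℝ × ℝ) :=
  {w | ∀ m : ℝ, ml < m → (m : WithTop ℝ) < mr → 0 < w.1 + m * w.2}

section weightCone

variable {ml : ℝ} {mr : WithTop ℝ} {a b : ℝ}

lemma nonneg_of_mem_weightCone_coe {m : ℝ} (hm : ml < m) (h : (a, b) ∈ weightCone ml m) :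
    0 ≤ a + ml * b ∧ 0 ≤ a + m * b := by
  have hclosed : IsClosed {t : ℝ | 0 ≤ a + t * b} := isClosed_le (by fun_prop) (by fun_prop)
  have hsub : Set.Icc ml m ⊆ {t : ℝ | 0 ≤ a + t * b} := by
    rw [← closure_Ioo hm.ne]
    exact closure_minimal (fun t ht => (h t ht.1 (WithTop.coe_lt_coe.2 ht.2)).le) hclosed
  exact ⟨hsub (Set.left_mem_Icc.2 hm.le), hsub (Set.right_mem_Icc.2 hm.le)⟩

lemma exists_coe_le_of_coe_lt (h : (ml : WithTop ℝ) < mr) :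
    ∃ m : ℝ, ml < m ∧ (m : WithTop ℝ) ≤ mr := by
  cases mr with
  | top => exact ⟨ml + 1, lt_add_one ml, le_top⟩
  | coe m => exact ⟨m, WithTop.coe_lt_coe.1 h, le_rfl⟩

lemma left_nonneg_of_mem_weightCone (hmlr : (ml : WithTop ℝ) < mr) (h : (a, b) ∈ weightCone ml mr) :
    0 ≤ a + ml * b := by
  obtain ⟨m, hm, hmr⟩ := exists_coe_le_of_coe_lt hmlr
  exact (nonneg_of_mem_weightCone_coe hm fun t ht htm => h t ht (htm.trans_le hmr)).1

lemma pos_of_mem_weightCone_zero (hmlr : (ml : WithTop ℝ) < mr) (h : (a, 0) ∈ weightCone ml mr) :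
    0 < a := by
  obtain ⟨m, hm, hmr⟩ := exists_coe_le_of_coe_lt hmlr
  obtain ⟨t, ht, htm⟩ := exists_between hm
  simpa using h t ht ((WithTop.coe_lt_coe.2 htm).trans_le hmr)

lemma nonneg_of_mem_weightCone_top (h : (a, b) ∈ weightCone ml ⊤) : 0 ≤ b := by
  by_contra! hb
  have hpos := h (max (ml + 1) (-a / b)) (lt_max_of_lt_left (lt_add_one ml)) (WithTop.coe_lt_top _)
  have hle : max (ml + 1) (-a / b) * b ≤ -a / b * b :=
    mul_le_mul_of_nonpos_right (le_max_right _ _) hb.le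
  rw [div_mul_cancel₀ _ hb.ne] at hle
  linarith

end weightCone

/-- The part `x ^ mr / δ < y < δ * x ^ ml`, `0 < x < δ` of the open first quadrant, where the lower
bound on `y` is only `0` if `mr = ⊤`. -/
structure InVertexRegion (ml : ℝ) (mr : WithTop ℝ) (δ x y : ℝ) : Prop where
  x_pos : 0 < x
  x_lt : x < δ
  y_pos : 0 < y
  y_lt : y < δ * x ^ ml
  lt_y : ∀ m : ℝ, mr = m → x ^ m < δ * y

namespace InVertexRegion

variable {ml : ℝ} {mr : WithTop ℝ} {δ x y : ℝ}

lemma pos (h : InVertexRegion ml mr δ x y) : 0 < δ := h.x_pos.trans h.x_lt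

lemma y_lt_of_le_one (h : InVertexRegion ml mr δ x y) (hml : 0 ≤ ml) (hδ : δ ≤ 1) : y < δ :=
  h.y_lt.trans_le <| mul_le_of_le_one_right h.pos.le <|
    Real.rpow_le_one h.x_pos.le (h.x_lt.le.trans hδ) hml

lemma rpow_mul_rpow_le (h : InVertexRegion ml mr δ x y) (hδ : δ ≤ 1)
    (hmlr : (ml : WithTop ℝ) < mr) {a b : ℤ} (hab : ((a : ℝ), (b : ℝ)) ∈ weightCone ml mr) :
    x ^ (a : ℝ) * y ^ (b : ℝ) ≤ δ := by
  have hx₁ : x ≤ 1 := h.x_lt.le.trans hδ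
  rcases lt_trichotomy b 0 with hb | rfl | hb
  · have hb' : (b : ℝ) ≤ -1 := by exact_mod_cast Int.le_sub_one_of_lt hb
    cases mr with
    | top => exact absurd (nonneg_of_mem_weightCone_top hab) (by linarith)
    | coe m =>
      exact rpow_mul_rpow_le_of_rpow_le_mul h.x_pos hx₁ h.y_pos h.pos hδ (h.lt_y m rfl).le hb'
        (nonneg_of_mem_weightCone_coe (WithTop.coe_lt_coe.1 hmlr) hab).2
  · rw [Int.cast_zero] at hab ⊢
    have ha : (1 : ℝ) ≤ a := by exact_mod_cast pos_of_mem_weightCone_zero hmlr hab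
    calc x ^ (a : ℝ) * y ^ (0 : ℝ) = x ^ (a : ℝ) := by simp
      _ ≤ x ^ (1 : ℝ) := Real.rpow_le_rpow_of_exponent_ge h.x_pos hx₁ ha
      _ ≤ δ := by simpa using h.x_lt.le
  · exact rpow_mul_rpow_le_of_le_mul_rpow h.x_pos hx₁ h.y_pos.le h.pos hδ h.y_lt.le
      (by exact_mod_cast hb) (left_nonneg_of_mem_weightCone hmlr hab)

lemma pow_mul_pow_le (h : InVertexRegion ml mr δ x y) (hδ : δ ≤ 1)
    (hmlr : (ml : WithTop ℝ) < mr) {z v : ℕ × ℕ}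
    (hz : ((z.1 - v.1 : ℝ), (z.2 - v.2 : ℝ)) ∈ weightCone ml mr) :
    x ^ z.1 * y ^ z.2 ≤ δ * (x ^ v.1 * y ^ v.2) := by
  have hx := h.x_pos
  have hy := h.y_pos
  have hle := h.rpow_mul_rpow_le (a := z.1 - v.1) (b := z.2 - v.2) hδ hmlr (by simpa using hz)
  push_cast at hle
  rw [Real.rpow_sub hx, Real.rpow_sub hy, div_mul_div_comm, div_le_iff₀ (by positivity)] at hle
  simpa only [Real.rpow_natCast] using hle

lemma of_inv_mul_rpow_lt (hδ : 0 < δ) (hx₀ : 0 < x) (hx : x < δ) (hy_top : mr = ⊤ → 0 < y)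
    (hy_coe : ∀ m : ℝ, mr = m → δ⁻¹ * x ^ m < y) (hy_zero : ml = 0 → y < δ)
    (hy_ne : ml ≠ 0 → y < δ * x ^ ml) :
    InVertexRegion ml mr δ x y where
  x_pos := hx₀
  x_lt := hx
  y_pos := by
    cases mr with
    | top => exact hy_top rfl
    | coe m => exact lt_trans (by positivity) (hy_coe m rfl)
  y_lt := by
    rcases eq_or_ne ml 0 with rfl | hml
    · simpa using hy_zero rfl
    · exact hy_ne hml
  lt_y m hm := (inv_mul_lt_iff₀ hδ).1 (hy_coe m hm)

end InVertexRegion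

lemma exists_scale_inVertexRegion_div (ml : ℝ) (mr : WithTop ℝ) {ρ : ℝ} (hρ : 0 < ρ) :
    ∃ κ > 0, ∀ δ x y, InVertexRegion ml mr (κ * δ) x y →
      InVertexRegion ml mr δ (x / ρ) (y / ρ) := by
  set κ := min ρ (min (ρ ^ (1 - ml)) (ρ ^ (mr.untopD 0 - 1)))
  have hκ₀ : 0 < κ := by positivity
  refine ⟨κ, hκ₀, fun δ x y h => ?_⟩
  have hx := h.x_pos
  have hy := h.y_pos
  have hδ : 0 < δ := pos_of_mul_pos_right h.pos hκ₀.le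
  have hκ₁ : κ ≤ ρ := min_le_left _ _
  have hκ₂ : κ ≤ ρ ^ (1 - ml) := (min_le_right _ _).trans (min_le_left _ _)
  have hκ₃ : κ ≤ ρ ^ (mr.untopD 0 - 1) := (min_le_right _ _).trans (min_le_right _ _)
  refine ⟨by positivity, ?_, by positivity, ?_, ?_⟩
  · rw [div_lt_iff₀' hρ]
    exact h.x_lt.trans_le (by gcongr)
  · rw [div_lt_iff₀' hρ]
    calc y < κ * δ * x ^ ml := h.y_lt
      _ ≤ ρ ^ (1 - ml) * δ * x ^ ml := by gcongr
      _ = ρ * (δ * (x / ρ) ^ ml) := by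
        rw [Real.rpow_sub hρ, Real.rpow_one, Real.div_rpow hx.le hρ.le]
        ring
  · rintro m rfl
    rw [Real.div_rpow hx.le hρ.le, div_lt_iff₀' (by positivity)]
    calc x ^ m < κ * δ * y := h.lt_y m rfl
      _ ≤ ρ ^ (m - 1) * δ * y := by gcongr; exact hκ₃
      _ = ρ ^ m * (δ * (y / ρ)) := by
        rw [Real.rpow_sub hρ, Real.rpow_one]
        ring

/-- `v` strictly minimises `p + m * q` over the exponents `(p, q)` in the support of `a`, for each
`m` with `ml < m < mr`. For `a v ≠ 0` this makes `v` a vertex of the Newton polyhedron of the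
series with coefficients `a`. -/
def IsWeightMinimizer (a : ℕ × ℕ → ℝ) (v : ℕ × ℕ) (ml : ℝ) (mr : WithTop ℝ) : Prop :=
  ∀ z, z ≠ v → a z ≠ 0 → ((z.1 - v.1 : ℝ), (z.2 - v.2 : ℝ)) ∈ weightCone ml mr

section Estimates

variable {f : ℝ × ℝ → ℝ} {a : ℕ × ℕ → ℝ} {v : ℕ × ℕ} {ml : ℝ} {mr : WithTop ℝ}
  {R ρ δ x y : ℝ}

lemma IsWeightMinimizer.pow_mul_pow_le (hv : IsWeightMinimizer a v ml mr)
    (hmlr : (ml : WithTop ℝ) < mr) (hδ : δ ≤ 1) (hxy : InVertexRegion ml mr δ x y) {z : ℕ × ℕ}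
    (hz : a z ≠ 0) : x ^ z.1 * y ^ z.2 ≤ x ^ v.1 * y ^ v.2 := by
  rcases eq_or_ne z v with rfl | hzv
  · rfl
  · have hx := hxy.x_pos
    have hy := hxy.y_pos
    exact (hxy.pow_mul_pow_le hδ hmlr (hv z hzv hz)).trans
      (mul_le_of_le_one_left (by positivity) hδ)

lemma InVertexRegion.abs_lt_of_div (hxy : InVertexRegion ml mr δ (x / ρ) (y / ρ)) (hml : 0 ≤ ml)
    (hδ : δ ≤ 1) (hρ : 0 < ρ) : |x| < ρ ∧ |y| < ρ := by
  rw [abs_of_pos ((div_pos_iff_of_pos_right hρ).1 hxy.x_pos),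
    abs_of_pos ((div_pos_iff_of_pos_right hρ).1 hxy.y_pos), ← div_lt_one hρ, ← div_lt_one hρ]
  exact ⟨hxy.x_lt.trans_le hδ, (hxy.y_lt_of_le_one hml hδ).trans_le hδ⟩

lemma HasDoublePowerSeries.abs_le_of_inVertexRegion_div (h : HasDoublePowerSeries f a R)
    (hρ₀ : 0 < ρ) (hρ : ρ < R) (hml : 0 ≤ ml) (hδ : δ ≤ 1)
    (hxy : InVertexRegion ml mr δ (x / ρ) (y / ρ)) {B : ℝ}
    (hB : ∀ z, a z ≠ 0 → (x / ρ) ^ z.1 * (y / ρ) ^ z.2 ≤ B) :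
    |f (x, y)| ≤ B * ∑' z, |a z| * ρ ^ (z.1 + z.2) := by
  obtain ⟨hx, hy⟩ := hxy.abs_lt_of_div hml hδ hρ₀
  have hx₀ : 0 < x := (div_pos_iff_of_pos_right hρ₀).1 hxy.x_pos
  have hy₀ : 0 < y := (div_pos_iff_of_pos_right hρ₀).1 hxy.y_pos
  refine h.abs_le_mul_tsum hρ₀.le hρ (hx.trans hρ) (hy.trans hρ) fun z hz => ?_
  rw [abs_of_pos (by positivity), ← div_le_iff₀ (by positivity)]
  calc x ^ z.1 * y ^ z.2 / ρ ^ (z.1 + z.2) = (x / ρ) ^ z.1 * (y / ρ) ^ z.2 := by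
        rw [div_pow, div_pow, pow_add, div_mul_div_comm]
    _ ≤ B := hB z hz

lemma HasDoublePowerSeries.exists_abs_sub_monomial_le (h : HasDoublePowerSeries f a R)
    (hv : IsWeightMinimizer a v ml mr) (hρ₀ : 0 < ρ) (hρ : ρ < R) (hml : 0 ≤ ml)
    (hmlr : (ml : WithTop ℝ) < mr) {η : ℝ} (hη : 0 < η) :
    ∃ δ, 0 < δ ∧ δ ≤ 1 ∧ ∀ x y, InVertexRegion ml mr δ (x / ρ) (y / ρ) →
      |f (x, y) - a v * (x ^ v.1 * y ^ v.2)| ≤ η * (x ^ v.1 * y ^ v.2) := by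
  set S := ∑' z, |Function.update a v 0 z| * ρ ^ (z.1 + z.2)
  have hS : 0 ≤ S := tsum_nonneg fun z => by positivity
  set δ := min 1 (η * ρ ^ (v.1 + v.2) / (S + 1))
  have hδ₁ : δ ≤ 1 := min_le_left _ _
  have hδ₀ : 0 < δ := by positivity
  have hδS : δ * S ≤ η * ρ ^ (v.1 + v.2) :=
    calc δ * S ≤ δ * (S + 1) := by gcongr; linarith
      _ ≤ η * ρ ^ (v.1 + v.2) := (le_div_iff₀ (by positivity)).1 (min_le_right _ _)
  refine ⟨δ, hδ₀, hδ₁, fun x y hxy => ?_⟩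
  have hx : 0 < x := (div_pos_iff_of_pos_right hρ₀).1 hxy.x_pos
  have hy : 0 < y := (div_pos_iff_of_pos_right hρ₀).1 hxy.y_pos
  calc |f (x, y) - a v * (x ^ v.1 * y ^ v.2)|
      ≤ δ * ((x / ρ) ^ v.1 * (y / ρ) ^ v.2) * S := by
        refine (h.sub_monomial v).abs_le_of_inVertexRegion_div hρ₀ hρ hml hδ₁ hxy fun z hz => ?_
        have hzv : z ≠ v := by rintro rfl; simp at hz
        rw [Function.update_of_ne hzv] at hz
        exact hxy.pow_mul_pow_le hδ₁ hmlr (hv z hzv hz)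
    _ = δ * S * (x ^ v.1 * y ^ v.2) / ρ ^ (v.1 + v.2) := by
        rw [div_pow, div_pow, pow_add]
        ring
    _ ≤ η * ρ ^ (v.1 + v.2) * (x ^ v.1 * y ^ v.2) / ρ ^ (v.1 + v.2) := by gcongr
    _ = η * (x ^ v.1 * y ^ v.2) := by field_simp

lemma min_one_mul_le {s t : ℝ} (hs : 0 ≤ s) (ht : 0 ≤ t) :
    min 1 (s * t) ≤ (1 + s) * min 1 t := by
  rw [mul_min_of_nonneg _ _ (by positivity)]
  exact min_le_min (by linarith) (by linarith)

lemma InVertexRegion.pow_mul_pow_le_one (hxy : InVertexRegion ml mr δ x y) (hml : 0 ≤ ml)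
    (hδ : δ ≤ 1) (z : ℕ × ℕ) : x ^ z.1 * y ^ z.2 ≤ 1 :=
  mul_le_one₀ (pow_le_one₀ hxy.x_pos.le (hxy.x_lt.le.trans hδ)) (pow_nonneg hxy.y_pos.le _)
    (pow_le_one₀ hxy.y_pos.le ((hxy.y_lt_of_le_one hml hδ).le.trans hδ))

lemma IsWeightMinimizer.pow_mul_pow_le_rpow_sub (hv : IsWeightMinimizer a v ml mr)
    (hmlr : (ml : WithTop ℝ) < mr) (hδ : δ ≤ 1) (hxy : InVertexRegion ml mr δ x y) {α β : ℕ}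
    {z : ℕ × ℕ} (hz : a (z.1 + α, z.2 + β) ≠ 0) :
    x ^ z.1 * y ^ z.2 ≤ x ^ ((v.1 : ℝ) - α) * y ^ ((v.2 : ℝ) - β) := by
  have hx := hxy.x_pos
  have hy := hxy.y_pos
  rw [Real.rpow_sub hx, Real.rpow_sub hy, div_mul_div_comm, le_div_iff₀ (by positivity)]
  simp only [Real.rpow_natCast]
  calc x ^ z.1 * y ^ z.2 * (x ^ α * y ^ β) = x ^ (z.1 + α) * y ^ (z.2 + β) := by ring
    _ ≤ x ^ v.1 * y ^ v.2 := hv.pow_mul_pow_le hmlr hδ hxy hz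

lemma HasDoublePowerSeries.exists_abs_iterate_le (h : HasDoublePowerSeries f a R)
    (hv : IsWeightMinimizer a v ml mr) (hρ₀ : 0 < ρ) (hρ : ρ < R) (hml : 0 ≤ ml)
    (hmlr : (ml : WithTop ℝ) < mr) (hδ : δ ≤ 1) (α β : ℕ) :
    ∃ C, ∀ x y, InVertexRegion ml mr δ (x / ρ) (y / ρ) →
      |(pdx^[α] (pdy^[β] f)) (x, y)| ≤
        C * min 1 (x ^ ((v.1 : ℝ) - α) * y ^ ((v.2 : ℝ) - β)) := by
  have hderiv := h.pdx_iterate_pdy_iterate α β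
  set b : ℕ × ℕ → ℝ := fun z =>
    (z.1 + 1).ascFactorial α * ((z.2 + 1).ascFactorial β * a (z.1 + α, z.2 + β))
  set S := ∑' z, |b z| * ρ ^ (z.1 + z.2)
  have : 0 ≤ S := tsum_nonneg fun z => by positivity
  set s := (ρ ^ ((v.1 : ℝ) - α) * ρ ^ ((v.2 : ℝ) - β))⁻¹ with hs
  refine ⟨(1 + s) * S, fun x y hxy => ?_⟩
  have hx : 0 < x := (div_pos_iff_of_pos_right hρ₀).1 hxy.x_pos
  have hy : 0 < y := (div_pos_iff_of_pos_right hρ₀).1 hxy.y_pos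
  have hscale : (x / ρ) ^ ((v.1 : ℝ) - α) * (y / ρ) ^ ((v.2 : ℝ) - β) =
      s * (x ^ ((v.1 : ℝ) - α) * y ^ ((v.2 : ℝ) - β)) := by
    rw [Real.div_rpow hx.le hρ₀.le, Real.div_rpow hy.le hρ₀.le, hs, div_mul_div_comm,
      div_eq_inv_mul]
  calc |(pdx^[α] (pdy^[β] f)) (x, y)|
      ≤ min 1 ((x / ρ) ^ ((v.1 : ℝ) - α) * (y / ρ) ^ ((v.2 : ℝ) - β)) * S := by
        refine hderiv.abs_le_of_inVertexRegion_div hρ₀ hρ hml hδ hxy fun z hz => le_min ?_ ?_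
        · exact hxy.pow_mul_pow_le_one hml hδ z
        · exact hv.pow_mul_pow_le_rpow_sub hmlr hδ hxy
            (right_ne_zero_of_mul (right_ne_zero_of_mul hz))
    _ ≤ (1 + s) * min 1 (x ^ ((v.1 : ℝ) - α) * y ^ ((v.2 : ℝ) - β)) * S := by
        rw [hscale]
        gcongr
        exact min_one_mul_le (by positivity) (by positivity)
    _ = (1 + s) * S * min 1 (x ^ ((v.1 : ℝ) - α) * y ^ ((v.2 : ℝ) - β)) := by ring

lemma HasDoublePowerSeries.exists_forall_abs_iterate_le (h : HasDoublePowerSeries f a R)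
    (hv : IsWeightMinimizer a v ml mr) (hρ₀ : 0 < ρ) (hρ : ρ < R) (hml : 0 ≤ ml)
    (hmlr : (ml : WithTop ℝ) < mr) (hδ : δ ≤ 1) (L : ℕ) :
    ∃ C > 0, ∀ x y, InVertexRegion ml mr δ (x / ρ) (y / ρ) → ∀ α β, α ≤ L → β ≤ L →
      |(pdx^[α] (pdy^[β] f)) (x, y)| ≤
        C * min 1 (x ^ ((v.1 : ℝ) - α) * y ^ ((v.2 : ℝ) - β)) := by
  choose C hC using h.exists_abs_iterate_le hv hρ₀ hρ hml hmlr hδ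
  obtain ⟨M, hM⟩ := ((Finset.Iic L ×ˢ Finset.Iic L).image fun z => C z.1 z.2).exists_le
  refine ⟨max M 1, by positivity, fun x y hxy α β hα hβ => (hC α β x y hxy).trans ?_⟩
  have hx : 0 < x := (div_pos_iff_of_pos_right hρ₀).1 hxy.x_pos
  have hy : 0 < y := (div_pos_iff_of_pos_right hρ₀).1 hxy.y_pos
  have hCM : C α β ≤ M :=
    hM _ (Finset.mem_image.2 ⟨(α, β), Finset.mem_product.2 (by simp [hα, hβ]), rfl⟩)
  gcongr
  exact hCM.trans (le_max_left M 1)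

end Estimates

/-- On the 'good' region associated to a vertex `(p_v, q_v)` of
the Newton polyhedron, the single monomial `c_{p_v,q_v} x^{p_v} y^{q_v}`
dominates `P`.  The adjacent edges have slopes `−1/m_l` and `−1/m_r`, with
`m_r` possibly infinite. -/
theorem vertex_dominance
    (P : ℝ × ℝ → ℝ) (hP : AnalyticAt ℝ P (0, 0))
    (pv qv : ℕ) (hc : taylorCoef P pv qv ≠ 0)
    (ml : ℝ) (mr : WithTop ℝ) (hml : 0 ≤ ml) (hmlr : (ml : WithTop ℝ) < mr)
    (hvertex : ∀ p q : ℕ, (p, q) ≠ (pv, qv) → taylorCoef P p q ≠ 0 →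
      ∀ m : ℝ, ml < m → (m : WithTop ℝ) < mr →
        (pv : ℝ) + m * qv < (p : ℝ) + m * q)
    (N L : ℕ) :
    ∃ cl Cr ε C : ℝ, 0 < cl ∧ 0 < Cr ∧ 0 < ε ∧ 0 < C ∧
      ∀ x y : ℝ, 0 < x → x < ε →
        (mr = ⊤ → 0 < y) →
        (∀ m : ℝ, mr = (m : WithTop ℝ) → Cr * x ^ m < y) →
        (ml = 0 → y < ε) →
        (ml ≠ 0 → y < cl * x ^ ml) →
        |P (x, y) - taylorCoef P pv qv * x ^ pv * y ^ qv| ≤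
          (1 / 2 : ℝ) ^ N * |taylorCoef P pv qv * x ^ pv * y ^ qv| ∧
        (∀ α β : ℕ, α ≤ L → β ≤ L →
          |(pdx^[α] (pdy^[β] P)) (x, y)| ≤
            C * min 1 (x ^ ((pv : ℝ) - α) * y ^ ((qv : ℝ) - β))) := by
  obtain ⟨a, R, h⟩ := exists_hasDoublePowerSeries_of_analyticAt hP
  simp only [h.taylorCoef_eq] at hc hvertex ⊢
  have hv : IsWeightMinimizer a (pv, qv) ml mr := fun z hzv hz m hm hmr => by
    linarith [hvertex z.1 z.2 hzv hz m hm hmr]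
  have hρ₀ : 0 < R / 2 := half_pos h.radius_pos
  have hρ : R / 2 < R := half_lt_self h.radius_pos
  have hη : 0 < (1 / 2 : ℝ) ^ N * |a (pv, qv)| := by positivity
  obtain ⟨δ, hδ₀, hδ₁, hmain⟩ := h.exists_abs_sub_monomial_le hv hρ₀ hρ hml hmlr hη
  obtain ⟨C, hC₀, hC⟩ := h.exists_forall_abs_iterate_le hv hρ₀ hρ hml hmlr hδ₁ L
  obtain ⟨κ, hκ₀, hκ⟩ := exists_scale_inVertexRegion_div ml mr hρ₀
  have hε : 0 < κ * δ := by positivity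
  refine ⟨κ * δ, (κ * δ)⁻¹, κ * δ, C, hε, inv_pos.2 hε, hε, hC₀,
    fun x y hx₀ hx hy_top hy_coe hy_zero hy_ne => ?_⟩
  have hxy := InVertexRegion.of_inv_mul_rpow_lt hε hx₀ hx hy_top hy_coe hy_zero hy_ne
  have hmonomial : 0 < x ^ pv * y ^ qv := mul_pos (pow_pos hx₀ pv) (pow_pos hxy.y_pos qv)
  refine ⟨?_, hC x y (hκ δ x y hxy)⟩
  rw [mul_assoc (a _), abs_mul, abs_of_pos hmonomial, ← mul_assoc (_ ^ N)]
  exact hmain x y (hκ δ x y hxy)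
end
end

section
/- Let P : ℝ² → ℝ be real analytic in a neighborhood of the origin, not identically zero near the origin, with Taylor coefficients c_{p,q} := ∂_x^p ∂_y^q P(0,0)/(p! q!). Let m ∈ ℕ with m ≥ 1, set e := min{ p + m q : (p,q) ∈ ℕ², c_{p,q} ≠ 0 }, and define the polynomial φ(r) := Σ_{(p,q) : c_{p,q} ≠ 0, p + m q = e} c_{p,q} r^q. Let r₀ be a nonzero real root of φ of multiplicity s ≥ 1 (i.e. φ(r₀) = φ'(r₀) = ⋯ = φ^{(s−1)}(r₀) = 0 and φ^{(s)}(r₀) ≠ 0). Define P₁(x,y) := P(x, (r₀ + y) x^m), which is real analytic near the origin, and let c'_{p,q} denote its Taylor coefficients at the origin. Then: (i) c'_{p,q} = 0 whenever p < e; (ii) c'_{e,q} = 0 for all q < s; and (iii) c'_{e,s} ≠ 0. (Equivalently, the leftmost vertex of the Newton polyhedron of P₁ is (e, s).) -/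
open MeasureTheory

noncomputable section

/-- The substitution `P₁(x,y) = P(x, (r₀ + y) x^m)` used in the resolution
algorithm. -/
def substRoot (P : ℝ × ℝ → ℝ) (r₀ : ℝ) (m : ℕ) : ℝ × ℝ → ℝ :=
  fun p => P (p.1, (r₀ + p.2) * p.1 ^ m)

/-!
For each fixed `r`, restrict `P` to the curve `y = r x ^ m`. The `n`-th Taylor coefficient of this
restriction at `x = 0` collects the terms of `P` of weighted degree `p + m q = n`, so it is
`φₙ(r) = ∑_{p + m q = n} c_{p,q} r ^ q`. The line `y = const` in the new coordinates is the curve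
with `r = r₀ + y`; hence, exchanging the order of the partial derivatives,
`c'_{n,q} = φₙ^{(q)}(r₀) / q!` for all `n` and `q`. Minimality of `e` gives `φₙ = 0` for `n < e`,
while `φ_e` is the edge polynomial.

The formula for the restriction is proved by induction on `n`: the chain rule
`d/dx P(x, r x ^ m) = P_x + m r x ^ (m - 1) P_y` matches the Euler identity
`n φₙ = ∑ p c_{p,q} r ^ q + m ∑ q c_{p,q} r ^ q`.
-/

open Topology Filter Finset

section DirectionalDeriv

variable {𝕜 E G : Type*} [NontriviallyNormedField 𝕜] [NormedAddCommGroup E] [NormedSpace 𝕜 E]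
  [NormedAddCommGroup G] [NormedSpace 𝕜 G]

variable (𝕜) in
/-- The operator `D` computes the derivative in direction `v` of every function at every point where
it is analytic. It lets `pdx` and `pdy`, which are defined by one-variable derivatives, be treated
together; nothing is required of `D` at points of non-analyticity. -/
def IsDirectionalDeriv (v : E) (D : (E → G) → E → G) : Prop :=
  ∀ ⦃f : E → G⦄ ⦃z : E⦄, AnalyticAt 𝕜 f z → D f z = fderiv 𝕜 f z v

namespace IsDirectionalDeriv

variable [CompleteSpace G] {v w : E} {D D₁ D₂ : (E → G) → E → G} {f g : E → G} {z : E}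

lemma eventuallyEq (hD : IsDirectionalDeriv 𝕜 v D) (hf : AnalyticAt 𝕜 f z) :
    D f =ᶠ[𝓝 z] fun u => fderiv 𝕜 f u v :=
  hf.eventually_analyticAt.mono fun _ hu => hD hu

lemma analyticAt (hD : IsDirectionalDeriv 𝕜 v D) (hf : AnalyticAt 𝕜 f z) :
    AnalyticAt 𝕜 (D f) z :=
  (((ContinuousLinearMap.apply 𝕜 G v).analyticAt _).comp hf.fderiv).congr
    (hD.eventuallyEq hf).symm

lemma iterate_analyticAt (hD : IsDirectionalDeriv 𝕜 v D) (hf : AnalyticAt 𝕜 f z) (n : ℕ) :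
    AnalyticAt 𝕜 (D^[n] f) z := by
  induction n with
  | zero => exact hf
  | succ n ih =>
    rw [Function.iterate_succ_apply']
    exact hD.analyticAt ih

lemma congr (hD : IsDirectionalDeriv 𝕜 v D) (hf : AnalyticAt 𝕜 f z) (hfg : f =ᶠ[𝓝 z] g) :
    D f =ᶠ[𝓝 z] D g := by
  filter_upwards [hD.eventuallyEq hf, hD.eventuallyEq (hf.congr hfg), hfg.fderiv (𝕜 := 𝕜)]
    with u hfu hgu hderiv
  rw [hfu, hgu, hderiv]

lemma apply_apply (hD₁ : IsDirectionalDeriv 𝕜 v D₁) (hD₂ : IsDirectionalDeriv 𝕜 w D₂)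
    (hf : AnalyticAt 𝕜 f z) : D₁ (D₂ f) z = fderiv 𝕜 (fderiv 𝕜 f) z v w := by
  rw [hD₁ (hD₂.analyticAt hf), (hD₂.eventuallyEq hf).fderiv_eq,
    fderiv_clm_apply hf.fderiv.differentiableAt (differentiableAt_const w)]
  simp

lemma comm (hD₁ : IsDirectionalDeriv 𝕜 v D₁) (hD₂ : IsDirectionalDeriv 𝕜 w D₂)
    (hf : AnalyticAt 𝕜 f z) : D₁ (D₂ f) =ᶠ[𝓝 z] D₂ (D₁ f) := by
  filter_upwards [hf.eventually_analyticAt] with u hu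
  rw [hD₁.apply_apply hD₂ hu, hD₂.apply_apply hD₁ hu]
  exact hu.contDiffAt.isSymmSndFDerivAt_of_omega v w

lemma comm_iterate (hD₁ : IsDirectionalDeriv 𝕜 v D₁) (hD₂ : IsDirectionalDeriv 𝕜 w D₂)
    (hf : AnalyticAt 𝕜 f z) (q : ℕ) : D₁ (D₂^[q] f) =ᶠ[𝓝 z] D₂^[q] (D₁ f) := by
  induction q with
  | zero => rfl
  | succ q ih =>
    simp only [Function.iterate_succ_apply']
    exact (hD₁.comm hD₂ (hD₂.iterate_analyticAt hf q)).trans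
      (hD₂.congr (hD₁.analyticAt (hD₂.iterate_analyticAt hf q)) ih)

lemma iterate_comm_iterate (hD₁ : IsDirectionalDeriv 𝕜 v D₁) (hD₂ : IsDirectionalDeriv 𝕜 w D₂)
    (hf : AnalyticAt 𝕜 f z) (p q : ℕ) : D₁^[p] (D₂^[q] f) =ᶠ[𝓝 z] D₂^[q] (D₁^[p] f) := by
  induction p with
  | zero => rfl
  | succ p ih =>
    simp only [Function.iterate_succ_apply']
    exact (hD₁.congr (hD₁.iterate_analyticAt (hD₂.iterate_analyticAt hf q) p) ih).trans
      (hD₁.comm_iterate hD₂ (hD₁.iterate_analyticAt hf p) q)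

end IsDirectionalDeriv

end DirectionalDeriv

lemma isDirectionalDeriv_pdx : IsDirectionalDeriv ℝ ((1, 0) : ℝ × ℝ) pdx := fun _ z hf =>
  (hf.differentiableAt.hasFDerivAt.comp_hasDerivAt z.1
    ((hasDerivAt_id z.1).prodMk (hasDerivAt_const z.1 z.2))).deriv

lemma isDirectionalDeriv_pdy : IsDirectionalDeriv ℝ ((0, 1) : ℝ × ℝ) pdy := fun _ z hf =>
  (hf.differentiableAt.hasFDerivAt.comp_hasDerivAt z.2
    ((hasDerivAt_const z.2 z.1).prodMk (hasDerivAt_id z.2))).deriv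

lemma pdx_iterate_apply (F : ℝ × ℝ → ℝ) (n : ℕ) (z : ℝ × ℝ) :
    pdx^[n] F z = iteratedDeriv n (fun x => F (x, z.2)) z.1 := by
  induction n generalizing z with
  | zero => simp
  | succ n ih => simp only [Function.iterate_succ_apply', iteratedDeriv_succ, pdx, ih]

lemma pdy_iterate_apply (F : ℝ × ℝ → ℝ) (n : ℕ) (z : ℝ × ℝ) :
    pdy^[n] F z = iteratedDeriv n (fun y => F (z.1, y)) z.2 := by
  induction n generalizing z with
  | zero => simp
  | succ n ih => simp only [Function.iterate_succ_apply', iteratedDeriv_succ, pdy, ih]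

section TaylorCoef

variable {F : ℝ × ℝ → ℝ}

lemma taylorCoef_eq_pdy_iterate_pdx_iterate (hF : AnalyticAt ℝ F (0, 0)) (p q : ℕ) :
    taylorCoef F p q = (pdy^[q] (pdx^[p] F)) (0, 0) / (p.factorial * q.factorial) := by
  rw [taylorCoef, (isDirectionalDeriv_pdx.iterate_comm_iterate isDirectionalDeriv_pdy hF p
    q).eq_of_nhds]

lemma taylorCoef_pdx (hF : AnalyticAt ℝ F (0, 0)) (p q : ℕ) :
    taylorCoef (pdx F) p q = (p + 1) * taylorCoef F (p + 1) q := by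
  rw [taylorCoef_eq_pdy_iterate_pdx_iterate hF,
    taylorCoef_eq_pdy_iterate_pdx_iterate (isDirectionalDeriv_pdx.analyticAt hF),
    Function.iterate_succ_apply, Nat.factorial_succ]
  push_cast
  field_simp

lemma taylorCoef_pdy (F : ℝ × ℝ → ℝ) (p q : ℕ) :
    taylorCoef (pdy F) p q = (q + 1) * taylorCoef F p (q + 1) := by
  rw [taylorCoef, taylorCoef, Function.iterate_succ_apply, Nat.factorial_succ]
  push_cast
  field_simp

end TaylorCoef

section EdgePolynomial

variable {F : ℝ × ℝ → ℝ} {m : ℕ}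

/-- The exponents `(p, q)` of weighted degree `p + m q = n`. The bounds `p, q ≤ n` only serve to
make the set finite by construction; they are automatic for `m ≠ 0`. -/
def weightedAntidiagonal (m n : ℕ) : Finset (ℕ × ℕ) :=
  {pq ∈ range (n + 1) ×ˢ range (n + 1) | pq.1 + m * pq.2 = n}

lemma mem_weightedAntidiagonal (hm : m ≠ 0) {n : ℕ} {pq : ℕ × ℕ} :
    pq ∈ weightedAntidiagonal m n ↔ pq.1 + m * pq.2 = n := by
  have hle : pq.2 ≤ m * pq.2 := Nat.le_mul_of_pos_left _ (Nat.pos_of_ne_zero hm)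
  simp only [weightedAntidiagonal, mem_filter, mem_product, mem_range]
  omega

/-- The polynomial function `φₙ(r) = ∑_{p + m q = n} c_{p,q} r ^ q` attached to the line
`p + m q = n`, for every `n` and not only for the supporting line of the Newton polyhedron. -/
def edgePolynomial (F : ℝ × ℝ → ℝ) (m n : ℕ) (r : ℝ) : ℝ :=
  ∑ pq ∈ weightedAntidiagonal m n, taylorCoef F pq.1 pq.2 * r ^ pq.2

lemma edgePolynomial_eq_sum (hm : m ≠ 0) {n : ℕ} {E : Finset (ℕ × ℕ)}
    (hE : ∀ pq, pq ∈ E ↔ taylorCoef F pq.1 pq.2 ≠ 0 ∧ pq.1 + m * pq.2 = n) :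
    edgePolynomial F m n = fun r => ∑ pq ∈ E, taylorCoef F pq.1 pq.2 * r ^ pq.2 := by
  funext r
  refine (sum_subset (fun pq hpq => ?_) fun pq hpq hpqE => ?_).symm
  · exact (mem_weightedAntidiagonal hm).2 ((hE pq).1 hpq).2
  · have hcoef : taylorCoef F pq.1 pq.2 = 0 := by
      by_contra hne
      exact hpqE ((hE pq).2 ⟨hne, (mem_weightedAntidiagonal hm).1 hpq⟩)
    rw [hcoef, zero_mul]

lemma edgePolynomial_eq_zero {n : ℕ}
    (hF : ∀ p q, p + m * q = n → taylorCoef F p q = 0) : edgePolynomial F m n = 0 := by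
  funext r
  refine sum_eq_zero fun pq hpq => ?_
  rw [hF _ _ (mem_filter.1 hpq).2, zero_mul]

lemma edgePolynomial_zero (F : ℝ × ℝ → ℝ) (m : ℕ) (r : ℝ) :
    edgePolynomial F m 0 r = F (0, 0) := by
  have hlevel : weightedAntidiagonal m 0 = {(0, 0)} := by
    simp [weightedAntidiagonal]
  simp [edgePolynomial, hlevel, taylorCoef]

lemma edgePolynomial_pdx (hm : m ≠ 0) (hF : AnalyticAt ℝ F (0, 0)) (n : ℕ) (r : ℝ) :
    edgePolynomial (pdx F) m n r =
      ∑ pq ∈ weightedAntidiagonal m (n + 1), pq.1 * (taylorCoef F pq.1 pq.2 * r ^ pq.2) := by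
  refine sum_of_injOn (fun pq => (pq.1 + 1, pq.2)) ?_ ?_ ?_ ?_
  · intro a _ b _ hab
    simpa [Prod.ext_iff] using hab
  · intro pq hpq
    simp only [mem_coe, mem_weightedAntidiagonal hm] at hpq ⊢
    omega
  · rintro ⟨_ | p, q⟩ hpq hpq_image
    · simp
    · refine absurd ⟨(p, q), ?_, rfl⟩ hpq_image
      simp only [mem_coe, mem_weightedAntidiagonal hm] at hpq ⊢
      omega
  · intro pq _
    simp only [taylorCoef_pdx hF]
    push_cast
    ring

lemma mul_edgePolynomial_pdy (hm : m ≠ 0) (F : ℝ × ℝ → ℝ) (n : ℕ) (r : ℝ) :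
    r * edgePolynomial (pdy F) m n r =
      ∑ pq ∈ weightedAntidiagonal m (n + m), pq.2 * (taylorCoef F pq.1 pq.2 * r ^ pq.2) := by
  rw [edgePolynomial, mul_sum]
  refine sum_of_injOn (fun pq => (pq.1, pq.2 + 1)) ?_ ?_ ?_ ?_
  · intro a _ b _ hab
    simpa [Prod.ext_iff] using hab
  · intro pq hpq
    simp only [mem_coe, mem_weightedAntidiagonal hm, mul_add] at hpq ⊢
    omega
  · rintro ⟨p, _ | q⟩ hpq hpq_image
    · simp
    · refine absurd ⟨(p, q), ?_, rfl⟩ hpq_image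
      simp only [mem_coe, mem_weightedAntidiagonal hm, mul_add] at hpq ⊢
      omega
  · intro pq _
    simp only [taylorCoef_pdy]
    push_cast
    ring

lemma sum_snd_mul_weightedAntidiagonal_of_lt {n : ℕ} (hn : n < m) (f : ℕ × ℕ → ℝ) :
    ∑ pq ∈ weightedAntidiagonal m n, pq.2 * f pq = 0 := by
  refine sum_eq_zero ?_
  rintro ⟨p, _ | q⟩ hpq
  · simp
  · have hlevel := (mem_filter.1 hpq).2
    simp only [mul_add] at hlevel
    omega

lemma natCast_mul_edgePolynomial (F : ℝ × ℝ → ℝ) (m n : ℕ) (r : ℝ) :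
    n * edgePolynomial F m n r =
      ∑ pq ∈ weightedAntidiagonal m n, pq.1 * (taylorCoef F pq.1 pq.2 * r ^ pq.2) +
      m * ∑ pq ∈ weightedAntidiagonal m n, pq.2 * (taylorCoef F pq.1 pq.2 * r ^ pq.2) := by
  rw [edgePolynomial, mul_sum, mul_sum, ← sum_add_distrib]
  refine sum_congr rfl fun pq hpq => ?_
  rw [← (mem_filter.1 hpq).2]
  push_cast
  ring

lemma factorial_succ_mul_edgePolynomial_succ (hm : m ≠ 0) (hF : AnalyticAt ℝ F (0, 0)) (n : ℕ)
    (r : ℝ) :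
    (n + 1).factorial * edgePolynomial F m (n + 1) r =
      n.factorial * edgePolynomial (pdx F) m n r +
      m * r * (n.descFactorial (m - 1) *
        ((n - (m - 1)).factorial * edgePolynomial (pdy F) m (n - (m - 1)) r)) := by
  have heuler := natCast_mul_edgePolynomial F m (n + 1) r
  rw [← edgePolynomial_pdx hm hF] at heuler
  rw [Nat.factorial_succ, mul_comm (n + 1), Nat.cast_mul, mul_assoc, heuler]
  rcases le_or_gt (m - 1) n with hle | hlt
  · have hdesc : ((n - (m - 1)).factorial : ℝ) * n.descFactorial (m - 1) = n.factorial := by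
      exact_mod_cast Nat.factorial_mul_descFactorial hle
    have hindex : n - (m - 1) + m = n + 1 := by omega
    rw [← hindex, ← mul_edgePolynomial_pdy hm, ← hdesc]
    ring
  · rw [sum_snd_mul_weightedAntidiagonal_of_lt (by omega), Nat.descFactorial_of_lt hlt]
    simp

end EdgePolynomial

lemma iteratedDeriv_pow_mul_zero {𝕜 : Type*} [NontriviallyNormedField 𝕜] {g : 𝕜 → 𝕜} {n : ℕ}
    (hg : ContDiffAt 𝕜 n g 0) (k : ℕ) :
    iteratedDeriv n (fun x => x ^ k * g x) 0 =
      n.descFactorial k * iteratedDeriv (n - k) g 0 := by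
  rw [iteratedDeriv_fun_mul (by fun_prop) hg]
  simp only [iteratedDeriv_fun_pow_zero]
  rw [sum_eq_single k]
  · simp [Nat.descFactorial_eq_factorial_mul_choose, mul_comm]
  · intro i _ hik
    simp [hik]
  · intro hk
    simp [Nat.choose_eq_zero_of_lt (by simpa using hk)]

section MonomialCurve

variable {F : ℝ × ℝ → ℝ} {m : ℕ}

lemma analyticAt_comp_monomialCurve (hm : m ≠ 0) (hF : AnalyticAt ℝ F (0, 0)) (r : ℝ) :
    AnalyticAt ℝ (fun x => F (x, r * x ^ m)) 0 :=
  AnalyticAt.comp₂ (by simpa [hm] using hF) analyticAt_id (by fun_prop)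

lemma analyticAt_substRoot (hm : m ≠ 0) (hF : AnalyticAt ℝ F (0, 0)) (r₀ y : ℝ) :
    AnalyticAt ℝ (substRoot F r₀ m) (0, y) :=
  AnalyticAt.comp₂ (h := F) (by simpa [hm] using hF) analyticAt_fst
    ((analyticAt_const.add analyticAt_snd).mul (analyticAt_fst.pow m))

lemma deriv_comp_monomialCurve (r : ℝ) {x : ℝ} (hF : AnalyticAt ℝ F (x, r * x ^ m)) :
    deriv (fun x => F (x, r * x ^ m)) x =
      pdx F (x, r * x ^ m) + m * r * (x ^ (m - 1) * pdy F (x, r * x ^ m)) := by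
  have hcurve : HasDerivAt (fun x : ℝ => (x, r * x ^ m)) (1, r * (m * x ^ (m - 1))) x :=
    (hasDerivAt_id x).prodMk ((hasDerivAt_pow m x).const_mul r)
  have hvelocity : ((1, r * (m * x ^ (m - 1))) : ℝ × ℝ) =
      (1, 0) + (r * (m * x ^ (m - 1))) • (0, 1) := by simp
  have hchain := (hF.differentiableAt.hasFDerivAt.comp_hasDerivAt x hcurve).deriv
  rw [hvelocity, map_add, map_smul, ← isDirectionalDeriv_pdx hF, ← isDirectionalDeriv_pdy hF,
    smul_eq_mul] at hchain
  exact hchain.trans (by ring)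

lemma iteratedDeriv_succ_comp_monomialCurve (hm : m ≠ 0) (hF : AnalyticAt ℝ F (0, 0)) (r : ℝ)
    (n : ℕ) :
    iteratedDeriv (n + 1) (fun x => F (x, r * x ^ m)) 0 =
      iteratedDeriv n (fun x => pdx F (x, r * x ^ m)) 0 +
      m * r * (n.descFactorial (m - 1) *
        iteratedDeriv (n - (m - 1)) (fun x => pdy F (x, r * x ^ m)) 0) := by
  have hcurve : Tendsto (fun x : ℝ => (x, r * x ^ m)) (𝓝 0) (𝓝 (0, 0)) :=
    Continuous.tendsto' (by fun_prop) _ _ (by simp [hm])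
  have hderiv : deriv (fun x => F (x, r * x ^ m)) =ᶠ[𝓝 0] fun x =>
      pdx F (x, r * x ^ m) + m * r * (x ^ (m - 1) * pdy F (x, r * x ^ m)) :=
    (hcurve.eventually hF.eventually_analyticAt).mono fun _ hx => deriv_comp_monomialCurve r hx
  have hpdx := analyticAt_comp_monomialCurve hm (isDirectionalDeriv_pdx.analyticAt hF) r
  have hpdy := analyticAt_comp_monomialCurve hm (isDirectionalDeriv_pdy.analyticAt hF) r
  rw [iteratedDeriv_succ', hderiv.iteratedDeriv_eq,
    iteratedDeriv_fun_add hpdx.contDiffAt (AnalyticAt.contDiffAt (by fun_prop)),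
    iteratedDeriv_const_mul_field, iteratedDeriv_pow_mul_zero hpdy.contDiffAt]

theorem iteratedDeriv_comp_monomialCurve (hm : m ≠ 0) (hF : AnalyticAt ℝ F (0, 0)) (r : ℝ) (n : ℕ) :
    iteratedDeriv n (fun x => F (x, r * x ^ m)) 0 = n.factorial * edgePolynomial F m n r := by
  induction n using Nat.strong_induction_on generalizing F with
  | _ n ih =>
    rcases n with _ | n
    · simp [edgePolynomial_zero, hm]
    · rw [iteratedDeriv_succ_comp_monomialCurve hm hF,
        ih n (by omega) (isDirectionalDeriv_pdx.analyticAt hF),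
        ih (n - (m - 1)) (by omega) (isDirectionalDeriv_pdy.analyticAt hF),
        factorial_succ_mul_edgePolynomial_succ hm hF]

theorem taylorCoef_substRoot (hm : m ≠ 0) (hF : AnalyticAt ℝ F (0, 0)) (r₀ : ℝ) (n q : ℕ) :
    taylorCoef (substRoot F r₀ m) n q =
      iteratedDeriv q (edgePolynomial F m n) r₀ / q.factorial := by
  have hslice : (fun y => pdx^[n] (substRoot F r₀ m) (0, y)) =
      fun y => n.factorial * edgePolynomial F m n (r₀ + y) := by
    funext y
    rw [pdx_iterate_apply]
    exact iteratedDeriv_comp_monomialCurve hm hF (r₀ + y) n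
  rw [taylorCoef_eq_pdy_iterate_pdx_iterate (analyticAt_substRoot hm hF r₀ 0), pdy_iterate_apply,
    hslice, iteratedDeriv_const_mul_field, iteratedDeriv_comp_const_add,
    mul_div_mul_left _ _ (Nat.cast_ne_zero.2 n.factorial_ne_zero)]
  simp only [add_zero]

end MonomialCurve

/-- Vertex tracking formula: after the change of variables
`(x,y) ↦ (x, (r₀ + y) x^m)` along a root `r₀` of multiplicity `s` of the edge
polynomial of the edge of slope `−1/m`, the leftmost vertex of the Newton
polyhedron of the transformed function is `(e, s)`. -/
theorem vertex_tracking
    (P : ℝ × ℝ → ℝ) (hP : AnalyticAt ℝ P (0, 0))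
    (hPnz : ∀ ε > (0 : ℝ), ∃ p : ℝ × ℝ, ‖p‖ < ε ∧ P p ≠ 0)
    (m : ℕ) (hm : 1 ≤ m) (e : ℕ)
    (he₁ : ∃ p q : ℕ, taylorCoef P p q ≠ 0 ∧ p + m * q = e)
    (he₂ : ∀ p q : ℕ, taylorCoef P p q ≠ 0 → e ≤ p + m * q)
    (E : Finset (ℕ × ℕ))
    (hE : ∀ pq : ℕ × ℕ, pq ∈ E ↔ taylorCoef P pq.1 pq.2 ≠ 0 ∧ pq.1 + m * pq.2 = e)
    (r₀ : ℝ) (hr₀ : r₀ ≠ 0) (s : ℕ) (hs : 1 ≤ s)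
    (hroot : ∀ k : ℕ, k < s →
      iteratedDeriv k (fun r : ℝ => ∑ pq ∈ E, taylorCoef P pq.1 pq.2 * r ^ pq.2) r₀ = 0)
    (hroot' :
      iteratedDeriv s (fun r : ℝ => ∑ pq ∈ E, taylorCoef P pq.1 pq.2 * r ^ pq.2) r₀ ≠ 0) :
    (∀ p q : ℕ, p < e → taylorCoef (substRoot P r₀ m) p q = 0) ∧
    (∀ q : ℕ, q < s → taylorCoef (substRoot P r₀ m) e q = 0) ∧
    taylorCoef (substRoot P r₀ m) e s ≠ 0 := by
  have hm0 : m ≠ 0 := Nat.ne_zero_of_lt hm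
  have hbelow : ∀ p < e, edgePolynomial P m p = 0 := fun p hp =>
    edgePolynomial_eq_zero fun a b hab => by
      by_contra hne
      exact absurd (he₂ a b hne) (by omega)
  rw [← edgePolynomial_eq_sum hm0 hE] at hroot'
  simp only [← edgePolynomial_eq_sum hm0 hE] at hroot
  simp only [taylorCoef_substRoot hm0 hP]
  refine ⟨fun p q hp => ?_, fun q hq => ?_, ?_⟩
  · simp [hbelow p hp]
  · rw [hroot q hq, zero_div]
  · exact div_ne_zero hroot' (Nat.cast_ne_zero.2 s.factorial_ne_zero)
end
end

section
/- Let m ≥ 1 be a real number and 0 < b < B. Then there exists K ∈ ℕ, depending only on m, b, B, such that for every σ ∈ (0, 1/2] and every closed interval I ⊆ [σ/2, 2σ] of length at most (3σ/2)/K, the convex hull of the set T_I := {(x,y) ∈ ℝ² : x ∈ I, b x^m ≤ y ≤ B x^m} is contained in the set {(x,y) ∈ ℝ² : x ∈ I, (b/2) x^m ≤ y ≤ 2B x^m}. -/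
open MeasureTheory

noncomputable section

/-! The powers `x ^ m` on a short interval `[s, t]` at distance at least `σ / 2` from the origin
agree up to a factor `(t / s) ^ |m|`, which is close to `1` when `t - s` is a small multiple
of `σ`. Hence, once a point `x` of the interval is fixed, the whole slice lies in the horizontal
strip between the heights `(b / C) * x ^ m` and `C * B * x ^ m`. The strip is convex, so it contains
the hull of the slice, in particular every point of the hull lying above `x`. -/

section Hull

variable {𝕜 E β : Type*} [Semiring 𝕜] [PartialOrder 𝕜]
  [AddCommMonoid E] [Module 𝕜 E]
  [AddCommMonoid β] [PartialOrder β] [IsOrderedAddMonoid β] [Module 𝕜 β] [PosSMulMono 𝕜 β]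

theorem convexHull_setOf_between_subset {S : Set E} (hS : Convex 𝕜 S) {f g f' g' : E → β}
    (hf : ∀ x ∈ S, ∀ y ∈ S, f' x ≤ f y) (hg : ∀ x ∈ S, ∀ y ∈ S, g y ≤ g' x) :
    convexHull 𝕜 {p : E × β | p.1 ∈ S ∧ f p.1 ≤ p.2 ∧ p.2 ≤ g p.1} ⊆
      {p : E × β | p.1 ∈ S ∧ f' p.1 ≤ p.2 ∧ p.2 ≤ g' p.1} := by
  intro p hp
  have hpS : p.1 ∈ S := by
    have hp_prod : p ∈ S ×ˢ (Set.univ : Set β) := by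
      refine convexHull_min ?_ (hS.prod convex_univ) hp
      exact fun q hq ↦ ⟨hq.1, Set.mem_univ q.2⟩
    exact hp_prod.1
  have hp_strip : p ∈ S ×ˢ Set.Icc (f' p.1) (g' p.1) := by
    refine convexHull_min ?_ (hS.prod (convex_Icc _ _)) hp
    rintro q ⟨hqS, hfq, hqg⟩
    exact ⟨hqS, (hf p.1 hpS q.1 hqS).trans hfq, hqg.trans (hg p.1 hpS q.1 hqS)⟩
  exact ⟨hpS, hp_strip.2⟩

end Hull

theorem rpow_le_rpow_abs_mul_rpow {x y r : ℝ} (hx : 0 < x) (hy : 0 < y) (hxy : x ≤ r * y)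
    (hyx : y ≤ r * x) (m : ℝ) : x ^ m ≤ r ^ |m| * y ^ m := by
  have hr : 0 < r := pos_of_mul_pos_left (hx.trans_le hxy) hy.le
  rcases le_total 0 m with hm | hm
  · rw [abs_of_nonneg hm, ← Real.mul_rpow hr.le hy.le]
    exact Real.rpow_le_rpow hx.le hxy hm
  · have hyrx : y / r ≤ x := (div_le_iff₀' hr).2 hyx
    calc x ^ m ≤ (y / r) ^ m := Real.rpow_le_rpow_of_nonpos (by positivity) hyrx hm
      _ = r ^ |m| * y ^ m := by
        rw [abs_of_nonpos hm, Real.div_rpow hy.le hr.le, Real.rpow_neg hr.le, div_eq_inv_mul]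

theorem rpow_le_rpow_abs_mul_rpow_of_mem_Icc {s t r x y : ℝ} (hs : 0 < s) (hts : t ≤ r * s)
    (hx : x ∈ Set.Icc s t) (hy : y ∈ Set.Icc s t) (m : ℝ) : x ^ m ≤ r ^ |m| * y ^ m := by
  have hr : 0 ≤ r :=
    (pos_of_mul_pos_left (hs.trans_le (hx.1.trans (hx.2.trans hts))) hs.le).le
  exact rpow_le_rpow_abs_mul_rpow (hs.trans_le hx.1) (hs.trans_le hy.1)
    (hx.2.trans (hts.trans (mul_le_mul_of_nonneg_left hy.1 hr)))
    (hy.2.trans (hts.trans (mul_le_mul_of_nonneg_left hx.1 hr))) m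

theorem exists_nat_one_add_div_rpow_lt (a p : ℝ) {C : ℝ} (hC : 1 < C) :
    ∃ K : ℕ, 0 < K ∧ (1 + a / K) ^ p < C := by
  have hlim : Filter.Tendsto (fun n : ℕ ↦ (1 + a / n) ^ p) Filter.atTop (nhds 1) := by
    simpa using ((tendsto_const_div_atTop_nhds_zero_nat a).const_add 1).rpow_const
      (p := p) (Or.inl (by simp))
  exact ((Filter.eventually_gt_atTop 0).and (hlim.eventually_lt_const hC)).exists

theorem convexHull_of_slice_subset_general (m : ℝ) {C : ℝ} (hC : 1 < C) :
    ∃ K : ℕ, 0 < K ∧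
      ∀ b B : ℝ, 0 ≤ b → 0 ≤ B →
        ∀ σ s t : ℝ, 0 < σ → σ / 2 ≤ s → t - s ≤ (3 * σ / 2) / K →
          convexHull ℝ
              {p : ℝ × ℝ | p.1 ∈ Set.Icc s t ∧
                b * p.1 ^ m ≤ p.2 ∧ p.2 ≤ B * p.1 ^ m} ⊆
            {p : ℝ × ℝ | p.1 ∈ Set.Icc s t ∧
              (b / C) * p.1 ^ m ≤ p.2 ∧ p.2 ≤ C * B * p.1 ^ m} := by
  obtain ⟨K, hK, hKC⟩ := exists_nat_one_add_div_rpow_lt 3 |m| hC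
  refine ⟨K, hK, fun b B hb hB σ s t hσ hs hst ↦ ?_⟩
  have hs_pos : 0 < s := by linarith
  have hts : t ≤ (1 + 3 / K) * s := by
    have hlen : (3 * σ / 2) / K ≤ (3 * s) / K := by gcongr; linarith
    linarith [div_mul_eq_mul_div 3 (K : ℝ) s]
  have hcomp : ∀ x ∈ Set.Icc s t, ∀ y ∈ Set.Icc s t, x ^ m ≤ C * y ^ m := fun x hx y hy ↦
    (rpow_le_rpow_abs_mul_rpow_of_mem_Icc hs_pos hts hx hy m).trans <|
      mul_le_mul_of_nonneg_right hKC.le (Real.rpow_nonneg (hs_pos.le.trans hy.1) m)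
  refine convexHull_setOf_between_subset (convex_Icc s t)
    (f := fun x ↦ b * x ^ m) (g := fun x ↦ B * x ^ m)
    (f' := fun x ↦ b / C * x ^ m) (g' := fun x ↦ C * B * x ^ m)
    (fun x hx y hy ↦ ?_) (fun x hx y hy ↦ ?_)
  · calc b / C * x ^ m ≤ b / C * (C * y ^ m) := by gcongr; exact hcomp x hx y hy
      _ = b * y ^ m := by field_simp
  · calc B * y ^ m ≤ B * (C * x ^ m) := by gcongr; exact hcomp y hy x hx
      _ = C * B * x ^ m := by ring

/-- Slicing a curved triangular region `b x^m ≤ y ≤ B x^m` over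
a dyadic interval into `K` equal pieces makes the convex hull of each slice
stay inside the enlarged curved region `(b/2) x^m ≤ y ≤ 2B x^m`. -/
theorem convexHull_of_slice_subset
    (m : ℝ) (hm : 1 ≤ m) (b B : ℝ) (hb : 0 < b) (hbB : b < B) :
    ∃ K : ℕ, 0 < K ∧
      ∀ σ : ℝ, 0 < σ → σ ≤ 1 / 2 →
        ∀ s t : ℝ, σ / 2 ≤ s → t ≤ 2 * σ → t - s ≤ (3 * σ / 2) / K →
          convexHull ℝ
              {p : ℝ × ℝ | p.1 ∈ Set.Icc s t ∧
                b * p.1 ^ m ≤ p.2 ∧ p.2 ≤ B * p.1 ^ m} ⊆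
            {p : ℝ × ℝ | p.1 ∈ Set.Icc s t ∧
              (b / 2) * p.1 ^ m ≤ p.2 ∧ p.2 ≤ 2 * B * p.1 ^ m} := by
  obtain ⟨K, hK, hull_subset⟩ := convexHull_of_slice_subset_general m one_lt_two
  exact ⟨K, hK, fun σ hσ _ s t hs _ hst ↦
    hull_subset b B hb.le (hb.trans hbB).le σ s t hσ hs hst⟩
end
end
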